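/- arXiv:1605.00818 — 3 statements merged into one kernel-verified Lean document; each statement's English description precedes it below -/
import Mathlib

section
/- For every odd integer k ≥ 11 and every integer t ≥ 1 with t ≠ 2, there exists a k-ARCS(2kt+1), i.e. an almost resolvable k-cycle system of order 2kt+1. -/
open SimpleGraph

/-- `F` is a `C_k`-factor of `H`: a spanning subgraph of `H` that is 2-regular
and each of whose connected components has exactly `k` vertices. -/
def IsCycleFactor {V : Type*} (H F : SimpleGraph V) (k : ℕ) : Prop :=
  F ≤ H ∧ (∀ v, (F.neighborSet v).ncard = 2) ∧
    ∀ v : V, {w | F.Reachable v w}.ncard = k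

/-- The family of graphs `F` partitions the edge set of `H`. -/
def IsDecomp {V ι : Type*} (H : SimpleGraph V) (F : ι → SimpleGraph V) : Prop :=
  (Pairwise fun i j => Disjoint (F i).edgeSet (F j).edgeSet) ∧
  ∀ e, e ∈ H.edgeSet ↔ ∃ i, e ∈ (F i).edgeSet

/-- `HW H m n α β`: the edge set of `H` can be partitioned into
`α` `C_m`-factors and `β` `C_n`-factors. -/
def HW {V : Type*} (H : SimpleGraph V) (m n α β : ℕ) : Prop :=
  ∃ F : Fin α ⊕ Fin β → SimpleGraph V,
    (∀ i, IsCycleFactor H (F (Sum.inl i)) m) ∧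
    (∀ j, IsCycleFactor H (F (Sum.inr j)) n) ∧
    IsDecomp H F

/-- `(α, β) ∈ HWP(v; m, n)` for odd `v`: `K_v` has a 2-factorization into
`α` `C_m`-factors and `β` `C_n`-factors. -/
def HWPodd (v m n α β : ℕ) : Prop := HW (⊤ : SimpleGraph (Fin v)) m n α β

/-- `F ≤ H` is a vertex-disjoint union of `c` cycles of length `k`:
2-regular on its support, every component has `k` vertices, and the support
has `k * c` vertices. -/
def IsCycleClass {V : Type*} (H F : SimpleGraph V) (k c : ℕ) : Prop :=
  F ≤ H ∧ (∀ v ∈ F.support, (F.neighborSet v).ncard = 2) ∧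
  (∀ v ∈ F.support, {w | F.Reachable v w}.ncard = k) ∧
  F.support.ncard = k * c

/-- An almost resolvable `k`-cycle system of order `v`: a partition of the
edges of `K_v` into `(v-1)/2` almost parallel classes (each a vertex-disjoint
union of `(v-1)/k` `k`-cycles) together with one half-parallel class
(a vertex-disjoint union of `(v-1)/(2k)` `k`-cycles). -/
def IsARCS (k v : ℕ) : Prop :=
  ∃ F : Fin ((v - 1) / 2) ⊕ Unit → SimpleGraph (Fin v),
    (∀ i, IsCycleClass ⊤ (F (Sum.inl i)) k ((v - 1) / k)) ∧
    (∀ j, IsCycleClass ⊤ (F (Sum.inr j)) k ((v - 1) / (2 * k))) ∧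
    IsDecomp (⊤ : SimpleGraph (Fin v)) F

/-- The lexicographic product `C_m[n]` of the cycle `C_m` with the empty graph
on `n` vertices, on vertex set `ZMod m × ZMod n`. -/
def lexCycle (m n : ℕ) : SimpleGraph (ZMod m × ZMod n) :=
  SimpleGraph.fromRel (fun a b => a.1 - b.1 = 1)

/-- The Cayley graph of an additive group with connection set `S`. -/
def cayley {Γ : Type*} [AddGroup Γ] (S : Set Γ) : SimpleGraph Γ :=
  SimpleGraph.fromRel (fun a b => a - b ∈ S)

open Function

/-!
A set of disjoint `k`-cycles is encoded as a self-map all of whose orbits on its support have length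
`k`. Such classes only have to be shown to cover every pair of points: comparing the number of edges
with the number of pairs then forces them to be edge-disjoint.

For `t = 1, 3` and for the frame with five groups, `k = 4q + 1` or `k = 4q + 3` and the base cycles
are concatenations of zigzags whose end points are linear in `q`. The intervals of vertices and of
differences they cover are also linear in `q`, so one symbolic verification serves every `q ≥ 2`.

For `t ≥ 4` it suffices to construct a `k`-cycle frame with `t` groups of size `2k`, since every
group together with one common point `∞` can be filled with a system of order `2k + 1`. Small frames
arise from frames with groups of size two and cycles of lengths 3 and 5 on replacing every point by
`ZMod k`; the others come from truncated transversal designs with blocks of at least four points.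
-/

section CyclicOn

variable {V W ι : Type*} {k : ℕ} {S : Set V} {f : V → V} {x y : V}

/-- `f` permutes `S` in cycles of length `k` and fixes every other point. A set of vertex-disjoint
`k`-cycles with union `S` is encoded by such a map, sending each vertex to the next one. -/
def IsCyclicOn (k : ℕ) (S : Set V) (f : V → V) : Prop :=
  (∀ x ∈ S, minimalPeriod f x = k) ∧ ∀ x ∉ S, f x = x

/-- The graph whose edges join each non-fixed point `x` of `f` to `f x`. -/
def stepGraph (f : V → V) : SimpleGraph V :=
  SimpleGraph.fromRel fun x y => f x = y

theorem stepGraph_adj : (stepGraph f).Adj x y ↔ x ≠ y ∧ (f x = y ∨ f y = x) :=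
  SimpleGraph.fromRel_adj _ _ _

theorem stepGraph_mono_of_forall_ne {g : V → V} (h : ∀ x, f x ≠ x → g x = f x) :
    stepGraph f ≤ stepGraph g := by
  intro x y hxy
  obtain ⟨hne, hf | hf⟩ := stepGraph_adj.1 hxy
  · exact stepGraph_adj.2 ⟨hne, .inl ((h x (hf.trans_ne hne.symm)).trans hf)⟩
  · exact stepGraph_adj.2 ⟨hne, .inr ((h y (hf.trans_ne hne)).trans hf)⟩

namespace IsCyclicOn

theorem iterate_apply (h : IsCyclicOn k S f) (hx : x ∈ S) : f^[k] x = x :=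
  h.1 x hx ▸ iterate_minimalPeriod

theorem injOn_iterate (h : IsCyclicOn k S f) (hx : x ∈ S) :
    Set.InjOn (fun n => f^[n] x) (Set.Iio k) :=
  h.1 x hx ▸ iterate_injOn_Iio_minimalPeriod

theorem apply_ne (h : IsCyclicOn k S f) (hk : 3 ≤ k) (hx : x ∈ S) : f x ≠ x := fun hfix =>
  absurd (h.injOn_iterate hx (show 1 < k by omega) (show 0 < k by omega) hfix) one_ne_zero

-- A point leaving `S` would be fixed from then on, yet it has to return after `k` steps.
theorem mapsTo (h : IsCyclicOn k S f) (hk : 0 < k) : Set.MapsTo f S S := by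
  intro x hx
  by_contra hfx
  have hret : f^[k] x = f x := by
    obtain ⟨n, rfl⟩ := Nat.exists_eq_succ_of_ne_zero hk.ne'
    rw [iterate_succ_apply]
    exact iterate_fixed (h.2 _ hfx) n
  exact hfx ((hret.symm.trans (h.iterate_apply hx)).symm ▸ hx)

theorem apply_iterate_pred (h : IsCyclicOn k S f) (hk : 0 < k) (hx : x ∈ S) :
    f (f^[k - 1] x) = x := by
  rw [← iterate_succ_apply' f, Nat.succ_eq_add_one, Nat.sub_add_cancel hk, h.iterate_apply hx]

theorem iterate_pred_apply (h : IsCyclicOn k S f) (hk : 0 < k) (hx : x ∈ S) :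
    f^[k - 1] (f x) = x := by
  rw [← iterate_succ_apply, Nat.succ_eq_add_one, Nat.sub_add_cancel hk, h.iterate_apply hx]

theorem adj_iff (h : IsCyclicOn k S f) (hk : 3 ≤ k) :
    (stepGraph f).Adj x y ↔ x ∈ S ∧ (y = f x ∨ y = f^[k - 1] x) := by
  have hk0 : 0 < k := by omega
  rw [stepGraph_adj]
  constructor
  · rintro ⟨hne, rfl | rfl⟩
    · exact ⟨by_contra fun hx => hne (h.2 _ hx).symm, .inl rfl⟩
    · have hy : y ∈ S := by_contra fun hy => hne (h.2 _ hy)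
      exact ⟨h.mapsTo hk0 hy, .inr (h.iterate_pred_apply hk0 hy).symm⟩
  · rintro ⟨hx, rfl | rfl⟩
    · exact ⟨(h.apply_ne hk hx).symm, .inl rfl⟩
    · have hpred := h.apply_iterate_pred hk0 hx
      exact ⟨fun he => h.apply_ne hk hx ((congrArg f he).trans hpred), .inr hpred⟩

theorem ncard_neighborSet (h : IsCyclicOn k S f) (hk : 3 ≤ k) (hx : x ∈ S) :
    ((stepGraph f).neighborSet x).ncard = 2 := by
  have hpair : (stepGraph f).neighborSet x = {f x, f^[k - 1] x} := by
    ext y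
    simp [h.adj_iff hk, hx]
  rw [hpair, Set.ncard_pair]
  intro he
  have := h.injOn_iterate hx (show 1 < k by omega) (show k - 1 < k by omega) he
  omega

theorem support_stepGraph (h : IsCyclicOn k S f) (hk : 3 ≤ k) : (stepGraph f).support = S :=
  Set.ext fun _ => ⟨fun ⟨_, hadj⟩ => ((h.adj_iff hk).1 hadj).1,
    fun hx => ⟨_, (h.adj_iff hk).2 ⟨hx, .inl rfl⟩⟩⟩

theorem setOf_reachable (h : IsCyclicOn k S f) (hk : 3 ≤ k) (hx : x ∈ S) :
    {y | (stepGraph f).Reachable x y} = (fun n => f^[n] x) '' Set.Iio k := by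
  ext y
  simp only [Set.mem_ofPred_eq, Set.mem_image, Set.mem_Iio]
  constructor
  · intro hreach
    obtain ⟨n, rfl⟩ : ∃ n, f^[n] x = y := by
      rw [reachable_iff_reflTransGen] at hreach
      induction hreach with
      | refl => exact ⟨0, rfl⟩
      | tail _ hadj ih =>
        obtain ⟨n, rfl⟩ := ih
        obtain ⟨-, rfl | rfl⟩ := (h.adj_iff hk).1 hadj
        · exact ⟨n + 1, iterate_succ_apply' ..⟩
        · exact ⟨k - 1 + n, iterate_add_apply ..⟩
    exact ⟨n % k, Nat.mod_lt _ (by omega), h.1 x hx ▸ iterate_mod_minimalPeriod_eq⟩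
  · rintro ⟨n, -, rfl⟩
    induction n with
    | zero => exact Reachable.refl _
    | succ n ih =>
      rw [iterate_succ_apply']
      have hmem : f^[n] x ∈ S := (h.mapsTo (by omega)).iterate n hx
      exact ih.trans ((h.adj_iff hk).2 ⟨hmem, .inl rfl⟩).reachable

theorem isCycleClass (h : IsCyclicOn k S f) (hk : 3 ≤ k) {c : ℕ} (hc : S.ncard = k * c) :
    IsCycleClass ⊤ (stepGraph f) k c := by
  rw [IsCycleClass, h.support_stepGraph hk]
  refine ⟨le_top, fun x hx => h.ncard_neighborSet hk hx, fun x hx => ?_, hc⟩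
  rw [h.setOf_reachable hk hx, (h.injOn_iterate hx).ncard_image, ← Finset.coe_Iio,
    Set.ncard_coe_finset, Nat.card_Iio]

theorem ncard_edgeSet [Finite V] (h : IsCyclicOn k S f) (hk : 3 ≤ k) :
    (stepGraph f).edgeSet.ncard = S.ncard := by
  classical
  have := Fintype.ofFinite V
  have hdeg : ∀ x, (stepGraph f).degree x = if x ∈ S then 2 else 0 := by
    intro x
    split_ifs with hx
    · rw [← card_neighborSet_eq_degree, ← Nat.card_eq_fintype_card, Nat.card_coe_set_eq,
        h.ncard_neighborSet hk hx]
    · rwa [degree_eq_zero, ← notMem_support_iff_isIsolated, h.support_stepGraph hk]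
  have hsum := sum_degrees_eq_twice_card_edges (stepGraph f)
  have hcard : ∑ x, (if x ∈ S then 2 else 0) = 2 * S.ncard := by
    rw [← Finset.sum_filter, Finset.sum_const, smul_eq_mul, mul_comm, Set.ncard_eq_toFinset_card',
      Set.filter_mem_univ_eq_toFinset]
  rw [← coe_edgeFinset, Set.ncard_coe_finset]
  simp only [hdeg] at hsum
  omega

end IsCyclicOn

/-- The map on `W` conjugate to `f` along the injection `e`, fixing everything off `range e`. -/
noncomputable def pushforward (e : V → W) (f : V → V) : W → W :=
  extend e (e ∘ f) id

section Pushforward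

variable {e : V → W}

theorem pushforward_apply (he : Injective e) (x : V) : pushforward e f (e x) = e (f x) :=
  he.extend_apply _ _ x

theorem IsCyclicOn.pushforward (he : Injective e) (h : IsCyclicOn k S f) :
    IsCyclicOn k (e '' S) (pushforward e f) := by
  constructor
  · rintro _ ⟨x, hx, rfl⟩
    rw [← h.1 x hx, minimalPeriod_eq_minimalPeriod_iff]
    intro n
    have hsemi : Semiconj e f (_root_.pushforward e f) := fun x => (pushforward_apply he x).symm
    rw [IsPeriodicPt, IsFixedPt, ← (hsemi.iterate_right n).eq, he.eq_iff]
    rfl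
  · intro w hw
    by_cases hrange : ∃ x, e x = w
    · obtain ⟨x, rfl⟩ := hrange
      rw [pushforward_apply he, h.2 x fun hx => hw ⟨x, hx, rfl⟩]
    · exact extend_apply' _ _ _ hrange

theorem adj_pushforward (he : Injective e) (h : (stepGraph f).Adj x y) :
    (stepGraph (pushforward e f)).Adj (e x) (e y) := by
  rw [stepGraph_adj] at h ⊢
  simpa only [pushforward_apply he, he.ne_iff, he.eq_iff] using h

end Pushforward

theorem IsCyclicOn.exists_iUnion {S : ι → Set V} {F : ι → V → V} (hk : 0 < k)
    (hdisj : Pairwise (Disjoint on S)) (h : ∀ i, IsCyclicOn k (S i) (F i)) :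
    ∃ f, IsCyclicOn k (⋃ i, S i) f ∧ ∀ i, stepGraph (F i) ≤ stepGraph f := by
  classical
  let f : V → V := fun x => if hx : ∃ i, x ∈ S i then F hx.choose x else x
  have hf : ∀ i, ∀ x ∈ S i, f x = F i x := by
    intro i x hx
    have hex : ∃ i, x ∈ S i := ⟨i, hx⟩
    have hi : hex.choose = i :=
      by_contra fun hne => Set.disjoint_left.1 (hdisj hne) hex.choose_spec hx
    rw [← hi]
    exact dif_pos hex
  have hiter : ∀ i, ∀ x ∈ S i, ∀ n, f^[n] x = (F i)^[n] x := by
    intro i x hx n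
    induction n with
    | zero => rfl
    | succ n ih =>
      rw [iterate_succ_apply', iterate_succ_apply', ih, hf i]
      exact ((h i).mapsTo hk).iterate n hx
  refine ⟨f, ⟨fun x hx => ?_, fun x hx => dif_neg (mt Set.mem_iUnion.2 hx)⟩, fun i => ?_⟩
  · obtain ⟨i, hi⟩ := Set.mem_iUnion.1 hx
    rw [← (h i).1 x hi, minimalPeriod_eq_minimalPeriod_iff]
    intro n
    rw [IsPeriodicPt, IsFixedPt, hiter i x hi]
    rfl
  · exact stepGraph_mono_of_forall_ne fun x hx => hf i x (by_contra fun hS => hx ((h i).2 x hS))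

end CyclicOn

section ARCS

theorem isDecomp_of_sum_ncard_le {V ι : Type*} [Finite V] [Fintype ι] {H : SimpleGraph V}
    {F : ι → SimpleGraph V} (hle : ∀ i, F i ≤ H) (hcov : ∀ e ∈ H.edgeSet, ∃ i, e ∈ (F i).edgeSet)
    (hcard : ∑ i, (F i).edgeSet.ncard ≤ H.edgeSet.ncard) : IsDecomp H F := by
  have hmem : ∀ i, (F i).edgeSet ⊆ H.edgeSet := fun i => edgeSet_mono (hle i)
  let toEdge : (Σ i, (F i).edgeSet) → H.edgeSet := fun e => ⟨e.2, hmem e.1 e.2.2⟩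
  have hsurj : Surjective toEdge := fun ⟨e, he⟩ =>
    let ⟨i, hi⟩ := hcov e he
    ⟨⟨i, e, hi⟩, rfl⟩
  have hinj : Injective toEdge :=
    (hsurj.bijective_of_nat_card_le (by rwa [Nat.card_sigma])).injective
  refine ⟨fun i j hij => Set.disjoint_left.2 fun e hi hj => hij ?_,
    fun e => ⟨hcov e, fun ⟨i, hi⟩ => hmem i hi⟩⟩
  exact congrArg Sigma.fst (@hinj ⟨i, e, hi⟩ ⟨j, e, hj⟩ rfl)

/-- An almost resolvable `k`-cycle system on two copies of `X` and a point at infinity `none`, with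
one almost parallel class for each `i : X`, missing the point `p i`, and the half-parallel class on
the copy `false`. The classes are only required to cover all pairs: counting makes them
edge-disjoint. -/
def HasARCS (k : ℕ) (X : Type) : Prop :=
  ∃ (p : X → Option (Bool × X)) (F : X → Option (Bool × X) → Option (Bool × X))
    (H : Option (Bool × X) → Option (Bool × X)),
    (∀ i, IsCyclicOn k {p i}ᶜ (F i)) ∧
    IsCyclicOn k (Set.range fun x => some (false, x)) H ∧
    ∀ a b, a ≠ b → (∃ i, (stepGraph (F i)).Adj a b) ∨ (stepGraph H).Adj a b

theorem ncard_edgeSet_top_fin (n : ℕ) :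
    (⊤ : SimpleGraph (Fin n)).edgeSet.ncard = n.choose 2 := by
  rw [← coe_edgeFinset, Set.ncard_coe_finset, card_edgeFinset_top_eq_card_choose_two,
    Fintype.card_fin]

theorem isARCS_of_cover {k t : ℕ} (hk : 3 ≤ k) {S : Fin (k * t) → Set (Fin (2 * k * t + 1))}
    {F : Fin (k * t) → Fin (2 * k * t + 1) → Fin (2 * k * t + 1)}
    {T : Set (Fin (2 * k * t + 1))} {H : Fin (2 * k * t + 1) → Fin (2 * k * t + 1)}
    (hF : ∀ i, IsCyclicOn k (S i) (F i)) (hS : ∀ i, (S i).ncard = k * (2 * t))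
    (hH : IsCyclicOn k T H) (hT : T.ncard = k * t)
    (hcov : ∀ a b, a ≠ b → (∃ i, (stepGraph (F i)).Adj a b) ∨ (stepGraph H).Adj a b) :
    IsARCS k (2 * k * t + 1) := by
  have hindex : (2 * k * t + 1 - 1) / 2 = k * t := by
    rw [Nat.add_sub_cancel, mul_assoc, Nat.mul_div_cancel_left _ two_pos]
  have hfull : (2 * k * t + 1 - 1) / k = 2 * t := by
    rw [Nat.add_sub_cancel, mul_right_comm, Nat.mul_div_cancel _ (by omega)]
  have hhalf : (2 * k * t + 1 - 1) / (2 * k) = t := by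
    rw [Nat.add_sub_cancel, Nat.mul_div_cancel_left _ (by omega)]
  rw [IsARCS, hindex, hfull, hhalf]
  refine ⟨Sum.elim (fun i => stepGraph (F i)) (fun _ => stepGraph H),
    fun i => (hF i).isCycleClass hk (hS i), fun _ => hH.isCycleClass hk hT,
    isDecomp_of_sum_ncard_le (fun _ => le_top) ?_ ?_⟩
  · exact Sym2.ind fun a b hab => Sum.exists.2 ((hcov a b hab).imp id fun h => ⟨(), h⟩)
  · rw [Fintype.sum_sum_type, ncard_edgeSet_top_fin, Nat.choose_two_right]
    simp only [Sum.elim_inl, Sum.elim_inr, (hF _).ncard_edgeSet hk, hS, hH.ncard_edgeSet hk, hT,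
      Finset.sum_const, Finset.card_univ, Fintype.card_fin, Fintype.card_unit, smul_eq_mul,
      Nat.add_sub_cancel]
    rw [Nat.le_div_iff_mul_le two_pos]
    exact le_of_eq (by ring)

theorem HasARCS.isARCS {k t : ℕ} {X : Type} [Finite X] (h : HasARCS k X) (hk : 3 ≤ k)
    (hX : Nat.card X = k * t) : IsARCS k (2 * k * t + 1) := by
  obtain ⟨p, F, H, hF, hH, hcov⟩ := h
  have hV : Nat.card (Option (Bool × X)) = 2 * k * t + 1 := by
    rw [Finite.card_option, Nat.card_prod, hX, Nat.card_eq_fintype_card, Fintype.card_bool,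
      mul_assoc]
  let e : Option (Bool × X) ≃ Fin (2 * k * t + 1) := Finite.equivFinOfCardEq hV
  let idx : X ≃ Fin (k * t) := Finite.equivFinOfCardEq hX
  refine isARCS_of_cover hk (fun i => (hF (idx.symm i)).pushforward e.injective) (fun i => ?_)
    (hH.pushforward e.injective) ?_ fun a b hab => ?_
  · rw [Set.ncard_image_of_injective _ e.injective, Set.ncard_compl, Set.ncard_singleton, hV,
      Nat.add_sub_cancel, mul_left_comm, mul_assoc]
  · have hinj : Injective fun x : X => some (false, x) := fun x y hxy => by simpa using hxy
    rw [Set.ncard_image_of_injective _ e.injective, ← Set.image_univ,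
      Set.ncard_image_of_injective _ hinj, Set.ncard_univ, hX]
  · rcases hcov _ _ (e.symm.injective.ne hab) with ⟨i, hi⟩ | hadj
    · exact .inl ⟨idx i, by simpa using adj_pushforward e.injective hi⟩
    · exact .inr (by simpa using adj_pushforward e.injective hadj)

end ARCS

section CyclicPairs

variable {α β : Type*} {l l' : List α} {u v : α}

/-- The pairs of cyclically consecutive entries of `l`. -/
def cyclicPairs (l : List α) : List (α × α) :=
  l.zip (l.rotate 1)

theorem cyclicPairs_map (g : α → β) (l : List α) :
    cyclicPairs (l.map g) = (cyclicPairs l).map (Prod.map g g) := by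
  rw [cyclicPairs, ← List.map_rotate, List.zip_map, cyclicPairs]

theorem cyclicPairs_rotate (l : List α) (n : ℕ) :
    cyclicPairs (l.rotate n) = (cyclicPairs l).rotate n := by
  rw [cyclicPairs, List.rotate_rotate, add_comm, ← List.rotate_rotate]
  exact (List.zipWith_rotate_distrib Prod.mk l (l.rotate 1) n (List.length_rotate l 1).symm).symm

theorem mem_cyclicPairs_of_isRotated {p : α × α} (h : l ~r l') (hp : p ∈ cyclicPairs l') :
    p ∈ cyclicPairs l := by
  obtain ⟨n, rfl⟩ := h
  rwa [cyclicPairs_rotate, List.mem_rotate] at hp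

theorem mem_cyclicPairs_iff :
    (u, v) ∈ cyclicPairs l ↔ ∃ m n, l ~r u :: m ∧ m ++ [u] = v :: n := by
  constructor
  · intro h
    obtain ⟨i, hi, huv⟩ := List.getElem_of_mem h
    have hil : i < l.length := by simpa [cyclicPairs] using hi
    have hrot : l.rotate i = l[i] :: (l.drop (i + 1) ++ l.take i) := by
      rw [List.rotate_eq_drop_append_take hil.le, List.drop_eq_getElem_cons hil, List.cons_append]
    have hrot_succ : l.rotate (i + 1) = l.drop (i + 1) ++ l.take i ++ [l[i]] := by
      rw [← List.rotate_rotate, hrot, List.rotate_cons_succ, List.rotate_zero]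
    obtain ⟨rfl, hv⟩ : l[i] = u ∧ (l.rotate 1)[i]'(by simpa) = v := by
      simpa [cyclicPairs] using huv
    have hhead : (l.rotate (i + 1)).head? = some v := by
      rw [add_comm, ← List.rotate_rotate, List.head?_rotate (by simpa), List.getElem?_eq_some_iff]
      exact ⟨_, hv⟩
    obtain ⟨n, hn⟩ := List.head?_eq_some_iff.1 hhead
    exact ⟨_, n, ⟨i, hrot⟩, hrot_succ.symm.trans hn⟩
  · rintro ⟨m, n, hrot, hmn⟩
    apply mem_cyclicPairs_of_isRotated hrot
    rw [cyclicPairs, List.rotate_cons_succ, List.rotate_zero, hmn, List.zip_cons_cons]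
    exact List.mem_cons_self

theorem mem_cyclicPairs_append_cons_cons (A B : List α) :
    (u, v) ∈ cyclicPairs (A ++ u :: v :: B) :=
  mem_cyclicPairs_iff.2 ⟨v :: (B ++ A), B ++ A ++ [u], List.isRotated_append, rfl⟩

theorem isRotated_flatMap (g : α → List β) (h : l ~r l') : l.flatMap g ~r l'.flatMap g := by
  obtain ⟨n, hn, rfl⟩ := List.isRotated_iff_mod.1 h
  rw [List.rotate_eq_drop_append_take hn, List.flatMap_append]
  conv_lhs => rw [← List.take_append_drop n l, List.flatMap_append]
  exact List.isRotated_append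

theorem mem_cyclicPairs_flatMap {g : α → List β} {A B : List β} {x y : β}
    (huv : (u, v) ∈ cyclicPairs l) (hu : g u = A ++ [x]) (hv : g v = y :: B) :
    (x, y) ∈ cyclicPairs (l.flatMap g) := by
  obtain ⟨m, n, hrot, hmn⟩ := mem_cyclicPairs_iff.1 huv
  refine mem_cyclicPairs_iff.2 ⟨m.flatMap g ++ A, B ++ n.flatMap g, ?_, ?_⟩
  · refine (isRotated_flatMap g hrot).trans ?_
    rw [List.flatMap_cons, hu, List.append_assoc]
    exact List.isRotated_append
  · have hmap := congrArg (List.flatMap g) hmn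
    rwa [List.flatMap_append, List.flatMap_singleton, hu, List.flatMap_cons, hv,
      ← List.append_assoc] at hmap

theorem formPerm_eq_of_mem_cyclicPairs [DecidableEq α] (hl : l.Nodup)
    (h : (u, v) ∈ cyclicPairs l) : l.formPerm u = v := by
  obtain ⟨m, n, hrot, hmn⟩ := mem_cyclicPairs_iff.1 h
  rw [List.formPerm_eq_of_isRotated hl hrot]
  cases m with
  | nil =>
    rw [List.formPerm_singleton]
    exact (List.cons.inj hmn).1
  | cons w m =>
    rw [List.formPerm_apply_head _ _ _ (hrot.nodup_iff.1 hl)]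
    exact (List.cons.inj hmn).1

theorem minimalPeriod_formPerm [DecidableEq α] (hl : l.Nodup) (hu : u ∈ l) :
    minimalPeriod l.formPerm u = l.length := by
  obtain ⟨i, hi, rfl⟩ := List.getElem_of_mem hu
  refine Nat.dvd_right_iff_eq.1 fun n => ?_
  rw [← isPeriodicPt_iff_minimalPeriod_dvd, IsPeriodicPt, IsFixedPt, ← Equiv.Perm.coe_pow,
    List.formPerm_pow_apply_getElem l hl, hl.getElem_inj_iff]
  have hmod : (i + n) % l.length = i ↔ i + n ≡ i + 0 [MOD l.length] := by
    rw [Nat.ModEq, add_zero, Nat.mod_eq_of_lt hi]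
  rw [hmod, Nat.ModEq.add_iff_left rfl, Nat.modEq_zero_iff_dvd]

theorem isCyclicOn_formPerm [DecidableEq α] (hl : l.Nodup) :
    IsCyclicOn l.length {x | x ∈ l} l.formPerm :=
  ⟨fun _ => minimalPeriod_formPerm hl, fun _ => List.formPerm_apply_of_notMem⟩

theorem nodup_and_toFinset_eq_of_subset [DecidableEq α] {S : Finset α} (hS : S ⊆ l.toFinset)
    (hl : l.length ≤ S.card) : l.Nodup ∧ l.toFinset = S := by
  have heq : S = l.toFinset :=
    Finset.eq_of_subset_of_card_le hS ((List.toFinset_card_le l).trans hl)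
  refine ⟨?_, heq.symm⟩
  rw [← Multiset.coe_nodup, ← Multiset.toFinset_card_eq_card_iff_nodup]
  exact le_antisymm (Multiset.toFinset_card_le _) (hl.trans_eq (congrArg _ heq))

theorem pairwise_disjoint_of_nodup_flatten {cs : List (List α)} (h : cs.flatten.Nodup) :
    Pairwise (Disjoint on fun l : {l // l ∈ cs} => {x | x ∈ l.1}) := by
  have : Std.Symm (List.Disjoint (α := α)) := ⟨fun _ _ h => h.symm⟩
  exact fun l l' hne => Set.disjoint_left.2
    ((List.nodup_flatten.1 h).2.forall l.2 l'.2 (Subtype.coe_injective.ne hne))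

theorem exists_isCyclicOn_of_lists {k : ℕ} (hk : 0 < k) {S : Finset α}
    {cs : List (List α)} (hlen : ∀ l ∈ cs, l.length = k) (hcard : k * cs.length ≤ S.card)
    (hcov : ∀ x ∈ S, ∃ l ∈ cs, x ∈ l) :
    ∃ f, IsCyclicOn k S f ∧
      ∀ l ∈ cs, ∀ u v, (u, v) ∈ cyclicPairs l → u ≠ v → (stepGraph f).Adj u v := by
  classical
  have hflat : cs.flatten.length = k * cs.length := by
    rw [List.length_flatten, List.map_congr_left hlen, List.map_const', List.sum_replicate,
      smul_eq_mul, mul_comm]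
  obtain ⟨hnodup, hS⟩ := nodup_and_toFinset_eq_of_subset (l := cs.flatten) (S := S)
    (fun x hx => by simpa using hcov x hx) (hflat.trans_le hcard)
  have hnodup_mem : ∀ l ∈ cs, l.Nodup := (List.nodup_flatten.1 hnodup).1
  obtain ⟨f, hf, hle⟩ := IsCyclicOn.exists_iUnion hk (pairwise_disjoint_of_nodup_flatten hnodup)
    fun l => hlen l.1 l.2 ▸ isCyclicOn_formPerm (hnodup_mem l.1 l.2)
  have hunion : (⋃ l : {l // l ∈ cs}, {x | x ∈ l.1}) = (S : Set α) := by
    ext x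
    simp [← hS]
  refine ⟨f, hunion ▸ hf, fun l hl u v huv hne => hle ⟨l, hl⟩ ?_⟩
  exact stepGraph_adj.2 ⟨hne, .inl (formPerm_eq_of_mem_cyclicPairs (hnodup_mem l hl) huv)⟩

end CyclicPairs

section LinForm

/-- The linear form `a.1 + a.2 * q` in a parameter `q`. The constant form `1` is `(1, 0)`, not the
unit of the product ring. -/
abbrev LinForm := ℤ × ℤ

variable {q : ℤ} {n : ℕ}

/-- The value of a linear form at `q`. -/
def evalAt (q : ℤ) : LinForm →+ ℤ :=
  AddMonoidHom.mk' (fun a => a.1 + a.2 * q) fun a b => by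
    rw [Prod.fst_add, Prod.snd_add]
    ring

theorem evalAt_apply (a : LinForm) : evalAt q a = a.1 + a.2 * q := rfl

theorem evalAt_one_zero : evalAt q (1, 0) = 1 := by
  rw [evalAt_apply, zero_mul, add_zero]

/-- An interval of integers whose first element and number of elements are linear forms. -/
structure LinInterval where
  start : LinForm
  length : LinForm

namespace LinInterval

/-- The interval of integers obtained at the parameter value `q`. -/
def toSet (q : ℤ) (I : LinInterval) : Set ℤ :=
  Set.Ico (evalAt q I.start) (evalAt q I.start + evalAt q I.length)

/-- The interval with the single element `a`. -/
def singleton (a : LinForm) : LinInterval :=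
  ⟨a, (1, 0)⟩

/-- The interval of the negatives of the elements of `I`. -/
def neg (I : LinInterval) : LinInterval :=
  ⟨(1, 0) - I.start - I.length, I.length⟩

/-- The `n` consecutive integers counted from `a` upwards or downwards. -/
def progression (up : Bool) (a n : LinForm) : LinInterval :=
  ⟨if up then a else a - n + (1, 0), n⟩

theorem mem_toSet_singleton {a : LinForm} {x : ℤ} :
    x ∈ (singleton a).toSet q ↔ x = evalAt q a := by
  simp only [toSet, singleton, evalAt_one_zero, Set.mem_Ico]
  omega

theorem mem_toSet_neg {I : LinInterval} {x : ℤ} : x ∈ I.neg.toSet q ↔ -x ∈ I.toSet q := by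
  simp only [toSet, neg, Set.mem_Ico, map_sub, evalAt_one_zero]
  omega

theorem mem_toSet_progression {up : Bool} {a m : LinForm} {x : ℤ} :
    x ∈ (progression up a m).toSet q ↔
      ∃ j : ℕ, j < evalAt q m ∧ x = evalAt q a + (if up then 1 else -1) * j := by
  cases up <;> simp only [progression, toSet, Set.mem_Ico, if_true, if_false, Bool.false_eq_true,
    map_add, map_sub, evalAt_one_zero]
  · exact ⟨fun h => ⟨(evalAt q a - x).toNat, by omega, by omega⟩, by rintro ⟨j, hj, rfl⟩; omega⟩
  · exact ⟨fun h => ⟨(x - evalAt q a).toNat, by omega, by omega⟩, by rintro ⟨j, hj, rfl⟩; omega⟩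

end LinInterval

/-- Some element of one of the intervals reduces to `d` modulo `n`. -/
def Covers (q : ℤ) (ivs : List LinInterval) (d : ZMod n) : Prop :=
  ∃ I ∈ ivs, ∃ x ∈ I.toSet q, (x : ZMod n) = d

theorem covers_cons {I : LinInterval} {ivs : List LinInterval} {d : ZMod n} :
    Covers q (I :: ivs) d ↔ (∃ x ∈ I.toSet q, (x : ZMod n) = d) ∨ Covers q ivs d := by
  simp [Covers]

theorem covers_singleton_cons {a : LinForm} {ivs : List LinInterval} {d : ZMod n} :
    Covers q (.singleton a :: ivs) d ↔ (evalAt q a : ZMod n) = d ∨ Covers q ivs d := by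
  simp [covers_cons, LinInterval.mem_toSet_singleton]

theorem exists_covers_of_length_eq_one {ivs : List LinInterval} (h : ∃ I ∈ ivs, I.length = (1, 0)) :
    ∃ d : ZMod n, Covers q ivs d := by
  obtain ⟨I, hI, hlen⟩ := h
  refine ⟨_, I, hI, evalAt q I.start, ?_, rfl⟩
  rw [LinInterval.toSet, hlen, evalAt_one_zero]
  exact ⟨le_rfl, by omega⟩

/-- The form `a - b` is an integral multiple of `N`; the multiplier is read off the coefficient of
`q`, unless that of `N` vanishes. -/
def congrMod (N a b : LinForm) : Bool :=
  decide (a - b = (if N.2 = 0 then (a.1 - b.1) / N.1 else (a.2 - b.2) / N.2) • N)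

theorem intCast_evalAt_eq_of_congrMod {N a b : LinForm} (h : congrMod N a b)
    (hn : (n : ℤ) = evalAt q N) : (evalAt q a : ZMod n) = evalAt q b := by
  have heval := congrArg (evalAt q) (of_decide_eq_true h)
  rw [map_sub, map_zsmul, ← hn, smul_eq_mul] at heval
  rw [← sub_eq_zero, ← Int.cast_sub, heval, Int.cast_mul, Int.cast_natCast, ZMod.natCast_self,
    mul_zero]

/-- Whether at most `fuel` consecutive intervals, taken modulo `N`, lead from `a` to `b`. -/
def reaches (N : LinForm) (ivs : List LinInterval) (b : LinForm) (fuel : ℕ) (a : LinForm) : Bool :=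
  match fuel with
  | 0 => a = b
  | fuel + 1 => a = b || match ivs.find? fun I => congrMod N I.start a with
    | none => false
    | some I => reaches N ivs b fuel (a + I.length)

/-- Whether the intervals, chained up from the first one, cover all residues modulo `N`. -/
def coversMod (N : LinForm) (ivs : List LinInterval) : Bool :=
  match ivs with
  | [] => false
  | I :: _ => reaches N ivs (I.start + N) (ivs.length + 1) I.start

theorem covers_of_reaches {N : LinForm} {ivs : List LinInterval} {b : LinForm}
    (hn : (n : ℤ) = evalAt q N) {fuel : ℕ} {a : LinForm} (h : reaches N ivs b fuel a) {x : ℤ}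
    (hax : evalAt q a ≤ x) (hxb : x < evalAt q b) : Covers q ivs (x : ZMod n) := by
  induction fuel generalizing a with
  | zero =>
    obtain rfl : a = b := of_decide_eq_true h
    omega
  | succ fuel ih =>
    obtain heq | hstep := (Bool.or_eq_true _ _).mp h
    · obtain rfl : a = b := of_decide_eq_true heq
      omega
    split at hstep
    · exact absurd hstep Bool.false_ne_true
    · rename_i I hfind
      obtain hlt | hle := lt_or_ge x (evalAt q (a + I.length))
      · rw [map_add] at hlt
        refine ⟨I, List.mem_of_find?_eq_some hfind, x + evalAt q I.start - evalAt q a,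
          ⟨by omega, by omega⟩, ?_⟩
        have hcongr : congrMod N I.start a := by simpa only using List.find?_some hfind
        rw [Int.cast_sub, Int.cast_add, intCast_evalAt_eq_of_congrMod hcongr hn,
          add_sub_cancel_right]
      · exact ih hstep hle

theorem covers_of_coversMod [NeZero n] {N : LinForm} {ivs : List LinInterval}
    (h : coversMod N ivs) (hn : (n : ℤ) = evalAt q N) (d : ZMod n) : Covers q ivs d := by
  match ivs with
  | [] => exact absurd h Bool.false_ne_true
  | I :: ivs =>
    have hn0 : (0 : ℤ) < n := by exact_mod_cast NeZero.pos n
    let x := evalAt q I.start + ((d.val : ℤ) - evalAt q I.start) % n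
    have hx : (x : ZMod n) = d := by
      simp [x]
    rw [← hx]
    refine covers_of_reaches hn h ?_ ?_
    · exact le_add_of_nonneg_right (Int.emod_nonneg _ hn0.ne')
    · rw [map_add, ← hn]
      exact add_lt_add_right (Int.emod_lt_of_pos _ hn0) _

end LinForm

section Piece

variable {L : Type*} {q : ℤ}

/-- The list `(la, a), (lb, b), (la, a - s), (lb, b + s), …` of `n` pairs of points alternating
between the levels `la` and `lb`. -/
def zigzagList (la lb : L) (s a b : ℤ) : ℕ → List (L × ℤ)
  | 0 => []
  | n + 1 => (la, a) :: (lb, b) :: zigzagList la lb s (a - s) (b + s) n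

/-- The difference `d`, from level `la` to level `lb`, occurs between two neighbours of the cyclic
list `l`. -/
def IsDifference (l : List (L × ℤ)) (la lb : L) (d : ℤ) : Prop :=
  ∃ x, ((la, x), (lb, x + d)) ∈ cyclicPairs l ∨ ((lb, x + d), (la, x)) ∈ cyclicPairs l

theorem IsDifference.symm {l : List (L × ℤ)} {la lb : L} {d : ℤ} (h : IsDifference l la lb d) :
    IsDifference l lb la (-d) := by
  obtain ⟨x, h⟩ := h
  exact ⟨x + d, by rw [add_neg_cancel_right]; exact h.symm⟩

section zigzagList

variable (la lb : L) (s : ℤ)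

theorem length_zigzagList (a b : ℤ) (n : ℕ) : (zigzagList la lb s a b n).length = n + n := by
  induction n generalizing a b with
  | zero => rfl
  | succ n ih =>
    rw [zigzagList, List.length_cons, List.length_cons, ih]
    omega

theorem exists_zigzagList_succ_eq_append (a b : ℤ) (n : ℕ) :
    ∃ l, zigzagList la lb s a b (n + 1) = l ++ [(lb, b + s * n)] := by
  induction n generalizing a b with
  | zero => exact ⟨[(la, a)], by simp [zigzagList]⟩
  | succ n ih =>
    obtain ⟨l, hl⟩ := ih (a - s) (b + s)
    refine ⟨(la, a) :: (lb, b) :: l, ?_⟩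
    rw [zigzagList, hl, List.cons_append, List.cons_append, Nat.cast_succ, mul_add_one,
      add_assoc, add_comm s]

theorem mem_zigzagList {a b : ℤ} {n j : ℕ} (hj : j < n) :
    (la, a - s * j) ∈ zigzagList la lb s a b n ∧ (lb, b + s * j) ∈ zigzagList la lb s a b n := by
  induction n generalizing a b j with
  | zero => omega
  | succ n ih =>
    cases j with
    | zero => simp [zigzagList]
    | succ j =>
      have hmem := @ih (a - s) (b + s) j (by omega)
      rw [sub_sub, add_assoc, ← mul_one_add, add_comm 1, ← Nat.cast_succ] at hmem
      exact ⟨.tail _ (.tail _ hmem.1), .tail _ (.tail _ hmem.2)⟩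

theorem exists_zigzagList_eq_append_cons_cons {a b : ℤ} {n i : ℕ} (hi : i + 1 < n + n) :
    ∃ A B x y, y = x + (b - a + s * i) ∧
      (zigzagList la lb s a b n = A ++ (la, x) :: (lb, y) :: B ∨
        zigzagList la lb s a b n = A ++ (lb, y) :: (la, x) :: B) := by
  induction n generalizing a b i with
  | zero => omega
  | succ n ih =>
    match i with
    | 0 => exact ⟨[], _, a, b, by simp, .inl rfl⟩
    | 1 =>
      obtain ⟨n, rfl⟩ : ∃ m, n = m + 1 := ⟨n - 1, by omega⟩
      exact ⟨[(la, a)], _, a - s, b, by simp, .inr rfl⟩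
    | i + 2 =>
      obtain ⟨A, B, x, y, hy, hAB⟩ := @ih (a - s) (b + s) i (by omega)
      refine ⟨(la, a) :: (lb, b) :: A, B, x, y, ?_, ?_⟩
      · rw [hy]
        push_cast
        ring
      · simpa only [zigzagList, List.cons_append, List.cons.injEq, true_and] using hAB

end zigzagList

/-- A stretch of a base cycle whose vertices are linear forms on levels from `L`: a zigzag of `n`
pairs of points, or a single point. -/
inductive Piece (L : Type*)
  | zigzag (la lb : L) (a b : LinForm) (up : Bool) (n : LinForm)
  | point (l : L) (a : LinForm)

namespace Piece

/-- The vertices of the piece at the parameter value `q`. -/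
def vertices (q : ℤ) : Piece L → List (L × ℤ)
  | zigzag la lb a b up n =>
    zigzagList la lb (if up then 1 else -1) (evalAt q a) (evalAt q b) (evalAt q n).toNat
  | point l a => [(l, evalAt q a)]

/-- The first vertex of the piece. -/
def first : Piece L → L × LinForm
  | zigzag la _ a _ _ _ => (la, a)
  | point l a => (l, a)

/-- The last vertex of the piece. -/
def last : Piece L → L × LinForm
  | zigzag _ lb _ b up n => (lb, if up then b + n - (1, 0) else b - n + (1, 0))
  | point l a => (l, a)

/-- The number of vertices of the piece. -/
def length : Piece L → LinForm
  | zigzag _ _ _ _ _ n => n + n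
  | point _ _ => (1, 0)

/-- The number of pairs of a zigzag is positive for every `q ≥ 2`. -/
def isProper : Piece L → Bool
  | zigzag _ _ _ _ _ n => decide (0 ≤ n.2 ∧ 1 ≤ n.1 + 2 * n.2)
  | point _ _ => true

/-- The positions of the vertices of the piece on level `l`. -/
def levelIntervals [DecidableEq L] (l : L) : Piece L → List LinInterval
  | zigzag la lb a b up n =>
    (if la = l then [.progression (!up) a n] else []) ++
      if lb = l then [.progression up b n] else []
  | point l' a => if l' = l then [.singleton a] else []

/-- The differences between neighbours inside the piece, with the levels they lead from and to. -/
def differences : Piece L → List (L × L × LinInterval)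
  | zigzag la lb a b up n => [(la, lb, .progression up (b - a) (n + n - (1, 0)))]
  | point _ _ => []

theorem exists_evalAt_eq_succ {la lb : L} {a b n : LinForm} {up : Bool} (hq : 2 ≤ q)
    (h : (zigzag la lb a b up n).isProper) : ∃ m : ℕ, evalAt q n = m + 1 := by
  obtain ⟨hslope, hval⟩ := of_decide_eq_true h
  have hpos : 1 ≤ evalAt q n := by
    rw [evalAt_apply]
    nlinarith
  exact ⟨(evalAt q n - 1).toNat, by omega⟩

theorem exists_vertices_eq_cons (hq : 2 ≤ q) {p : Piece L} (h : p.isProper) :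
    ∃ l, p.vertices q = (p.first.1, evalAt q p.first.2) :: l := by
  cases p with
  | zigzag la lb a b up n =>
    obtain ⟨m, hm⟩ := exists_evalAt_eq_succ hq h
    rw [vertices, hm, Int.toNat_natCast_add_one]
    exact ⟨_, rfl⟩
  | point l a => exact ⟨[], rfl⟩

theorem exists_vertices_eq_append (hq : 2 ≤ q) {p : Piece L} (h : p.isProper) :
    ∃ l, p.vertices q = l ++ [(p.last.1, evalAt q p.last.2)] := by
  cases p with
  | zigzag la lb a b up n =>
    obtain ⟨m, hm⟩ := exists_evalAt_eq_succ hq h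
    have hlast : evalAt q (last (zigzag la lb a b up n)).2 =
        evalAt q b + (if up then 1 else -1) * m := by
      cases up <;> simp only [last, map_add, map_sub, evalAt_one_zero, hm, if_true, if_false,
        Bool.false_eq_true] <;> ring
    rw [hlast, vertices, hm, Int.toNat_natCast_add_one]
    exact exists_zigzagList_succ_eq_append ..
  | point l a => exact ⟨[], rfl⟩

theorem length_vertices (hq : 2 ≤ q) {p : Piece L} (h : p.isProper) :
    ((p.vertices q).length : ℤ) = evalAt q p.length := by
  cases p with
  | zigzag la lb a b up n =>
    obtain ⟨m, hm⟩ := exists_evalAt_eq_succ hq h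
    rw [vertices, length_zigzagList, length, map_add, hm]
    omega
  | point l a => exact evalAt_one_zero.symm

theorem mem_vertices_of_mem_levelIntervals [DecidableEq L] {p : Piece L} {l : L} {I : LinInterval}
    (hI : I ∈ p.levelIntervals l) {x : ℤ} (hx : x ∈ I.toSet q) : (l, x) ∈ p.vertices q := by
  cases p with
  | zigzag la lb a b up n =>
    rw [levelIntervals, List.mem_append, List.mem_ite_nil_right, List.mem_ite_nil_right,
      List.mem_singleton, List.mem_singleton] at hI
    obtain ⟨rfl, rfl⟩ | ⟨rfl, rfl⟩ := hI <;>
      obtain ⟨j, hj, rfl⟩ := LinInterval.mem_toSet_progression.1 hx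
    · have hsign : (if !up then 1 else -1 : ℤ) = -(if up then 1 else -1) := by cases up <;> rfl
      rw [hsign, neg_mul, ← sub_eq_add_neg]
      exact (mem_zigzagList _ _ _ (by omega)).1
    · exact (mem_zigzagList _ _ _ (by omega)).2
  | point l' a =>
    rw [levelIntervals, List.mem_ite_nil_right, List.mem_singleton] at hI
    obtain ⟨rfl, rfl⟩ := hI
    rw [LinInterval.mem_toSet_singleton.1 hx]
    exact List.mem_cons_self

theorem isDifference_of_mem_differences {p : Piece L} {la lb : L} {I : LinInterval}
    (hI : (la, lb, I) ∈ p.differences) {d : ℤ} (hd : d ∈ I.toSet q) (A B : List (L × ℤ)) :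
    IsDifference (A ++ p.vertices q ++ B) la lb d := by
  cases p with
  | point l a => exact absurd hI List.not_mem_nil
  | zigzag la' lb' a b up n =>
    obtain ⟨rfl, rfl, rfl⟩ : la = la' ∧ lb = lb' ∧ I = _ := by
      simpa only [differences, List.mem_singleton, Prod.mk.injEq] using hI
    obtain ⟨i, hi, rfl⟩ := LinInterval.mem_toSet_progression.1 hd
    rw [map_sub, map_add, evalAt_one_zero] at hi
    obtain ⟨X, Y, x, y, hy, hXY⟩ := exists_zigzagList_eq_append_cons_cons la lb
      (if up then 1 else -1) (a := evalAt q a) (b := evalAt q b)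
      (show i + 1 < (evalAt q n).toNat + (evalAt q n).toNat by omega)
    rw [map_sub, IsDifference, vertices]
    refine ⟨x, ?_⟩
    rw [← hy]
    refine hXY.imp (fun h => ?_) fun h => ?_ <;>
    · rw [h, List.append_assoc, List.append_assoc, ← List.append_assoc]
      exact mem_cyclicPairs_append_cons_cons (A ++ X) (Y ++ B)

end Piece

end Piece

section BaseCycles

variable {L : Type*} {q : ℤ} {K : LinForm} {D : List (List (Piece L))}

/-- The vertices of the cycle composed of the pieces `c`, at the parameter value `q`. -/
def cycleVertices (q : ℤ) (c : List (Piece L)) : List (L × ℤ) :=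
  c.flatMap (Piece.vertices q)

/-- The differences between neighbours of the cycle composed of the pieces `c`, inside a piece or
from one piece to the next. -/
def cycleDifferences (c : List (Piece L)) : List (L × L × LinInterval) :=
  c.flatMap Piece.differences ++ (cyclicPairs c).map fun p =>
    (p.1.last.1, p.2.first.1, .singleton (p.2.first.2 - p.1.last.2))

/-- All cycles of `D` are composed of proper pieces and have length `K`. -/
abbrev IsBase (K : LinForm) (D : List (List (Piece L))) : Prop :=
  ∀ c ∈ D, (∀ p ∈ c, p.isProper) ∧ (c.map Piece.length).sum = K

/-- The positions of the vertices of the cycles of `D` on level `l`. -/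
def levelIntervals [DecidableEq L] (l : L) (D : List (List (Piece L))) : List LinInterval :=
  D.flatMap fun c => c.flatMap (Piece.levelIntervals l)

/-- The differences, in either direction, between neighbours on the cycles of `D` whose levels are
related by `P`. -/
def differences (P : L → L → Bool) (D : List (List (Piece L))) : List LinInterval :=
  (D.flatMap cycleDifferences).flatMap fun e =>
    (if P e.1 e.2.1 then [e.2.2] else []) ++ if P e.2.1 e.1 then [e.2.2.neg] else []

theorem length_cycleVertices (hq : 2 ≤ q) (hD : IsBase K D) {c : List (Piece L)} (hc : c ∈ D) :
    ((cycleVertices q c).length : ℤ) = evalAt q K := by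
  obtain ⟨hproper, hlen⟩ := hD c hc
  rw [cycleVertices, List.length_flatMap, ← hlen, map_list_sum, List.map_map, Nat.cast_list_sum,
    List.map_map]
  exact congrArg List.sum (List.map_congr_left fun p hp => Piece.length_vertices hq (hproper p hp))

theorem exists_mem_cycleVertices [DecidableEq L] {l : L} {I : LinInterval}
    (hI : I ∈ levelIntervals l D) {x : ℤ} (hx : x ∈ I.toSet q) :
    ∃ c ∈ D, (l, x) ∈ cycleVertices q c := by
  obtain ⟨c, hc, hI⟩ := List.mem_flatMap.1 hI
  obtain ⟨p, hp, hI⟩ := List.mem_flatMap.1 hI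
  exact ⟨c, hc, List.mem_flatMap.2 ⟨p, hp, Piece.mem_vertices_of_mem_levelIntervals hI hx⟩⟩

theorem isDifference_of_mem_cycleDifferences (hq : 2 ≤ q) {c : List (Piece L)}
    (hc : ∀ p ∈ c, p.isProper) {la lb : L} {I : LinInterval}
    (hI : (la, lb, I) ∈ cycleDifferences c) {d : ℤ} (hd : d ∈ I.toSet q) :
    IsDifference (cycleVertices q c) la lb d := by
  rw [cycleDifferences, List.mem_append, List.mem_flatMap, List.mem_map] at hI
  obtain ⟨p, hp, hI⟩ | ⟨⟨p, p'⟩, hpp', hI⟩ := hI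
  · obtain ⟨A, B, rfl⟩ := List.append_of_mem hp
    rw [cycleVertices, List.flatMap_append, List.flatMap_cons, ← List.append_assoc]
    exact Piece.isDifference_of_mem_differences hI hd _ _
  · simp only [Prod.mk.injEq] at hI
    obtain ⟨rfl, rfl, rfl⟩ := hI
    obtain ⟨A, hA⟩ := Piece.exists_vertices_eq_append hq (hc p (List.of_mem_zip hpp').1)
    obtain ⟨B, hB⟩ := Piece.exists_vertices_eq_cons hq
      (hc p' (List.mem_rotate.1 (List.of_mem_zip hpp').2))
    rw [LinInterval.mem_toSet_singleton.1 hd, map_sub]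
    refine ⟨evalAt q p.last.2, .inl ?_⟩
    rw [add_sub_cancel]
    exact mem_cyclicPairs_flatMap hpp' hA hB

theorem exists_isDifference_of_mem_differences (hq : 2 ≤ q) (hD : IsBase K D) {P : L → L → Bool}
    {I : LinInterval} (hI : I ∈ differences P D) {d : ℤ} (hd : d ∈ I.toSet q) :
    ∃ c ∈ D, ∃ la lb, P la lb ∧ IsDifference (cycleVertices q c) la lb d := by
  obtain ⟨⟨la, lb, J⟩, hJ, hI⟩ := List.mem_flatMap.1 hI
  obtain ⟨c, hc, hJ⟩ := List.mem_flatMap.1 hJ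
  have hdiff := fun {x : ℤ} => isDifference_of_mem_cycleDifferences (d := x) hq (hD c hc).1 hJ
  simp only [List.mem_append, List.mem_ite_nil_right, List.mem_singleton] at hI
  obtain ⟨hP, rfl⟩ | ⟨hP, rfl⟩ := hI
  · exact ⟨c, hc, la, lb, hP, hdiff hd⟩
  · exact ⟨c, hc, lb, la, hP, neg_neg d ▸ (hdiff (LinInterval.mem_toSet_neg.1 hd)).symm⟩

-- A pair at the right distance is a translate of a pair of neighbours on a base cycle.
theorem exists_isCyclicOn_of_isBase [DecidableEq L] {k n : ℕ} {V : Type*}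
    (hq : 2 ≤ q) (hD : IsBase K D) (hk : (k : ℤ) = evalAt q K) (hk0 : 0 < k)
    {ψ : L → ZMod n → V} {τ : ZMod n → V → V} (hτ : ∀ c, Injective (τ c))
    (hψ : ∀ c l x, τ c (ψ l x) = ψ l (x + c)) {S : Finset V} (hcard : k * D.length ≤ S.card)
    (hcov : ∀ v ∈ S, ∃ l x, ψ l x = v ∧ Covers q (levelIntervals l D) x) :
    ∃ f, IsCyclicOn k S f ∧ ∀ P x y, Covers q (differences P D) (y - x) →
      ∃ la lb, P la lb ∧ (ψ la x ≠ ψ lb y →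
        ∃ c, (stepGraph (pushforward (τ c) f)).Adj (ψ la x) (ψ lb y)) := by
  let φ : L × ℤ → V := fun w => ψ w.1 w.2
  have hlen : ∀ l ∈ D.map fun c => (cycleVertices q c).map φ, l.length = k := by
    intro l hl
    obtain ⟨c, hc, rfl⟩ := List.mem_map.1 hl
    rw [List.length_map, ← Nat.cast_inj (R := ℤ), length_cycleVertices hq hD hc, hk]
  obtain ⟨f, hf, hadj⟩ := exists_isCyclicOn_of_lists hk0 hlen
    (by rwa [List.length_map]) fun v hv => by
      obtain ⟨l, x, rfl, I, hI, z, hz, rfl⟩ := hcov v hv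
      obtain ⟨c, hc, hmem⟩ := exists_mem_cycleVertices hI hz
      exact ⟨_, List.mem_map_of_mem hc, List.mem_map_of_mem (f := φ) hmem⟩
  have hadj' : ∀ c ∈ D, ∀ w w', (w, w') ∈ cyclicPairs (cycleVertices q c) → φ w ≠ φ w' →
      (stepGraph f).Adj (φ w) (φ w') := fun c hc w w' hww' =>
    hadj _ (List.mem_map_of_mem hc) _ _ (cyclicPairs_map φ _ ▸ List.mem_map_of_mem hww')
  refine ⟨f, hf, ?_⟩
  rintro P x y ⟨I, hI, d, hd, hdxy⟩
  obtain ⟨c, hc, la, lb, hP, u, hu⟩ := exists_isDifference_of_mem_differences hq hD hI hd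
  have hx : τ (x - u) (φ (la, u)) = ψ la x := by rw [hψ, add_sub_cancel]
  have hy : τ (x - u) (φ (lb, u + d)) = ψ lb y := by
    rw [hψ, Int.cast_add, hdxy]
    congr 1
    ring
  refine ⟨la, lb, hP, fun hne => ⟨x - u, ?_⟩⟩
  rw [← hx, ← hy] at hne ⊢
  have hne' := fun h => hne (congrArg (τ (x - u)) h)
  exact adj_pushforward (hτ _) <| hu.elim (fun h => hadj' c hc _ _ h hne')
    fun h => (hadj' c hc _ _ h (Ne.symm hne')).symm

end BaseCycles

section BlowUp

/-- The cycle of length `m`, with each vertex replaced by `ZMod k` and each edge by a complete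
bipartite graph, is covered by `k` spanning sets of disjoint `k`-cycles. -/
def HasBlowUp (m k : ℕ) : Prop :=
  ∃ f : ZMod k → Fin m × ZMod k → Fin m × ZMod k,
    (∀ c, IsCyclicOn k Set.univ (f c)) ∧
    ∀ p ∈ cyclicPairs (List.finRange m), ∀ x y, ∃ c, (stepGraph (f c)).Adj (p.1, x) (p.2, y)

/-- Base cycles that develop modulo `K` into a blow-up of the `m`-cycle. -/
structure IsBlowUpBase (m : ℕ) (K : LinForm) (D : List (List (Piece (Fin m)))) : Prop where
  isBase : IsBase K D
  length_eq : D.length = m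
  level : ∀ i, coversMod K (levelIntervals i D)
  edge : ∀ p ∈ cyclicPairs (List.finRange m), p.1 ≠ p.2 ∧
    coversMod K (differences (fun i j => (i, j) = p) D)

theorem IsBlowUpBase.hasBlowUp {m k : ℕ} [NeZero k] {q : ℤ} {K : LinForm}
    {D : List (List (Piece (Fin m)))} (h : IsBlowUpBase m K D) (hq : 2 ≤ q)
    (hk : (k : ℤ) = evalAt q K) : HasBlowUp m k := by
  let τ : ZMod k → Fin m × ZMod k → Fin m × ZMod k := fun c => Prod.map id (· + c)
  have hτ : ∀ c, Bijective (τ c) := fun c => bijective_id.prodMap (Equiv.addRight c).bijective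
  obtain ⟨f, hf, hadj⟩ := exists_isCyclicOn_of_isBase (ψ := Prod.mk) (S := Finset.univ) hq h.isBase
    hk (NeZero.pos k) (fun c => (hτ c).injective) (fun _ _ _ => rfl)
    (by simp [h.length_eq, mul_comm])
    fun v _ => ⟨v.1, v.2, rfl, covers_of_coversMod (h.level v.1) hk v.2⟩
  refine ⟨fun c => pushforward (τ c) f, fun c => ?_, fun p hp x y => ?_⟩
  · have himage := hf.pushforward (hτ c).injective
    rwa [Finset.coe_univ, Set.image_univ, (hτ c).surjective.range_eq] at himage
  · obtain ⟨hne, hcov⟩ := h.edge p hp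
    obtain ⟨la, lb, hP, hadj⟩ := hadj _ x y (covers_of_coversMod hcov hk _)
    obtain rfl : (la, lb) = p := of_decide_eq_true hP
    exact hadj fun heq => hne (congrArg Prod.fst heq)

end BlowUp

section Rotational

/-- Base cycles on the levels `some false`, `some true` and the fixed point `none` that develop
modulo `N` into an almost resolvable cycle system: the base class misses the point `x₀` of level
`false`, and the half-parallel class consists of the pairs of level `false` at distance `e`. -/
structure IsRotationalBase (K N e x₀ : LinForm) (D : List (List (Piece (Option Bool)))) :
    Prop where
  isBase : IsBase K D
  length_smul : D.length • K = N + N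
  level_false : coversMod N (.singleton x₀ :: levelIntervals (some false) D)
  level_true : coversMod N (levelIntervals (some true) D)
  level_none : ∃ I ∈ levelIntervals none D, I.length = (1, 0)
  pure_false : coversMod N (.singleton 0 :: .singleton e :: .singleton (-e) ::
    differences (fun i j => (i, j) = (some false, some false)) D)
  pure_true : coversMod N (.singleton 0 ::
    differences (fun i j => (i, j) = (some true, some true)) D)
  mixed : coversMod N (differences (fun i j => (i, j) = (some false, some true)) D)
  infinity : ∀ b, ∃ I ∈ differences (fun i j => (i, j) = (some b, none)) D, I.length = (1, 0)

theorem isCyclicOn_add_right {G : Type*} [AddGroup G] (e : G) :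
    IsCyclicOn (addOrderOf e) Set.univ (· + e) := by
  refine ⟨fun x _ => ?_, fun x hx => absurd (Set.mem_univ x) hx⟩
  refine Nat.dvd_right_iff_eq.1 fun n => ?_
  rw [← isPeriodicPt_iff_minimalPeriod_dvd, IsPeriodicPt, IsFixedPt, add_right_iterate,
    add_eq_left, addOrderOf_dvd_iff_nsmul_eq_zero]

theorem adj_pushforward_add_right {G W : Type*} [AddGroup G] {g : G → W} (hg : Injective g)
    {d x y : G} (hne : g x ≠ g y) (h : x + d = y ∨ y + d = x) :
    (stepGraph (pushforward g (· + d))).Adj (g x) (g y) :=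
  stepGraph_adj.2 ⟨hne, by simpa only [pushforward_apply hg, hg.eq_iff] using h⟩

theorem rel_of_ne_of_rel_symm {X : Type*} {R : Option (Bool × X) → Option (Bool × X) → Prop}
    (hsymm : ∀ a b, R a b → R b a) (hinfinity : ∀ v, R (some v) none)
    (hpure : ∀ b x y, x ≠ y → R (some (b, x)) (some (b, y)))
    (hmixed : ∀ x y, R (some (false, x)) (some (true, y))) : ∀ a b, a ≠ b → R a b := by
  rintro (_ | ⟨a, x⟩) (_ | ⟨b, y⟩) hab
  · exact absurd rfl hab
  · exact hsymm _ _ (hinfinity _)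
  · exact hinfinity _
  · cases a <;> cases b
    · exact hpure _ x y fun hxy => hab (by rw [hxy])
    · exact hmixed x y
    · exact hsymm _ _ (hmixed y x)
    · exact hpure _ x y fun hxy => hab (by rw [hxy])

namespace IsRotationalBase

variable {k n : ℕ} {q : ℤ} {K N e x₀ : LinForm} {D : List (List (Piece (Option Bool)))}

/-- The translation of the two copies of `ZMod n` by `c`, fixing the point at infinity. -/
def translate (c : ZMod n) : Option (Bool × ZMod n) ≃ Option (Bool × ZMod n) :=
  ((Equiv.refl Bool).prodCongr (Equiv.addRight c)).optionCongr

/-- The point of level `l` at position `x`; at level `none` the position is ignored. -/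
def levelPoint (l : Option Bool) (x : ZMod n) : Option (Bool × ZMod n) :=
  l.map (·, x)

theorem translate_levelPoint (c : ZMod n) (l : Option Bool) (x : ZMod n) :
    translate c (levelPoint l x) = levelPoint l (x + c) := by
  cases l <;> rfl

theorem exists_class [NeZero n] (h : IsRotationalBase K N e x₀ D) (hq : 2 ≤ q)
    (hk : (k : ℤ) = evalAt q K) (hk0 : 0 < k) (hn : (n : ℤ) = evalAt q N) :
    ∃ f : Option (Bool × ZMod n) → Option (Bool × ZMod n),
      IsCyclicOn k {some (false, (evalAt q x₀ : ZMod n))}ᶜ f ∧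
      ∀ i j x y, Covers q (differences (fun i' j' => (i', j') = (i, j)) D) (y - x) →
        levelPoint i x ≠ levelPoint j y →
        ∃ c, (stepGraph (pushforward (translate c) f)).Adj (levelPoint i x) (levelPoint j y) := by
  have hcard : k * D.length = 2 * n := by
    have hlen := congrArg (evalAt q) h.length_smul
    rw [map_nsmul, map_add, ← hk, ← hn, nsmul_eq_mul] at hlen
    zify
    linarith
  have hcov : ∀ v ∈ ({some (false, (evalAt q x₀ : ZMod n))}ᶜ : Finset _),
      ∃ l x, levelPoint l x = v ∧ Covers q (levelIntervals l D) x := by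
    rintro (_ | ⟨_ | _, x⟩) hv
    · obtain ⟨x, hx⟩ := exists_covers_of_length_eq_one h.level_none
      exact ⟨none, x, rfl, hx⟩
    · refine ⟨some false, x, rfl, ?_⟩
      refine (covers_singleton_cons.1 (covers_of_coversMod h.level_false hn x)).resolve_left ?_
      rintro rfl
      simp at hv
    · exact ⟨some true, x, rfl, covers_of_coversMod h.level_true hn x⟩
  obtain ⟨f, hf, hadj⟩ := exists_isCyclicOn_of_isBase hq h.isBase hk hk0
    (fun c => (translate c).injective) translate_levelPoint
    (by simp [hcard, Finset.card_compl, ZMod.card]) hcov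
  refine ⟨f, by rwa [Finset.coe_compl, Finset.coe_singleton] at hf, fun i j x y hcov hne => ?_⟩
  obtain ⟨la, lb, hP, hadj⟩ := hadj _ x y hcov
  obtain ⟨rfl, rfl⟩ := Prod.mk.inj (of_decide_eq_true hP)
  exact hadj hne

theorem hasARCS [NeZero n] (h : IsRotationalBase K N e x₀ D) (hq : 2 ≤ q)
    (hk : (k : ℤ) = evalAt q K) (hk0 : 0 < k) (hn : (n : ℤ) = evalAt q N)
    (he : addOrderOf (evalAt q e : ZMod n) = k) : HasARCS k (ZMod n) := by
  obtain ⟨f, hf, hadj⟩ := h.exists_class hq hk hk0 hn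
  have hinj : Injective fun x : ZMod n => some (false, x) := fun x y hxy => by simpa using hxy
  refine ⟨fun c => translate c (some (false, evalAt q x₀)), fun c => pushforward (translate c) f,
    pushforward (fun x => some (false, x)) (· + (evalAt q e : ZMod n)), fun c => ?_, ?_,
    rel_of_ne_of_rel_symm (fun a b hab => ?_) ?_ ?_ ?_⟩
  · have himage := hf.pushforward (translate c).injective
    rwa [Set.image_compl_eq (translate c).bijective, Set.image_singleton] at himage
  · rw [← Set.image_univ, ← he]
    exact (isCyclicOn_add_right _).pushforward hinj
  · exact hab.imp (Exists.imp fun _ => Adj.symm) Adj.symm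
  · rintro ⟨b, x⟩
    obtain ⟨d, hd⟩ := exists_covers_of_length_eq_one (h.infinity b)
    exact .inl (hadj (some b) none x (x + d) (by rwa [add_sub_cancel_left]) nofun)
  · rintro (_ | _) x y hxy
    · have hne : some (false, x) ≠ some (false, y) := hinj.ne hxy
      have hcov := covers_of_coversMod h.pure_false hn (y - x)
      simp only [covers_singleton_cons, map_zero, map_neg, Int.cast_zero, Int.cast_neg] at hcov
      obtain hzero | hpos | hneg | hcov := hcov
      · exact absurd (sub_eq_zero.1 hzero.symm).symm hxy
      · exact .inr (adj_pushforward_add_right hinj hne (.inl (by rw [hpos, add_sub_cancel])))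
      · exact .inr (adj_pushforward_add_right hinj hne
          (.inr (by rw [← eq_sub_iff_add_eq', ← neg_sub, ← hneg, neg_neg])))
      · exact .inl (hadj (some false) (some false) x y hcov hne)
    · have hcov := covers_of_coversMod h.pure_true hn (y - x)
      simp only [covers_singleton_cons, map_zero, Int.cast_zero] at hcov
      have hcov := hcov.resolve_left fun hzero => hxy (sub_eq_zero.1 hzero.symm).symm
      exact .inl (hadj (some true) (some true) x y hcov (by simpa [levelPoint] using hxy))
  · exact fun x y => .inl (hadj (some false) (some true) x y (covers_of_coversMod h.mixed hn _)
      (by simp [levelPoint]))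

end IsRotationalBase

end Rotational

section Frame

/-- A `k`-cycle frame with the groups `{i} × Bool × ZMod k` for `i : T`: for every group there are
`k` classes of disjoint `k`-cycles spanning the other groups, and the classes cover all pairs of
points from different groups. -/
def HasFrame (k : ℕ) (T : Type) : Prop :=
  ∃ F : T → ZMod k → T × Bool × ZMod k → T × Bool × ZMod k,
    (∀ i c, IsCyclicOn k {v | v.1 ≠ i} (F i c)) ∧
    ∀ a b, a.1 ≠ b.1 → ∃ i c, (stepGraph (F i c)).Adj a b

/-- Base cycles that develop modulo `5` in the groups and modulo `K` inside the groups into a frame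
with five groups: together they form a class missing the group `0`. -/
structure IsFrameBase (K : LinForm) (D : List (List (Piece (ZMod 5 × Bool)))) : Prop where
  isBase : IsBase K D
  length_eq : D.length = 8
  level : ∀ l : ZMod 5 × Bool, l.1 ≠ 0 → coversMod K (levelIntervals l D)
  difference : ∀ g : ZMod 5, g ≠ 0 → ∀ b b', coversMod K
    (differences (fun l l' => (l'.1 - l.1, l.2, l'.2) = (g, b, b')) D)

theorem card_filter_fst_ne {T X : Type*} [Fintype T] [Fintype X] [DecidableEq T] (i : T) :
    (Finset.univ.filter fun v : T × X => v.1 ≠ i).card =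
      (Fintype.card T - 1) * Fintype.card X := by
  have hprod :
      (Finset.univ.filter fun v : T × X => v.1 ≠ i) = ({i}ᶜ : Finset T) ×ˢ Finset.univ := by
    ext
    simp
  rw [hprod, Finset.card_product, Finset.card_compl, Finset.card_singleton, Finset.card_univ]

theorem IsFrameBase.hasFrame {k : ℕ} [NeZero k] {q : ℤ} {K : LinForm}
    {D : List (List (Piece (ZMod 5 × Bool)))} (h : IsFrameBase K D) (hq : 2 ≤ q)
    (hk : (k : ℤ) = evalAt q K) : HasFrame k (ZMod 5) := by
  let τ : ZMod k → ZMod 5 × Bool × ZMod k → ZMod 5 × Bool × ZMod k := fun c =>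
    Prod.map id (Prod.map id (· + c))
  let ρ : ZMod 5 → ZMod 5 × Bool × ZMod k → ZMod 5 × Bool × ZMod k := fun i => Prod.map (· + i) id
  have hτ : ∀ c, Bijective (τ c) := fun c =>
    bijective_id.prodMap (bijective_id.prodMap (Equiv.addRight c).bijective)
  have hρ : ∀ i, Bijective (ρ i) := fun i => (Equiv.addRight i).bijective.prodMap bijective_id
  have hcov : ∀ v ∈ (Finset.univ.filter fun v : ZMod 5 × Bool × ZMod k => v.1 ≠ 0),
      ∃ l x, (l.1, l.2, x) = v ∧ Covers q (levelIntervals l D) x := fun v hv =>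
    ⟨(v.1, v.2.1), v.2.2, rfl,
      covers_of_coversMod (h.level _ (Finset.mem_filter.1 hv).2) hk _⟩
  have hcard : k * D.length ≤
      (Finset.univ.filter fun v : ZMod 5 × Bool × ZMod k => v.1 ≠ 0).card := by
    rw [card_filter_fst_ne, h.length_eq, Fintype.card_prod, ZMod.card, ZMod.card, Fintype.card_bool]
    omega
  obtain ⟨f, hf, hadj⟩ := exists_isCyclicOn_of_isBase hq h.isBase hk (NeZero.pos k)
    (fun c => (hτ c).injective) (fun _ _ _ => rfl) hcard hcov
  refine ⟨fun i c => pushforward (ρ i) (pushforward (τ c) f), fun i c => ?_, ?_⟩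
  · have himage := (hf.pushforward (hτ c).injective).pushforward (hρ i).injective
    convert himage using 1
    ext v
    obtain ⟨w, rfl⟩ := (hρ i).surjective v
    obtain ⟨w, rfl⟩ := (hτ c).surjective w
    rw [(hρ i).injective.mem_set_image, (hτ c).injective.mem_set_image]
    simp [ρ, τ]
  · rintro ⟨i, b, x⟩ ⟨j, b', y⟩ hij
    have hcov := covers_of_coversMod (h.difference (j - i) (sub_ne_zero.2 (Ne.symm hij)) b b') hk
      (y - x)
    obtain ⟨⟨i', a⟩, ⟨j', a'⟩, hP, hadj⟩ := hadj _ x y hcov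
    simp only [Prod.mk.injEq, decide_eq_true_eq] at hP
    obtain ⟨hij', rfl, rfl⟩ := hP
    have hne : i' ≠ j' := fun heq => hij (sub_eq_zero.1 (by rw [← neg_sub, ← hij', heq]; simp))
    obtain ⟨c, hadj⟩ := hadj fun heq => hne (Prod.mk.inj heq).1
    refine ⟨i - i', c, ?_⟩
    have hi : ρ (i - i') (i', a, x) = (i, a, x) := by simp [ρ]
    have hj : ρ (i - i') (j', a', y) = (j, a', y) := by
      simp only [ρ, Prod.map, id, Prod.mk.injEq, and_true]
      linear_combination hij'
    rw [← hi, ← hj]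
    exact adj_pushforward (hρ _).injective hadj

end Frame

section Data

/-- The piece with its levels renamed by `g`. -/
def Piece.mapLevel {L L' : Type*} (g : L → L') : Piece L → Piece L'
  | zigzag la lb a b up n => zigzag (g la) (g lb) a b up n
  | point l a => point (g l) a

/-- Base cycles of length `4q + 5` for the blow-up of the triangle. -/
def triangleBaseOne : List (List (Piece (Fin 3))) :=
  [[.zigzag 1 0 (0, 2) (0, 0) true (0, 1), .point 2 (0, 1), .point 1 (1, 3), .point 2 (2, 3),
    .point 0 (0, 1), .point 2 (1, 3), .zigzag 1 2 (3, 3) (0, 3) false (-1, 1), .point 1 (2, 4),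
    .point 0 (4, 4)],
   [.zigzag 2 1 (0, 2) (0, 0) true (0, 1), .point 0 (2, 3), .point 1 (0, 1), .point 0 (1, 3),
    .zigzag 2 0 (3, 3) (0, 3) false (-1, 1), .point 2 (2, 4), .point 0 (3, 4), .point 2 (3, 4),
    .point 1 (4, 4)],
   [.zigzag 0 2 (0, 2) (0, 0) true (0, 1), .point 1 (2, 3),
    .zigzag 0 1 (3, 3) (0, 3) false (-1, 1), .point 0 (2, 4), .point 1 (3, 4), .point 2 (1, 2),
    .point 1 (1, 2), .point 0 (1, 2), .point 2 (4, 4)]]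

theorem isBlowUpBase_triangleBaseOne : IsBlowUpBase 3 (5, 4) triangleBaseOne := by
  constructor <;> decide +kernel

/-- Base cycles of length `4q + 3` for the blow-up of the triangle. -/
def triangleBaseThree : List (List (Piece (Fin 3))) :=
  [[.zigzag 0 1 (0, 0) (-1, 2) false (-1, 1), .point 0 (-1, 1), .point 1 (0, 1), .point 2 (-1, 1),
    .point 1 (1, 3), .point 2 (0, 1), .point 0 (0, 3), .zigzag 2 0 (2, 3) (-1, 3) false (-1, 1),
    .point 2 (1, 4)],
   [.zigzag 1 2 (0, 0) (-1, 2) false (-1, 1), .zigzag 0 1 (2, 3) (-1, 3) false (-1, 1),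
    .point 0 (1, 4), .point 2 (-1, 0), .point 1 (-1, 0), .point 0 (0, 2), .point 1 (0, 2),
    .point 0 (-1, 0), .point 2 (0, 2)],
   [.zigzag 2 0 (0, 0) (-1, 2) false (-1, 1), .point 1 (-1, 1), .point 0 (0, 1), .point 1 (0, 3),
    .point 2 (1, 3), .point 0 (1, 3), .point 2 (0, 3), .zigzag 1 2 (2, 3) (-1, 3) false (-1, 1),
    .point 1 (1, 4)]]

theorem isBlowUpBase_triangleBaseThree : IsBlowUpBase 3 (3, 4) triangleBaseThree := by
  constructor <;> decide +kernel

/-- Base cycles of length `4q + 1` for the blow-up of the pentagon. -/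
def pentagonBaseOne : List (List (Piece (Fin 5))) :=
  [[.zigzag 0 1 (0, 0) (-2, 2) false (-1, 1), .point 0 (-1, 1),
    .zigzag 1 2 (1, 3) (-1, 3) false (-1, 1), .point 3 (0, 2), .point 4 (0, 2), .point 3 (0, 4),
    .point 4 (-1, 2)],
   [.zigzag 1 2 (0, 0) (-2, 2) false (-1, 1), .point 1 (-1, 1),
    .zigzag 2 3 (1, 3) (-1, 3) false (-1, 1), .point 4 (0, 4), .point 0 (-1, 2), .point 1 (-1, 2),
    .point 0 (0, 2)],
   [.zigzag 2 3 (0, 0) (-2, 2) false (-1, 1), .point 4 (-1, 1), .point 0 (0, 3), .point 4 (0, 3),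
    .zigzag 0 1 (1, 3) (-1, 3) false (-1, 1), .point 2 (0, 4), .point 3 (-1, 2)],
   [.zigzag 3 4 (0, 0) (-2, 2) false (-1, 1), .point 3 (-1, 1),
    .zigzag 4 0 (1, 3) (-1, 3) false (-1, 1), .point 1 (0, 4), .point 2 (0, 2), .point 1 (0, 2),
    .point 2 (-1, 2)],
   [.zigzag 4 0 (0, 0) (-2, 2) false (-1, 1), .point 1 (0, 3), .point 2 (-1, 1), .point 3 (0, 3),
    .point 2 (0, 3), .zigzag 3 4 (1, 3) (-1, 3) false (-1, 1), .point 0 (0, 4)]]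

theorem isBlowUpBase_pentagonBaseOne : IsBlowUpBase 5 (1, 4) pentagonBaseOne := by
  constructor <;> decide +kernel

/-- Base cycles of length `4q + 7` for the blow-up of the pentagon. -/
def pentagonBaseThree : List (List (Piece (Fin 5))) :=
  [[.point 1 (1, 2), .zigzag 0 4 (4, 4) (0, 0) true (0, 1), .point 3 (4, 3), .point 4 (2, 3),
    .point 0 (4, 3), .point 1 (0, 1), .point 2 (1, 3), .zigzag 1 0 (0, 3) (1, 1) true (-1, 1),
    .point 4 (1, 2), .point 3 (5, 4), .point 2 (0, 2)],
   [.point 3 (0, 1), .point 4 (4, 3), .zigzag 0 1 (-1, 1) (5, 3) true (0, 1), .point 0 (-1, 0),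
    .zigzag 1 2 (-1, 2) (2, 2) true (-1, 1), .point 3 (1, 3), .point 2 (2, 3), .point 1 (4, 3),
    .point 2 (4, 3), .point 3 (2, 3), .point 2 (0, 1)],
   [.zigzag 2 3 (-1, 2) (2, 2) true (-1, 1), .point 4 (1, 3), .point 0 (2, 3), .point 4 (3, 3),
    .point 3 (3, 3), .zigzag 2 3 (-1, 1) (5, 3) true (0, 1), .point 4 (-1, 0), .point 0 (0, 2),
    .point 1 (5, 4), .point 2 (1, 2), .point 1 (-1, 0)],
   [.point 4 (0, 2), .point 0 (5, 4), .point 4 (5, 4), .point 3 (0, 2), .point 2 (-1, 0),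
    .zigzag 3 4 (-1, 2) (2, 2) true (-1, 1), .zigzag 3 4 (-1, 1) (5, 3) true (0, 1),
    .point 0 (1, 2), .point 1 (0, 2), .point 2 (5, 4), .point 3 (1, 2)],
   [.point 0 (1, 3), .point 1 (2, 3), .point 0 (0, 1), .point 1 (1, 3), .point 2 (3, 3),
    .zigzag 1 2 (-1, 1) (5, 3) true (0, 1), .point 3 (-1, 0),
    .zigzag 4 0 (-1, 2) (2, 2) true (-1, 1), .point 4 (0, 1), .point 0 (3, 3), .point 1 (3, 3)]]

theorem isBlowUpBase_pentagonBaseThree : IsBlowUpBase 5 (7, 4) pentagonBaseThree := by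
  constructor <;> decide +kernel

/-- Base cycles of length `11` for the blow-up of the pentagon. -/
def pentagonBaseEleven : List (List (Piece (Fin 5))) :=
  [[.point 0 (0, 0), .point 4 (8, 0), .point 3 (9, 0), .point 2 (10, 0), .point 3 (2, 0),
    .point 2 (5, 0), .point 3 (6, 0), .point 2 (4, 0), .point 1 (4, 0), .point 2 (6, 0),
    .point 1 (3, 0)],
   [.point 1 (0, 0), .point 0 (2, 0), .point 4 (5, 0), .point 3 (8, 0), .point 4 (6, 0),
    .point 3 (4, 0), .point 4 (7, 0), .point 3 (1, 0), .point 2 (1, 0), .point 3 (7, 0),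
    .point 2 (9, 0)],
   [.point 2 (0, 0), .point 1 (6, 0), .point 0 (4, 0), .point 4 (2, 0), .point 0 (7, 0),
    .point 4 (1, 0), .point 0 (10, 0), .point 4 (3, 0), .point 3 (3, 0), .point 4 (10, 0),
    .point 3 (5, 0)],
   [.point 3 (0, 0), .point 2 (7, 0), .point 1 (1, 0), .point 0 (6, 0), .point 1 (10, 0),
    .point 0 (3, 0), .point 1 (8, 0), .point 0 (9, 0), .point 4 (9, 0), .point 0 (8, 0),
    .point 4 (4, 0)],
   [.point 4 (0, 0), .point 3 (10, 0), .point 2 (3, 0), .point 1 (7, 0), .point 2 (8, 0),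
    .point 1 (9, 0), .point 2 (2, 0), .point 1 (5, 0), .point 0 (5, 0), .point 1 (2, 0),
    .point 0 (1, 0)]]

theorem isBlowUpBase_pentagonBaseEleven : IsBlowUpBase 5 (11, 0) pentagonBaseEleven := by
  constructor <;> decide +kernel

/-- Base cycles of length `k = 4q + 1` for a system of order `2k + 1`. -/
def singleBaseOne : List (List (Piece (Option Bool))) :=
  [[.zigzag (some false) (some false) (0, 0) (-2, 4) false (-1, 1),
    .zigzag (some false) (some true) (-1, 3) (2, 1) true (0, 1), .point (some false) (0, 4),
    .point (some true) (1, 0), .point none (0, 0)],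
   [.zigzag (some true) (some true) (2, 0) (0, 0) false (-1, 1), .point (some true) (1, 1),
    .point (some true) (1, 3), .point (some true) (2, 3),
    .zigzag (some false) (some true) (-1, 1) (0, 3) false (-1, 1), .point (some false) (-1, 2),
    .point (some false) (-1, 4)]]

theorem isRotationalBase_singleBaseOne :
    IsRotationalBase (1, 4) (1, 4) (2, 0) (-2, 2) singleBaseOne := by
  constructor <;> decide +kernel

/-- Base cycles of length `k = 4q + 3` for a system of order `2k + 1`. -/
def singleBaseThree : List (List (Piece (Option Bool))) :=
  [[.zigzag (some true) (some true) (-9, 2) (-11, 2) false (-1, 1), .point (some true) (-10, 3),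
    .point (some true) (-12, 1), .point (some false) (0, 4), .point (some true) (-10, 1),
    .point (some true) (-11, 1), .point (some false) (-1, 0),
    .zigzag (some false) (some false) (-2, 2) (0, 0) true (-1, 1), .point (some true) (-9, 4)],
   [.zigzag (some false) (some true) (-2, 3) (-8, 4) true (-1, 1), .point (some false) (1, 4),
    .point (some false) (-1, 2), .point none (0, 0),
    .zigzag (some true) (some false) (-9, 3) (-1, 4) false (-1, 1), .point (some true) (-10, 2),
    .point (some false) (-1, 3), .point (some false) (-1, 1), .point (some true) (-10, 4)]]

theorem isRotationalBase_singleBaseThree :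
    IsRotationalBase (3, 4) (3, 4) (1, 0) (0, 3) singleBaseThree := by
  constructor <;> decide +kernel

/-- Base cycles of length `k = 4q + 1` for a system of order `6k + 1`. -/
def tripleBaseOne : List (List (Piece (Option Bool))) :=
  [[.zigzag (some false) (some false) (3, 11) (-1, 3) false (-1, 1), .point (some false) (-1, 0),
    .point (some false) (1, 4), .zigzag (some false) (some true) (3, 10) (-2, 1) false (-1, 1),
    .point (some false) (2, 5), .point (some false) (2, 9), .point (some true) (1, 4)],
   [.zigzag (some false) (some true) (3, 7) (1, 12) false (0, 1), .point (some false) (2, 10),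
    .zigzag (some true) (some false) (1, 3) (1, 10) false (-1, 1), .point (some true) (0, 4),
    .point (some false) (2, 7)],
   [.zigzag (some false) (some true) (0, 1) (-2, 2) false (-1, 1), .point (some false) (-1, 2),
    .point (some true) (0, 3), .point (some false) (0, 4), .point (some true) (0, 9),
    .point (some true) (-2, 3), .zigzag (some true) (some true) (1, 9) (-3, 3) false (-1, 1)],
   [.zigzag (some true) (some true) (1, 5) (-2, 7) false (-1, 1), .point (some true) (0, 8),
    .point (some false) (1, 5), .point (some false) (3, 5),
    .zigzag (some true) (some false) (2, 4) (1, 7) false (-1, 1), .point (some false) (0, 2),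
    .point (some true) (-1, 7)],
   [.zigzag (some false) (some false) (-1, 4) (3, 8) true (-1, 1), .point (some false) (2, 11),
    .point (some false) (0, 3), .point (some true) (-1, 0), .point none (0, 0),
    .zigzag (some false) (some false) (4, 5) (0, 5) false (-1, 1), .point (some true) (-1, 1)],
   [.zigzag (some true) (some true) (-1, 8) (1, 10) true (0, 1), .point (some true) (-1, 3),
    .point (some true) (1, 11), .zigzag (some false) (some true) (0, 0) (-1, 9) false (-1, 1),
    .point (some true) (0, 10)]]

theorem isRotationalBase_tripleBaseOne :
    IsRotationalBase (1, 4) (3, 12) (3, 0) (-1, 1) tripleBaseOne := by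
  constructor <;> decide +kernel

/-- Base cycles of length `k = 4q + 3` for a system of order `6k + 1`. -/
def tripleBaseThree : List (List (Piece (Option Bool))) :=
  [[.point (some false) (4, 7), .zigzag (some false) (some false) (2, 3) (0, 1) true (0, 1),
    .point (some false) (1, 2), .point (some false) (4, 6), .point (some false) (7, 8),
    .point (some false) (2, 2), .zigzag (some false) (some true) (5, 8) (8, 9) true (-1, 1)],
   [.zigzag (some false) (some true) (9, 10) (7, 9) false (0, 1), .point (some false) (4, 5),
    .point (some true) (5, 8), .point (some true) (-1, 0), .point (some true) (7, 10),
    .zigzag (some false) (some false) (6, 9) (5, 5) true (-1, 1), .point (some true) (0, 1)],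
   [.zigzag (some true) (some true) (2, 2) (4, 8) false (0, 1), .point (some false) (6, 8),
    .point (some true) (1, 1), .point (some false) (0, 2), .point (some true) (2, 3),
    .zigzag (some false) (some true) (2, 4) (9, 11) true (-1, 1), .point (some false) (3, 5)],
   [.zigzag (some true) (some true) (5, 5) (2, 7) false (-1, 1), .point (some true) (6, 8),
    .point (some false) (3, 3), .zigzag (some true) (some false) (2, 4) (8, 9) true (0, 1),
    .point (some true) (4, 7), .point (some false) (8, 10), .point (some true) (3, 7)],
   [.zigzag (some false) (some false) (2, 5) (9, 11) true (0, 1), .point (some true) (-1, 1),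
    .point (some true) (8, 11), .zigzag (some true) (some false) (-2, 1) (0, 0) true (-1, 1),
    .point (some false) (-1, 1), .point none (0, 0), .point (some true) (7, 8)],
   [.zigzag (some false) (some true) (3, 7) (9, 10) true (-1, 1), .point (some true) (4, 5),
    .zigzag (some true) (some true) (2, 1) (3, 5) false (0, 1), .point (some true) (8, 10),
    .point (some false) (5, 7), .point (some true) (3, 4), .point (some false) (7, 9)]]

theorem isRotationalBase_tripleBaseThree :
    IsRotationalBase (3, 4) (9, 12) (3, 0) (6, 7) tripleBaseThree := by
  constructor <;> decide +kernel

/-- The base cycles of `D` with the two halves of every group interchanged. -/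
def swapHalves (D : List (List (Piece (ZMod 5 × Bool)))) : List (List (Piece (ZMod 5 × Bool))) :=
  D.map (List.map (Piece.mapLevel (Prod.map id not)))

/-- Half of the base cycles of length `4q + 1` for the frame with five groups. -/
def frameBaseOne : List (List (Piece (ZMod 5 × Bool))) :=
  [[.point (3, false) (0, 4), .point (2, true) (-1, 3), .point (4, false) (1, 2),
    .point (2, false) (-1, 2), .zigzag (1, true) (3, false) (0, 3) (0, 0) true (-1, 1),
    .point (1, true) (1, 2), .zigzag (4, true) (2, true) (0, 4) (0, 2) true (-1, 1)],
   [.zigzag (4, false) (1, true) (1, 1) (0, 2) false (-1, 1), .point (4, true) (-1, 1),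
    .point (2, true) (-1, 1), .point (4, true) (0, 1), .point (3, false) (-1, 2),
    .zigzag (2, false) (3, true) (-2, 2) (1, 3) true (-1, 1), .point (1, false) (0, 1)],
   [.zigzag (2, false) (3, false) (0, 0) (-2, 2) false (-1, 1), .point (4, false) (1, 3),
    .point (3, false) (-1, 1), .point (1, true) (0, 4), .point (3, false) (0, 3),
    .point (1, false) (-1, 1), .zigzag (2, false) (1, false) (2, 3) (-2, 1) false (-1, 1)],
   [.point (2, false) (0, 3), .point (1, false) (1, 1), .point (4, true) (0, 2),
    .point (2, false) (1, 3), .zigzag (1, true) (4, true) (-1, 4) (0, 0) true (-1, 1),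
    .point (3, true) (-1, 3), .zigzag (4, false) (3, true) (2, 2) (-2, 3) false (-1, 1)]]

theorem isFrameBase_frameBaseOne :
    IsFrameBase (1, 4) (frameBaseOne ++ swapHalves frameBaseOne) := by
  constructor <;> decide +kernel

/-- Half of the base cycles of length `4q + 3` for the frame with five groups. -/
def frameBaseThree : List (List (Piece (ZMod 5 × Bool))) :=
  [[.zigzag (3, false) (2, false) (3, 3) (1, 2) false (-1, 1), .point (3, false) (-1, 0),
    .point (2, false) (1, 1), .point (1, false) (1, 2),
    .zigzag (3, false) (1, false) (0, 2) (2, 2) true (0, 1), .point (3, false) (0, 1),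
    .point (1, true) (-1, 0)],
   [.point (4, false) (0, 2), .point (3, true) (2, 2), .point (4, false) (1, 4),
    .zigzag (3, false) (2, false) (-1, 1) (0, 0) true (0, 1),
    .zigzag (1, true) (2, false) (2, 1) (0, 3) false (-1, 1), .point (4, false) (-1, 0),
    .point (2, false) (-1, 0)],
   [.zigzag (4, false) (2, false) (0, 0) (1, 4) false (-1, 1), .point (4, false) (-1, 1),
    .point (1, false) (0, 1), .point (2, true) (0, 1), .point (3, true) (1, 2),
    .zigzag (4, true) (1, false) (1, 3) (1, 4) false (0, 1), .point (2, true) (1, 3)],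
   [.point (4, false) (-1, 2), .zigzag (3, true) (4, false) (3, 2) (-2, 2) false (-1, 1),
    .zigzag (1, true) (4, false) (0, 0) (0, 3) false (0, 1), .point (2, true) (2, 3),
    .point (1, false) (1, 1), .point (2, true) (2, 1), .point (3, false) (2, 3)]]

theorem isFrameBase_frameBaseThree :
    IsFrameBase (3, 4) (frameBaseThree ++ swapHalves frameBaseThree) := by
  constructor <;> decide +kernel

end Data

section OddLength

variable {k : ℕ}

theorem exists_eq_evalAt_of_odd (hk : Odd k) (h9 : 9 ≤ k) :
    ∃ q : ℤ, 2 ≤ q ∧ ((k : ℤ) = evalAt q (1, 4) ∨ (k : ℤ) = evalAt q (3, 4)) := by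
  simp only [evalAt_apply]
  obtain ⟨n, hn⟩ := hk
  obtain ⟨q, hq | hq⟩ := n.even_or_odd'
  · exact ⟨q, by omega, .inl (by omega)⟩
  · exact ⟨q, by omega, .inr (by omega)⟩

theorem hasBlowUp_three (hk : Odd k) (h11 : 11 ≤ k) : HasBlowUp 3 k := by
  have : NeZero k := ⟨by omega⟩
  obtain ⟨q, hq, hkq | hkq⟩ := exists_eq_evalAt_of_odd hk (by omega)
  · rw [evalAt_apply] at hkq
    refine isBlowUpBase_triangleBaseOne.hasBlowUp (q := q - 1) (by omega) ?_
    rw [hkq, evalAt_apply]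
    ring
  · exact isBlowUpBase_triangleBaseThree.hasBlowUp hq hkq

theorem hasBlowUp_five (hk : Odd k) (h9 : 9 ≤ k) : HasBlowUp 5 k := by
  have : NeZero k := ⟨by omega⟩
  obtain ⟨q, hq, hkq | hkq⟩ := exists_eq_evalAt_of_odd hk h9
  · exact isBlowUpBase_pentagonBaseOne.hasBlowUp hq hkq
  · obtain rfl | hq3 := hq.eq_or_lt
    · exact isBlowUpBase_pentagonBaseEleven.hasBlowUp le_rfl hkq
    · refine isBlowUpBase_pentagonBaseThree.hasBlowUp (q := q - 1) (by omega) ?_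
      rw [hkq, evalAt_apply, evalAt_apply]
      ring

theorem hasFrame_five (hk : Odd k) (h9 : 9 ≤ k) : HasFrame k (ZMod 5) := by
  have : NeZero k := ⟨by omega⟩
  obtain ⟨q, hq, hkq | hkq⟩ := exists_eq_evalAt_of_odd hk h9
  · exact isFrameBase_frameBaseOne.hasFrame hq hkq
  · exact isFrameBase_frameBaseThree.hasFrame hq hkq

theorem hasARCS_zmod (hk : Odd k) (h9 : 9 ≤ k) : HasARCS k (ZMod k) := by
  have : NeZero k := ⟨by omega⟩
  obtain ⟨q, hq, hkq | hkq⟩ := exists_eq_evalAt_of_odd hk h9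
  · refine isRotationalBase_singleBaseOne.hasARCS hq hkq (by omega) hkq ?_
    have htwo : (evalAt q (2, 0) : ZMod k) = (2 : ℕ) := by simp [evalAt_apply]
    rw [htwo, ZMod.addOrderOf_coe _ (by omega), hk.coprime_two_right, Nat.div_one]
  · refine isRotationalBase_singleBaseThree.hasARCS hq hkq (by omega) hkq ?_
    rw [evalAt_one_zero, Int.cast_one, ZMod.addOrderOf_one]

theorem hasARCS_zmod_three_mul (hk : Odd k) (h9 : 9 ≤ k) : HasARCS k (ZMod (3 * k)) := by
  have : NeZero (3 * k) := ⟨by omega⟩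
  have horder : ∀ q, addOrderOf (evalAt q (3, 0) : ZMod (3 * k)) = k := by
    intro q
    have hthree : (evalAt q (3, 0) : ZMod (3 * k)) = (3 : ℕ) := by simp [evalAt_apply]
    rw [hthree, ZMod.addOrderOf_coe _ (by omega), Nat.gcd_mul_right_left,
      Nat.mul_div_cancel_left _ three_pos]
  obtain ⟨q, hq, hkq | hkq⟩ := exists_eq_evalAt_of_odd hk h9
  · refine isRotationalBase_tripleBaseOne.hasARCS hq hkq (by omega) ?_ (horder q)
    rw [Nat.cast_mul, hkq, evalAt_apply, evalAt_apply]
    push_cast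
    ring
  · refine isRotationalBase_tripleBaseThree.hasARCS hq hkq (by omega) ?_ (horder q)
    rw [Nat.cast_mul, hkq, evalAt_apply, evalAt_apply]
    push_cast
    ring

end OddLength

section FrameRecursion

variable {k : ℕ} {T T' : Type}

theorem eq_of_affine_eq {R : Type*} [CommRing R] {i j c d c' d' : R} (hij : IsUnit (i - j))
    (hi : c + d * i = c' + d' * i) (hj : c + d * j = c' + d' * j) : (c, d) = (c', d') := by
  obtain rfl : d = d' := hij.mul_right_cancel (by linear_combination hi - hj)
  rw [add_right_cancel hi]

theorem isUnit_natCast_sub_natCast {g m : ℕ} (hg : ∀ d, 0 < d → d < g → d.Coprime m) {i j : Fin g}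
    (hij : i ≠ j) : IsUnit ((i : ℕ) - (j : ℕ) : ZMod m) := by
  wlog hlt : j < i generalizing i j
  · rw [← neg_sub]
    exact (this hij.symm (lt_of_le_of_ne (not_lt.1 hlt) hij)).neg
  rw [← Nat.cast_sub hlt.le, ZMod.isUnit_iff_coprime]
  exact hg _ (by omega) (by omega)

theorem image_map_val_setOf_fst_ne {X : Type*} {S : Set T} {i : S} :
    Prod.map Subtype.val id '' {v : S × X | v.1 ≠ i} = {v : T × X | v.1 ∈ S ∧ v.1 ≠ i} := by
  ext v
  constructor
  · rintro ⟨w, hw, rfl⟩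
    exact ⟨w.1.2, Subtype.coe_injective.ne hw⟩
  · rintro ⟨hmem, hne⟩
    exact ⟨(⟨v.1, hmem⟩, v.2), fun heq => hne (congrArg Subtype.val heq), rfl⟩

namespace HasFrame

theorem equiv (h : HasFrame k T) (e : T ≃ T') : HasFrame k T' := by
  obtain ⟨F, hF, hcov⟩ := h
  let E : T × Bool × ZMod k ≃ T' × Bool × ZMod k := e.prodCongr (Equiv.refl _)
  refine ⟨fun i c => pushforward E (F (e.symm i) c), fun i c => ?_, fun a b hab => ?_⟩
  · convert (hF (e.symm i) c).pushforward E.injective using 1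
    ext v
    obtain ⟨w, rfl⟩ := E.surjective v
    rw [E.injective.mem_set_image]
    exact e.eq_symm_apply.symm.not
  · obtain ⟨i, c, hadj⟩ := hcov (E.symm a) (E.symm b) (e.symm.injective.ne hab)
    refine ⟨e i, c, ?_⟩
    simpa using adj_pushforward E.injective hadj

theorem of_card_eq [Finite T] [Finite T'] (h : HasFrame k T) (hcard : Nat.card T = Nat.card T') :
    HasFrame k T' :=
  h.equiv ((Finite.equivFin T).trans ((finCongr hcard).trans (Finite.equivFin T').symm))

theorem of_subsingleton [Subsingleton T] : HasFrame k T :=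
  ⟨fun _ _ => id, fun _ _ => ⟨fun _ hv => absurd (Subsingleton.elim _ _) hv, fun _ _ => rfl⟩,
    fun _ _ hab => absurd (Subsingleton.elim _ _) hab⟩

-- The class missing the group `i` is the union of the classes missing `i` of the frames on the
-- blocks through `i`.
theorem of_pbd {β : Type*} {B : β → Set T} (hk : 0 < k)
    (hpair : ∀ i j, i ≠ j → ∃ b, i ∈ B b ∧ j ∈ B b)
    (hinter : Pairwise fun b b' => (B b ∩ B b').Subsingleton)
    (hB : ∀ b, HasFrame k (B b)) : HasFrame k T := by
  choose F hF hcov using hB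
  let e : ∀ b, B b × Bool × ZMod k → T × Bool × ZMod k := fun b => Prod.map Subtype.val id
  have he : ∀ b, Injective (e b) := fun b => Subtype.val_injective.prodMap injective_id
  have hclass : ∀ i c, ∃ f, IsCyclicOn k {v | v.1 ≠ i} f ∧
      ∀ b (hi : i ∈ B b), stepGraph (pushforward (e b) (F b ⟨i, hi⟩ c)) ≤ stepGraph f := by
    intro i c
    obtain ⟨f, hf, hle⟩ := IsCyclicOn.exists_iUnion hk
      (S := fun b : {b // i ∈ B b} => {v : T × Bool × ZMod k | v.1 ∈ B b ∧ v.1 ≠ i})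
      (fun b b' hbb' => Set.disjoint_left.2 fun v hv hv' => hv.2 <|
        hinter (Subtype.coe_injective.ne hbb') ⟨hv.1, hv'.1⟩ ⟨b.2, b'.2⟩)
      (fun b => image_map_val_setOf_fst_ne (i := ⟨i, b.2⟩) ▸ (hF b ⟨i, b.2⟩ c).pushforward (he b))
    refine ⟨f, ?_, fun b hi => hle ⟨b, hi⟩⟩
    convert hf using 1
    ext v
    simp only [Set.mem_ofPred_eq, Set.mem_iUnion, exists_and_right, Subtype.exists]
    exact ⟨fun hne => ⟨(hpair i v.1 (Ne.symm hne)).imp fun b hb => ⟨hb.1, hb.2⟩, hne⟩, And.right⟩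
  choose f hf hle using hclass
  refine ⟨f, hf, fun a a' hne => ?_⟩
  obtain ⟨b, ha, ha'⟩ := hpair _ _ hne
  obtain ⟨i, c, hadj⟩ := hcov b (⟨a.1, ha⟩, a.2) (⟨a'.1, ha'⟩, a'.2)
    fun heq => hne (congrArg Subtype.val heq)
  exact ⟨i, c, hle i c b i.2 (adj_pushforward (he b) hadj)⟩

section Transversal

variable {g m : ℕ}

-- The blocks are the groups and the graphs of the affine functions `j ↦ c + d * j`.
theorem sigma_of_forall_line (hk : 0 < k) (hg : ∀ d, 0 < d → d < g → d.Coprime m)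
    {S : Fin g → Finset (ZMod m)} (hgroup : ∀ j, HasFrame k (S j))
    (hline : ∀ c d : ZMod m, HasFrame k {p : Σ j, S j | (p.2 : ZMod m) = c + d * (p.1 : ℕ)}) :
    HasFrame k (Σ j, S j) := by
  let B : Fin g ⊕ ZMod m × ZMod m → Set (Σ j, S j) :=
    Sum.elim (fun j => {p | p.1 = j}) fun l => {p | (p.2 : ZMod m) = l.1 + l.2 * (p.1 : ℕ)}
  have hcross : ∀ j l, (B (.inl j) ∩ B (.inr l)).Subsingleton := by
    rintro j ⟨c, d⟩ ⟨_, x⟩ ⟨rfl, hx⟩ ⟨_, y⟩ ⟨rfl, hy⟩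
    exact congrArg _ (Subtype.ext (hx.trans hy.symm))
  refine of_pbd (B := B) hk ?_ ?_ (Sum.rec (fun j => ?_) fun l => hline l.1 l.2)
  · rintro ⟨i, x⟩ ⟨j, y⟩ hne
    obtain rfl | hij := eq_or_ne i j
    · exact ⟨.inl i, rfl, rfl⟩
    · obtain ⟨u, hu⟩ := (isUnit_natCast_sub_natCast hg hij).exists_right_inv
      refine ⟨.inr (x - (x - y) * u * (i : ℕ), (x - y) * u), ?_, ?_⟩
      · change (x : ZMod m) = _
        ring
      · change (y : ZMod m) = _
        linear_combination ((x : ZMod m) - y) * hu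
  · rintro (j | l) (j' | l') hne
    · rintro p ⟨rfl, rfl⟩
      exact absurd rfl hne
    · exact hcross j l'
    · rw [Set.inter_comm]
      exact hcross j' l
    · rintro ⟨i, x⟩ ⟨hx, hx'⟩ ⟨j, y⟩ ⟨hy, hy'⟩
      obtain rfl | hij := eq_or_ne i j
      · exact hcross i l ⟨rfl, hx⟩ ⟨rfl, hy⟩
      · exact absurd (congrArg _ (eq_of_affine_eq (isUnit_natCast_sub_natCast hg hij)
          (hx.symm.trans hx') (hy.symm.trans hy'))) hne
  · exact (hgroup j).equiv (Equiv.sigmaSubtype (β := fun j => S j) j).symm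

theorem sum (hk : 0 < k) (hm : 0 < m) (hg4 : 4 ≤ g) (hg : ∀ d, 0 < d → d < g → d.Coprime m)
    {r : Fin g → ℕ} (hr : ∀ j, r j ≤ m) (hr4 : ∀ j : Fin g, (j : ℕ) < 4 → r j = m)
    (hgroup : ∀ j, HasFrame k (Fin (r j))) (hblock : ∀ s, 4 ≤ s → s ≤ g → HasFrame k (Fin s)) :
    HasFrame k (Fin (∑ j, r j)) := by
  have : NeZero m := ⟨hm.ne'⟩
  have hsubset : ∀ j, ∃ S : Finset (ZMod m), S.card = r j := fun j => by
    have hrj := hr j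
    obtain ⟨S, -, hS⟩ := Finset.exists_subset_card_eq
      (by rwa [Finset.card_univ, ZMod.card] : r j ≤ (Finset.univ : Finset (ZMod m)).card)
    exact ⟨S, hS⟩
  choose S hS using hsubset
  refine of_card_eq (T := Σ j, S j) (sigma_of_forall_line hk hg (fun j => ?_) fun c d => ?_) ?_
  · exact (hgroup j).of_card_eq (by simp [hS])
  · let line := {p : Σ j, S j | (p.2 : ZMod m) = c + d * (p.1 : ℕ)}
    have hfull : ∀ j : Fin g, (j : ℕ) < 4 → ∀ x, x ∈ S j := fun j hj x => by
      rw [(Finset.card_eq_iff_eq_univ _).1 ((hS j).trans ((hr4 j hj).trans (ZMod.card m).symm))]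
      exact Finset.mem_univ x
    have hge : 4 ≤ Nat.card line := by
      let point : Fin 4 → line := fun j =>
        ⟨⟨j.castLE hg4, c + d * (j : ℕ), hfull _ j.2 _⟩, rfl⟩
      have hinj : Injective point := fun i j hij =>
        Fin.castLE_injective hg4 (congrArg (fun p => p.1.1) hij)
      simpa using Nat.card_le_card_of_injective point hinj
    have hle : Nat.card line ≤ g := by
      have hinj : Injective fun p : line => p.1.1 := by
        rintro ⟨⟨i, x⟩, hx⟩ ⟨⟨j, y⟩, hy⟩ hij
        obtain rfl : i = j := hij
        exact Subtype.ext (congrArg (Sigma.mk i) (Subtype.ext (hx.trans hy.symm)))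
      simpa using Nat.card_le_card_of_injective _ hinj
    exact (hblock _ hge hle).of_card_eq (Nat.card_fin _)
  · simp [hS]

end Transversal

end HasFrame

end FrameRecursion

section Filling

variable {k : ℕ}

theorem IsCyclicOn.exists_union {V : Type*} {S S' : Set V} {f f' : V → V} (hk : 0 < k)
    (hdisj : Disjoint S S') (h : IsCyclicOn k S f) (h' : IsCyclicOn k S' f') :
    ∃ g, IsCyclicOn k (S ∪ S') g ∧ stepGraph f ≤ stepGraph g ∧ stepGraph f' ≤ stepGraph g := by
  obtain ⟨g, hg, hle⟩ := IsCyclicOn.exists_iUnion (F := fun b => cond b f f') hk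
    (pairwise_disjoint_on_bool.2 hdisj) (Bool.rec h' h)
  exact ⟨g, Set.union_eq_iUnion ▸ hg, hle true, hle false⟩

variable {T : Type}

/-- The copy, on the group `i` of a frame, of the points of a smaller cycle system, with the point
at infinity kept fixed. -/
def groupPoint {X : Type} (i : T) : Option (Bool × X) → Option (Bool × T × X) :=
  Option.map fun v => (v.1, i, v.2)

/-- A point of a frame as a point of the filled cycle system. -/
def framePoint {X : Type} (v : T × Bool × X) : Option (Bool × T × X) :=
  some (v.2.1, v.1, v.2.2)

theorem groupPoint_injective {X : Type} (i : T) : Injective (groupPoint (X := X) i) :=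
  Option.map_injective fun v w h => by simpa [Prod.ext_iff] using h

theorem framePoint_injective {X : Type} : Injective (framePoint (T := T) (X := X)) :=
  fun v w h => by simp_all [framePoint, Prod.ext_iff]

theorem image_framePoint_setOf_fst_ne {X : Type} (i : T) :
    framePoint '' {v : T × Bool × X | v.1 ≠ i} = (Set.range (groupPoint i))ᶜ := by
  ext v
  constructor
  · rintro ⟨⟨j, b, x⟩, hj, rfl⟩ ⟨_ | ⟨b', x'⟩, hu⟩
    · cases hu
    · cases hu
      exact hj rfl
  · intro hv
    rcases v with _ | ⟨b, j, x⟩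
    · exact absurd ⟨none, rfl⟩ hv
    · refine ⟨(j, b, x), ?_, rfl⟩
      rintro rfl
      exact hv ⟨some (b, x), rfl⟩

theorem iUnion_image_groupPoint_range (X : Type) :
    ⋃ i : T, groupPoint i '' Set.range (fun x : X => some (false, x)) =
      Set.range fun x : T × X => some (false, x) := by
  ext v
  simp only [Set.mem_iUnion, ← Set.range_comp, Set.mem_range, comp_apply]
  exact ⟨fun ⟨i, x, hx⟩ => ⟨(i, x), hx⟩, fun ⟨x, hx⟩ => ⟨x.1, x.2, hx⟩⟩

theorem pairwise_disjoint_image_groupPoint_range (X : Type) :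
    Pairwise (Disjoint on fun i : T => groupPoint i '' Set.range fun x : X => some (false, x)) := by
  refine fun i j hij => Set.disjoint_left.2 ?_
  rintro _ ⟨_, ⟨x, rfl⟩, rfl⟩ ⟨_, ⟨y, rfl⟩, h⟩
  cases h
  exact hij rfl

theorem HasFrame.hasARCS [NeZero k] (hF : HasFrame k T) (h : HasARCS k (ZMod k)) :
    HasARCS k (T × ZMod k) := by
  obtain ⟨p, F, H, hFcyc, hHcyc, hcov⟩ := h
  obtain ⟨G, hG, hGcov⟩ := hF
  have hk : 0 < k := NeZero.pos k
  have hclass : ∀ i c, ∃ f, IsCyclicOn k {groupPoint i (p c)}ᶜ f ∧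
      stepGraph (pushforward (groupPoint i) (F c)) ≤ stepGraph f ∧
      stepGraph (pushforward framePoint (G i c)) ≤ stepGraph f := by
    intro i c
    have hgroup := (hFcyc c).pushforward (groupPoint_injective i)
    have hframe := (hG i c).pushforward framePoint_injective
    rw [image_framePoint_setOf_fst_ne] at hframe
    have hunion : groupPoint i '' {p c}ᶜ ∪ (Set.range (groupPoint i))ᶜ = {groupPoint i (p c)}ᶜ := by
      rw [Set.image_compl_eq_range_sdiff_image (groupPoint_injective i), Set.image_singleton,
        Set.sdiff_eq_compl_inter, Set.union_comm, Set.union_inter_distrib_left,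
        Set.compl_union_self, Set.inter_univ, Set.union_eq_right, Set.compl_subset_compl,
        Set.singleton_subset_iff]
      exact Set.mem_range_self _
    exact hunion ▸ IsCyclicOn.exists_union hk
      (Set.disjoint_compl_right_iff_subset.2 (Set.image_subset_range _ _)) hgroup hframe
  choose f hf hgroup hframe using hclass
  obtain ⟨g, hg, hle⟩ := IsCyclicOn.exists_iUnion hk
    (pairwise_disjoint_image_groupPoint_range (ZMod k))
    fun i => hHcyc.pushforward (groupPoint_injective (T := T) i)
  have hcov_group : ∀ i a b, a ≠ b → (∃ j : T × ZMod k, (stepGraph (f j.1 j.2)).Adj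
      (groupPoint i a) (groupPoint i b)) ∨ (stepGraph g).Adj (groupPoint i a) (groupPoint i b) := by
    intro i a b hab
    refine (hcov a b hab).imp (fun ⟨c, hadj⟩ => ⟨(i, c), hgroup i c ?_⟩) fun hadj => hle i ?_
    all_goals exact adj_pushforward (groupPoint_injective i) hadj
  refine ⟨_, fun j => f j.1 j.2, g, fun j => hf j.1 j.2, iUnion_image_groupPoint_range _ ▸ hg, ?_⟩
  rintro (_ | ⟨b, i, x⟩) (_ | ⟨b', j, y⟩) hne
  · exact absurd rfl hne
  · exact hcov_group j none (some (b', y)) nofun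
  · exact hcov_group i (some (b, x)) none nofun
  · obtain rfl | hij := eq_or_ne i j
    · exact hcov_group i (some (b, x)) (some (b', y)) fun h => hne (congrArg (groupPoint i) h)
    · obtain ⟨l, c, hadj⟩ := hGcov (i, b, x) (j, b', y) hij
      exact .inl ⟨(l, c), hframe l c (adj_pushforward framePoint_injective hadj)⟩

end Filling

section CycleFrame

variable {k t : ℕ} {P T : Type}

theorem HasBlowUp.exists_isCyclicOn {l : List P} (h : HasBlowUp l.length k) (hl : l.Nodup) :
    ∃ f : ZMod k → P × ZMod k → P × ZMod k, (∀ c, IsCyclicOn k {v | v.1 ∈ l} (f c)) ∧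
      ∀ p ∈ cyclicPairs l, ∀ x y, ∃ c, (stepGraph (f c)).Adj (p.1, x) (p.2, y) := by
  obtain ⟨f, hf, hcov⟩ := h
  let e : Fin l.length × ZMod k → P × ZMod k := Prod.map l.get id
  have he : Injective e := (List.nodup_iff_injective_get.1 hl).prodMap injective_id
  have himage : e '' Set.univ = {v | v.1 ∈ l} := by
    ext v
    simp [e, List.mem_iff_get]
  have hpairs : cyclicPairs l =
      (cyclicPairs (List.finRange l.length)).map (Prod.map l.get l.get) := by
    rw [← cyclicPairs_map, List.map_get_finRange]
  refine ⟨fun c => pushforward e (f c), fun c => himage ▸ (hf c).pushforward he, ?_⟩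
  rw [hpairs, List.forall_mem_map]
  exact fun p hp x y => (hcov p hp x y).imp fun c hadj => adj_pushforward he hadj

theorem exists_isCyclicOn_of_hasBlowUp (hk : 0 < k) {cs : List (List P)} (hcs : cs.flatten.Nodup)
    (h : ∀ l ∈ cs, HasBlowUp l.length k) :
    ∃ f : ZMod k → P × ZMod k → P × ZMod k, (∀ c, IsCyclicOn k {v | v.1 ∈ cs.flatten} (f c)) ∧
      ∀ l ∈ cs, ∀ p ∈ cyclicPairs l, ∀ x y, ∃ c, (stepGraph (f c)).Adj (p.1, x) (p.2, y) := by
  choose! F hF hcov using fun l hl =>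
    (h l hl).exists_isCyclicOn ((List.nodup_flatten.1 hcs).1 l hl)
  have hdisj : Pairwise (Disjoint on fun l : {l // l ∈ cs} => {v : P × ZMod k | v.1 ∈ l.1}) :=
    fun l l' hne => (pairwise_disjoint_of_nodup_flatten hcs hne).preimage Prod.fst
  choose f hf hle using fun c => IsCyclicOn.exists_iUnion hk hdisj fun l => hF l.1 l.2 c
  have hunion : (⋃ l : {l // l ∈ cs}, {v : P × ZMod k | v.1 ∈ l.1}) = {v | v.1 ∈ cs.flatten} := by
    ext v
    simp
  refine ⟨f, fun c => hunion ▸ hf c, fun l hl p hp x y => ?_⟩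
  exact (hcov l hl p hp x y).imp fun c hadj => hle c ⟨l, hl⟩ hadj

/-- A frame with groups of size two and cycles of length three or five: `C i` lists disjoint cycles
spanning the points outside the group `i`, and any two points from different groups are consecutive
on some cycle. -/
structure IsCycleFrame (C : T → List (List (T × Bool))) : Prop where
  length_eq : ∀ i, ∀ l ∈ C i, l.length = 3 ∨ l.length = 5
  nodup : ∀ i, (C i).flatten.Nodup
  mem_flatten : ∀ i v, v ∈ (C i).flatten ↔ v.1 ≠ i
  exists_mem : ∀ u v, u.1 ≠ v.1 →
    ∃ i, ∃ l ∈ C i, (u, v) ∈ cyclicPairs l ∨ (v, u) ∈ cyclicPairs l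

theorem IsCycleFrame.hasFrame {C : T → List (List (T × Bool))} (hC : IsCycleFrame C) (hk : 0 < k)
    (h3 : HasBlowUp 3 k) (h5 : HasBlowUp 5 k) : HasFrame k T := by
  have hblow : ∀ i, ∀ l ∈ C i, HasBlowUp l.length k := fun i l hl =>
    (hC.length_eq i l hl).elim (fun h => h ▸ h3) fun h => h ▸ h5
  choose f hf hcov using fun i => exists_isCyclicOn_of_hasBlowUp hk (hC.nodup i) (hblow i)
  let e : (T × Bool) × ZMod k ≃ T × Bool × ZMod k := Equiv.prodAssoc T Bool (ZMod k)
  refine ⟨fun i c => pushforward e (f i c), fun i c => ?_, fun a b hab => ?_⟩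
  · convert (hf i c).pushforward e.injective using 1
    ext v
    obtain ⟨w, rfl⟩ := e.surjective v
    rw [e.injective.mem_set_image]
    exact (hC.mem_flatten i w.1).symm
  · obtain ⟨i, l, hl, hpair | hpair⟩ := hC.exists_mem (a.1, a.2.1) (b.1, b.2.1) hab
    · obtain ⟨c, hadj⟩ := hcov i l hl _ hpair a.2.2 b.2.2
      exact ⟨i, c, adj_pushforward e.injective hadj⟩
    · obtain ⟨c, hadj⟩ := hcov i l hl _ hpair b.2.2 a.2.2
      exact ⟨i, c, (adj_pushforward e.injective hadj).symm⟩

/-- The number whose binary digits mark the codes of the entries of the lists in `ls`; two sets are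
compared by comparing such numbers. -/
def bitmask {α : Type*} (code : α → ℕ) (ls : List (List α)) : ℕ :=
  ls.foldr (fun l m => l.foldr (fun a m => 2 ^ code a ||| m) 0 ||| m) 0

theorem testBit_bitmask {α : Type*} (code : α → ℕ) (ls : List (List α)) (n : ℕ) :
    (bitmask code ls).testBit n ↔ ∃ l ∈ ls, ∃ a ∈ l, code a = n := by
  have hlist : ∀ l : List α, (l.foldr (fun a m => 2 ^ code a ||| m) 0).testBit n ↔
      ∃ a ∈ l, code a = n := by
    intro l
    induction l with
    | nil => simp
    | cons a l ih => simp [Nat.testBit_two_pow, ih]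
  induction ls with
  | nil => simp [bitmask]
  | cons l ls ih =>
    rw [bitmask, List.foldr_cons, Nat.testBit_or, Bool.or_eq_true, hlist, List.exists_mem_cons_iff]
    exact or_congr_right ih

theorem mem_flatten_of_bitmask_eq {α : Type*} {code : α → ℕ} (hcode : Injective code)
    {ls ls' : List (List α)} (h : bitmask code ls = bitmask code ls') {a : α}
    (ha : a ∈ ls.flatten) : a ∈ ls'.flatten := by
  obtain ⟨l, hl, hal⟩ := List.mem_flatten.1 ha
  have hbit := (testBit_bitmask code ls (code a)).2 ⟨l, hl, a, hal, rfl⟩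
  obtain ⟨l', hl', b, hb, hcode_eq⟩ := (testBit_bitmask code ls' (code a)).1 (h ▸ hbit)
  exact List.mem_flatten.2 ⟨l', hl', hcode hcode_eq ▸ hb⟩

/-- The number `2 j + b` of the point `(j, b)`. -/
def pointCode (v : Fin t × Bool) : ℕ :=
  2 * v.1 + v.2.toNat

theorem pointCode_injective : Injective (pointCode (t := t)) := by
  rintro ⟨j, b⟩ ⟨j', b'⟩ h
  have hb := b.toNat_lt
  have hb' := b'.toNat_lt
  simp only [pointCode] at h
  have hj : (j : ℕ) = j' := by omega
  have hbit : b.toNat = b'.toNat := by omega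
  exact Prod.ext (Fin.ext hj) (by cases b <;> cases b' <;> simp_all)

theorem pointCode_lt (v : Fin t × Bool) : pointCode v < 2 * t := by
  have hb := v.2.toNat_lt
  have hj := v.1.isLt
  simp only [pointCode]
  omega

/-- The code of a pair of points, in base `2 t`. -/
def pairCode (p : (Fin t × Bool) × (Fin t × Bool)) : ℕ :=
  2 * t * pointCode p.1 + pointCode p.2

theorem pairCode_injective : Injective (pairCode (t := t)) := by
  intro p q h
  have hdiv : pointCode p.1 = pointCode q.1 := by
    have hpos : 0 < 2 * t := (Nat.zero_le _).trans_lt (pointCode_lt p.1)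
    simpa [pairCode, Nat.mul_add_div hpos, Nat.div_eq_of_lt, pointCode_lt]
      using congrArg (· / (2 * t)) h
  have hmod : pointCode p.2 = pointCode q.2 := by
    simpa [pairCode, Nat.mul_add_mod, Nat.mod_eq_of_lt, pointCode_lt] using congrArg (· % (2 * t)) h
  exact Prod.ext (pointCode_injective hdiv) (pointCode_injective hmod)

/-- The list of all points. -/
def allPoints (t : ℕ) : List (Fin t × Bool) :=
  List.finRange t ×ˢ [false, true]

theorem mem_allPoints (v : Fin t × Bool) : v ∈ allPoints t :=
  List.mem_product.2 ⟨List.mem_finRange _, by cases v.2 <;> decide⟩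

/-- The points outside the group `i`. -/
def pointsOff (i : Fin t) : List (Fin t × Bool) :=
  (allPoints t).filter fun v => v.1 ≠ i

theorem mem_pointsOff {i : Fin t} {v : Fin t × Bool} : v ∈ pointsOff i ↔ v.1 ≠ i := by
  simp [pointsOff, mem_allPoints]

/-- A form of `IsCycleFrame` that the kernel can evaluate. -/
structure IsCheckedFrame (C : Fin t → List (List (Fin t × Bool))) : Prop where
  length_eq : ∀ i, ∀ l ∈ C i, l.length = 3 ∨ l.length = 5
  length_flatten_le : ∀ i, (C i).flatten.length ≤ (t - 1) * 2
  points : ∀ i, bitmask pointCode [pointsOff i] = bitmask pointCode (C i)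
  pairs : bitmask pairCode
      ((allPoints t).map fun u => (pointsOff u.1).map (Prod.mk u)) =
    bitmask pairCode
      ((List.finRange t).map fun i => (C i).flatMap fun l =>
        cyclicPairs l ++ (cyclicPairs l).map Prod.swap)

instance (C : Fin t → List (List (Fin t × Bool))) : Decidable (IsCheckedFrame C) :=
  decidable_of_iff (_ ∧ _ ∧ _ ∧ _)
    ⟨fun ⟨h₁, h₂, h₃, h₄⟩ => ⟨h₁, h₂, h₃, h₄⟩, fun ⟨h₁, h₂, h₃, h₄⟩ => ⟨h₁, h₂, h₃, h₄⟩⟩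

theorem IsCheckedFrame.isCycleFrame {C : Fin t → List (List (Fin t × Bool))}
    (h : IsCheckedFrame C) : IsCycleFrame C := by
  have hclass : ∀ i, (C i).flatten.Nodup ∧
      (C i).flatten.toFinset = Finset.univ.filter fun v => v.1 ≠ i := by
    refine fun i => nodup_and_toFinset_eq_of_subset (fun v hv => ?_) ?_
    · rw [List.mem_toFinset]
      refine mem_flatten_of_bitmask_eq pointCode_injective (h.points i) ?_
      rw [List.flatten_singleton, mem_pointsOff]
      exact (Finset.mem_filter.1 hv).2
    · rw [card_filter_fst_ne, Fintype.card_fin, Fintype.card_bool]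
      exact h.length_flatten_le i
  refine ⟨h.length_eq, fun i => (hclass i).1, fun i v => ?_, fun u v huv => ?_⟩
  · rw [← List.mem_toFinset, (hclass i).2, Finset.mem_filter]
    simp
  · have hmem := mem_flatten_of_bitmask_eq pairCode_injective h.pairs (a := (u, v)) ?_
    · simpa using hmem
    · exact List.mem_flatten.2 ⟨_, List.mem_map_of_mem (mem_allPoints u),
        List.mem_map_of_mem (mem_pointsOff.2 huv.symm)⟩

end CycleFrame

section SmallFrames

variable {k t : ℕ}

/-- A frame with `t` groups given by base classes. The groups are split into consecutive blocks of
`g` and a last block that may be shorter; the `n`-th base class misses the first group of the `n`-th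
block and is developed by the cyclic shift of the blocks of full length. The number `2 j + b` stands
for the point `(j, b)`. -/
structure FrameTable where
  t : ℕ
  g : ℕ
  base : List (List (List ℕ))

namespace FrameTable

/-- The point numbered `n`, shifted by `i` inside its block if the block has full length. -/
def point (D : FrameTable) (i : Fin D.t) (n : ℕ) : Fin D.t × Bool :=
  let j := n / 2
  (⟨(if (j / D.g + 1) * D.g ≤ D.t then j / D.g * D.g + (j + i) % D.g else j) % D.t,
    Nat.mod_lt _ i.pos⟩, n % 2 == 1)

/-- The class missing the group `i`. -/
def classes (D : FrameTable) (i : Fin D.t) : List (List (Fin D.t × Bool)) :=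
  (D.base.getD (i / D.g) []).map (List.map (D.point i))

end FrameTable

/-- Frames found by computer search, for those `t` that the recursion does not reach. -/
def smallFrames : List FrameTable :=
  [⟨4, 3, [[[2, 7, 5], [6, 3, 4]], [[0, 2, 4], [1, 3, 5]]]⟩,
   ⟨6, 5, [[[9, 11, 8, 10, 5], [3, 4, 7, 2, 6]], [[0, 2, 4, 6, 8], [1, 3, 5, 7, 9]]]⟩,
   ⟨7, 7, [[[3, 9, 5], [11, 6, 4], [2, 13, 10], [8, 7, 12]]]⟩,
   ⟨8, 1, [[[13, 5, 14, 9, 7], [4, 11, 6], [12, 15, 3], [10, 2, 8]], [[15, 9, 0, 5, 1], [13, 14,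
     11], [6, 12, 8], [4, 7, 10]], [[8, 14, 6, 15, 7], [1, 2, 13], [12, 11, 0], [9, 10, 3]], [[8,
     5, 3, 11, 15], [1, 9, 12], [2, 4, 14], [13, 0, 10]], [[10, 1, 4, 12, 14], [5, 11, 7], [3, 13,
     6], [15, 2, 0]], [[15, 4, 0, 8, 13], [3, 1, 14], [7, 12, 2], [5, 9, 6]], [[0, 6, 1, 7, 14],
     [3, 4, 8], [10, 5, 15], [9, 11, 2]], [[6, 2, 5, 12, 10], [13, 9, 4], [7, 3, 0], [11, 1, 8]]]⟩,
   ⟨9, 9, [[[7, 11, 13, 10, 15], [12, 16, 8, 17, 5], [3, 6, 4], [14, 2, 9]]]⟩,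
   ⟨10, 9, [[[17, 14, 5, 12, 10], [2, 6, 16, 13, 15], [3, 11, 7, 8, 18], [4, 19, 9]], [[0, 6, 12],
     [2, 8, 14], [4, 10, 16], [1, 7, 13], [3, 9, 15], [5, 11, 17]]]⟩,
   ⟨11, 11, [[[4, 17, 12, 20, 14], [9, 19, 2], [5, 18, 16], [3, 6, 10], [8, 11, 7], [15, 13, 21]]]⟩,
   ⟨12, 3, [[[11, 15, 9, 7, 12], [4, 18, 5, 14, 23], [17, 21, 8], [20, 3, 19], [16, 2, 13], [6,
     22, 10]], [[0, 2, 8, 16, 5], [17, 4, 11, 20, 15], [21, 23, 3], [12, 19, 9], [13, 1, 22], [18,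
     14, 10]], [[10, 17, 3, 9, 0], [7, 21, 4, 16, 15], [19, 8, 14], [18, 11, 22], [5, 6, 1], [23,
     2, 20]], [[10, 15, 23, 17, 1], [8, 7, 3, 11, 0], [22, 16, 14], [2, 5, 12], [9, 6, 21], [20,
     4, 13]]]⟩,
   ⟨13, 13, [[[5, 6, 23], [16, 18, 13], [4, 22, 7], [25, 15, 11], [17, 19, 12], [14, 24, 10], [21,
     8, 2], [9, 3, 20]]]⟩,
   ⟨14, 7, [[[27, 5, 6, 17, 12], [24, 13, 2], [25, 8, 4], [19, 9, 14], [16, 15, 22], [18, 21, 3],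
     [11, 7, 20], [26, 10, 23]], [[19, 5, 11, 23, 25], [4, 18, 27], [8, 3, 0], [22, 10, 12], [13,
     20, 16], [9, 2, 7], [26, 24, 6], [17, 21, 1]]]⟩,
   ⟨15, 15, [[[11, 2, 8, 20, 19], [21, 14, 29, 17, 24], [4, 25, 12], [23, 9, 28], [10, 15, 13],
     [7, 27, 3], [26, 22, 6], [18, 5, 16]]]⟩,
   ⟨16, 15, [[[8, 26, 19], [27, 14, 31], [24, 22, 18], [5, 28, 20], [25, 23, 4], [30, 6, 3], [10,
     13, 9], [29, 17, 12], [7, 15, 21], [2, 11, 16]], [[0, 10, 20], [2, 12, 22], [4, 14, 24], [6,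
     16, 26], [8, 18, 28], [1, 11, 21], [3, 13, 23], [5, 15, 25], [7, 17, 27], [9, 19, 29]]]⟩,
   ⟨17, 17, [[[5, 31, 4, 12, 7], [16, 26, 32], [6, 10, 23], [13, 28, 8], [19, 3, 15], [9, 29, 22],
     [18, 20, 17], [25, 2, 14], [11, 21, 30], [24, 33, 27]]]⟩,
   ⟨18, 9, [[[8, 5, 9, 16, 6], [24, 19, 21, 18, 35], [17, 20, 27], [32, 12, 23], [2, 7, 15], [13,
     33, 25], [14, 31, 26], [28, 11, 34], [22, 30, 3], [4, 10, 29]], [[32, 4, 28, 24, 16], [5, 23,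
     26, 8, 30], [14, 35, 29], [21, 17, 25], [12, 15, 3], [7, 31, 0], [11, 27, 13], [22, 20, 9],
     [34, 2, 1], [10, 6, 33]]]⟩,
   ⟨19, 19, [[[36, 29, 23, 25, 17], [27, 15, 5, 34, 11], [14, 31, 10, 28, 13], [33, 22, 26], [6,
     18, 20], [16, 3, 7], [35, 21, 32], [2, 30, 8], [37, 24, 19], [9, 12, 4]]]⟩,
   ⟨22, 21, [[[27, 7, 17, 43, 4], [33, 14, 41, 30, 35], [38, 37, 16, 5, 32], [8, 21, 12], [22, 19,
     24], [39, 3, 10], [18, 40, 28], [15, 11, 23], [36, 20, 2], [9, 25, 34], [26, 42, 29], [31,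
     13, 6]], [[0, 14, 28], [2, 16, 30], [4, 18, 32], [6, 20, 34], [8, 22, 36], [10, 24, 38], [12,
     26, 40], [1, 15, 29], [3, 17, 31], [5, 19, 33], [7, 21, 35], [9, 23, 37], [11, 25, 39], [13,
     27, 41]]]⟩,
   ⟨23, 23, [[[12, 16, 33, 4, 36], [10, 13, 17], [11, 45, 30], [3, 5, 23], [18, 9, 31], [6, 42,
     29], [2, 27, 37], [38, 43, 44], [22, 19, 34], [39, 20, 28], [35, 14, 40], [15, 7, 21], [8,
     26, 24], [41, 25, 32]]]⟩,
   ⟨26, 25, [[[32, 28, 17, 43, 24], [40, 22, 5], [37, 15, 23], [36, 51, 49], [48, 19, 35], [29,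
     11, 9], [10, 13, 8], [6, 3, 41], [21, 44, 25], [46, 39, 45], [14, 31, 20], [7, 12, 34], [33,
     26, 42], [27, 50, 2], [18, 47, 38], [16, 4, 30]], [[0, 10, 20, 30, 40], [2, 12, 22, 32, 42],
     [4, 14, 24, 34, 44], [6, 16, 26, 36, 46], [8, 18, 28, 38, 48], [1, 11, 21, 31, 41], [3, 13,
     23, 33, 43], [5, 15, 25, 35, 45], [7, 17, 27, 37, 47], [9, 19, 29, 39, 49]]]⟩,
   ⟨27, 27, [[[3, 46, 49, 19, 21], [25, 32, 17, 30, 2], [44, 27, 53], [37, 29, 51], [5, 26, 34],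
     [40, 52, 38], [11, 7, 45], [9, 50, 18], [36, 31, 43], [41, 12, 47], [48, 10, 15], [14, 24,
     13], [35, 20, 16], [22, 28, 4], [8, 42, 39], [6, 33, 23]]]⟩]

theorem isCheckedFrame_of_mem_smallFrames : ∀ D ∈ smallFrames, IsCheckedFrame D.classes := by
  decide +kernel

theorem HasFrame.of_mem_smallFrames (hk : 0 < k) (h3 : HasBlowUp 3 k) (h5 : HasBlowUp 5 k)
    (ht : t ∈ smallFrames.map FrameTable.t) : HasFrame k (Fin t) := by
  obtain ⟨D, hD, rfl⟩ := List.mem_map.1 ht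
  exact (isCheckedFrame_of_mem_smallFrames D hD).isCycleFrame.hasFrame hk h3 h5

end SmallFrames

section AllFrames

variable {k m : ℕ}

theorem coprime_of_pos_of_lt_five (hm : m.Coprime 6) {d : ℕ} (hd : 0 < d) (hd5 : d < 5) :
    d.Coprime m := by
  have h2 : Nat.Coprime 2 m := (hm.coprime_dvd_right (by decide)).symm
  have h3 : Nat.Coprime 3 m := (hm.coprime_dvd_right (by decide)).symm
  interval_cases d
  exacts [Nat.coprime_one_left m, h2, h3, h2.mul_left h2]

theorem coprime_of_pos_of_lt_seven (hm : m.Coprime 30) {d : ℕ} (hd : 0 < d) (hd7 : d < 7) :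
    d.Coprime m := by
  rcases lt_or_ge d 5 with hd5 | hd5
  · exact coprime_of_pos_of_lt_five (hm.coprime_dvd_right (by decide)) hd hd5
  · exact (hm.coprime_dvd_right (by interval_cases d <;> decide)).symm

theorem exists_add_add_eq {s : ℕ} (hs : s ≤ 21) :
    ∃ a ∈ [0, 1, 4, 5, 6, 7], ∃ b ∈ [0, 1, 4, 5, 6, 7], ∃ c ∈ [0, 1, 4, 5, 6, 7],
      a + b + c = s := by
  interval_cases s <;> decide

theorem exists_coprime_six_four_mul_add_eq {t : ℕ} (ht : 72 ≤ t) :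
    ∃ m r, 4 * m + r = t ∧ m.Coprime 6 ∧ r ≤ m ∧ 4 ≤ m ∧ r ≠ 2 ∧ r ≠ 3 := by
  have hcop : ∀ n d : ℕ, Nat.Coprime d 6 → Nat.Coprime (6 * n + d) 6 := fun n d hd => by
    rwa [Nat.coprime_mul_left_add_left]
  obtain ⟨n, u, hu, rfl⟩ : ∃ n u, u < 24 ∧ 24 * (n + 1) + u = t :=
    ⟨t / 24 - 1, t % 24, Nat.mod_lt _ (by decide), by omega⟩
  by_cases hcase : 4 ≤ u ∧ u ≠ 6 ∧ u ≠ 7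
  · exact ⟨6 * (n + 1) + 1, u - 4, by omega, hcop _ _ (by decide), by omega⟩
  · exact ⟨6 * n + 5, u + 4, by omega, hcop _ _ (by decide), by omega⟩

namespace HasFrame

theorem four_mul_add {r : ℕ} (hk : 0 < k) (hm0 : 0 < m) (hm : m.Coprime 6) (hr : r ≤ m)
    (h4 : HasFrame k (Fin 4)) (h5 : HasFrame k (Fin 5)) (hFm : HasFrame k (Fin m))
    (hFr : HasFrame k (Fin r)) : HasFrame k (Fin (4 * m + r)) := by
  have hsum := HasFrame.sum (g := 5) (r := ![m, m, m, m, r]) hk hm0 (by decide)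
    (fun d => coprime_of_pos_of_lt_five hm)
    (by simp [Fin.forall_fin_succ, hr]) (by simp [Fin.forall_fin_succ])
    (by simp [Fin.forall_fin_succ, hFm, hFr])
    (fun s hs hs' => by interval_cases s <;> assumption)
  have htotal : ∑ j, ![m, m, m, m, r] j = 4 * m + r := by
    rw [Fin.sum_univ_five]
    change m + m + m + m + r = _
    ring
  exact htotal ▸ hsum

theorem four_mul_add_add_add {a b c : ℕ} (hk : 0 < k) (hm0 : 0 < m) (hm : m.Coprime 30)
    (ha : a ≤ m) (hb : b ≤ m) (hc : c ≤ m) (hblock : ∀ s, 4 ≤ s → s ≤ 7 → HasFrame k (Fin s))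
    (hFm : HasFrame k (Fin m)) (hFa : HasFrame k (Fin a)) (hFb : HasFrame k (Fin b))
    (hFc : HasFrame k (Fin c)) : HasFrame k (Fin (4 * m + (a + b + c))) := by
  have hsum := HasFrame.sum (g := 7) (r := ![m, m, m, m, a, b, c]) hk hm0 (by decide)
    (fun d => coprime_of_pos_of_lt_seven hm)
    (by simp [Fin.forall_fin_succ, ha, hb, hc]) (by simp [Fin.forall_fin_succ])
    (by simp [Fin.forall_fin_succ, hFm, hFa, hFb, hFc]) hblock
  have htotal : ∑ j, ![m, m, m, m, a, b, c] j = 4 * m + (a + b + c) := by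
    rw [Fin.sum_univ_seven]
    change m + m + m + m + a + b + c = _
    ring
  exact htotal ▸ hsum

theorem of_lt_twenty_eight (hk : 0 < k) (h3 : HasBlowUp 3 k) (h5 : HasBlowUp 5 k)
    (hF5 : HasFrame k (Fin 5)) {t : ℕ} (ht4 : 4 ≤ t) (ht : t < 28) : HasFrame k (Fin t) := by
  have hsmall : ∀ {t}, t ∈ smallFrames.map FrameTable.t → HasFrame k (Fin t) :=
    of_mem_smallFrames hk h3 h5
  have hfour : ∀ r, r ≤ 5 → HasFrame k (Fin r) → HasFrame k (Fin (4 * 5 + r)) := fun r hr =>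
    four_mul_add hk (by decide) (by decide) hr (hsmall (by decide)) hF5 hF5
  by_cases hmem : t ∈ smallFrames.map FrameTable.t
  · exact hsmall hmem
  · have hcases : t ∈ [5, 20, 21, 24, 25] := by
      revert hmem
      interval_cases t <;> decide
    fin_cases hcases
    · exact hF5
    · exact hfour 0 (by decide) of_subsingleton
    · exact hfour 1 (by decide) of_subsingleton
    · exact hfour 4 (by decide) (hsmall (by decide))
    · exact hfour 5 (by decide) hF5

theorem of_lt_seventy_two (hk : 0 < k)
    (h : ∀ s, 4 ≤ s → s < 28 → HasFrame k (Fin s)) {t : ℕ} (ht28 : 28 ≤ t) (ht : t < 72) :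
    HasFrame k (Fin t) := by
  have hblock : ∀ s, 4 ≤ s → s ≤ 7 → HasFrame k (Fin s) := fun s hs hs7 => h s hs (by omega)
  have htail : ∀ a ∈ [0, 1, 4, 5, 6, 7], a ≤ 7 ∧ HasFrame k (Fin a) := by
    intro a ha
    obtain ha1 | ⟨ha4, ha7⟩ : a ≤ 1 ∨ 4 ≤ a ∧ a ≤ 7 := by
      fin_cases ha <;> decide
    · have : Subsingleton (Fin a) := Fin.subsingleton_iff_le_one.2 ha1
      exact ⟨by omega, of_subsingleton⟩
    · exact ⟨ha7, hblock a ha4 ha7⟩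
  obtain ⟨m, s, hm, hcop, hm28, hs, rfl⟩ : ∃ m s, 7 ≤ m ∧ m.Coprime 30 ∧ m < 28 ∧ s ≤ 21 ∧
      4 * m + s = t := by
    rcases lt_or_ge t 50 with ht50 | ht50
    · exact ⟨7, t - 28, by decide, by decide, by decide, by omega, by omega⟩
    rcases lt_or_ge t 52 with ht52 | ht52
    · exact ⟨11, t - 44, by decide, by decide, by decide, by omega, by omega⟩
    · exact ⟨13, t - 52, by decide, by decide, by decide, by omega, by omega⟩
  obtain ⟨a, ha, b, hb, c, hc, rfl⟩ := exists_add_add_eq hs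
  exact four_mul_add_add_add hk (by omega) hcop ((htail a ha).1.trans hm) ((htail b hb).1.trans hm)
    ((htail c hc).1.trans hm) hblock (h m (by omega) hm28) (htail a ha).2 (htail b hb).2
    (htail c hc).2

theorem of_four_le (hk : 0 < k) (h3 : HasBlowUp 3 k) (h5 : HasBlowUp 5 k)
    (hF5 : HasFrame k (Fin 5)) {t : ℕ} (ht : 4 ≤ t) : HasFrame k (Fin t) := by
  have hsmall : ∀ s, 4 ≤ s → s < 28 → HasFrame k (Fin s) := fun s =>
    of_lt_twenty_eight hk h3 h5 hF5
  induction t using Nat.strong_induction_on with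
  | _ t ih =>
    rcases lt_or_ge t 72 with ht72 | ht72
    · rcases lt_or_ge t 28 with ht28 | ht28
      · exact hsmall t ht ht28
      · exact of_lt_seventy_two hk hsmall ht28 ht72
    · obtain ⟨m, r, rfl, hcop, hrm, hm4, hr2, hr3⟩ := exists_coprime_six_four_mul_add_eq ht72
      have hFr : HasFrame k (Fin r) := by
        rcases lt_or_ge r 4 with hr4 | hr4
        · have : Subsingleton (Fin r) := Fin.subsingleton_iff_le_one.2 (by omega)
          exact of_subsingleton
        · exact ih r (by omega) hr4
      exact four_mul_add hk (by omega) hcop hrm (hsmall 4 le_rfl (by decide)) hF5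
        (ih m (by omega) hm4) hFr

end HasFrame

end AllFrames

theorem stmt8 (k t : ℕ) (hk : Odd k) (h11 : 11 ≤ k) (ht : 1 ≤ t) (ht2 : t ≠ 2) :
    IsARCS k (2 * k * t + 1) := by
  have : NeZero k := ⟨by omega⟩
  have h9 : 9 ≤ k := by omega
  have hbase : HasARCS k (ZMod k) := hasARCS_zmod hk h9
  obtain rfl | rfl | ht4 : t = 1 ∨ t = 3 ∨ 4 ≤ t := by omega
  · exact hbase.isARCS (by omega) (by simp)
  · exact (hasARCS_zmod_three_mul hk h9).isARCS (by omega) (by simp [mul_comm])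
  · have hframe : HasFrame k (Fin t) :=
      HasFrame.of_four_le (by omega) (hasBlowUp_three hk h11) (hasBlowUp_five hk h9)
        ((hasFrame_five hk h9).of_card_eq (by simp)) ht4
    exact (hframe.hasARCS hbase).isARCS (by omega) (by simp [mul_comm])
end

section
/- Let m and n be odd integers with n ≥ m ≥ 3, n ≥ 9 and n ≡ 3 (mod 6). Then (2, n−2) ∈ HWP(C_m[n]; m, n); that is, the edge set of C_m[n] can be partitioned into 2 C_m-factors and n−2 C_n-factors. -/
open SimpleGraph

/-
Rotate around the layers of `C_m[n]`, moving up or down one layer according to a sign that depends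
only on the height modulo `n`, and adding a unit `d` to the height. The orbit sees every height
once in `n` steps, so it is an `n`-cycle as soon as the signs sum to `m`. Relative to an offset in
each layer, a sign pattern and its negative together use the two differences `± d` on every arc.
Choosing the offsets as a potential on a proper `3`-colouring of `C_m` reduces the problem to three
rows of differences, one for each pair of colours: a family of potentials decomposes `C_m[n]` once
every residue modulo `n` is used in each row, since degrees leave no room for repetition. The number
`n - 2` of `n`-cycle factors is odd, so besides the pairs there is one block of five rotations that
share a potential and use the differences `0, ± u, ± 2u`. Represent the residues by small even
integers and the remaining odd ones; a uniform family of potentials fills the odd differences, and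
a fixed core depending on `n` modulo `4` fills the even ones.
-/

section FunctionalGraph

open Function

variable {V : Type*} {s : V → V} {v w : V} {k : ℕ}

/-- The undirected graph of a self-map `s`, joining every non-fixed point `v` to `s v`. Its
components are the cycles of `s` when `s` is a permutation without fixed points. -/
def functionalGraph (s : V → V) : SimpleGraph V :=
  SimpleGraph.fromRel fun a b => s a = b

theorem functionalGraph_adj : (functionalGraph s).Adj v w ↔ v ≠ w ∧ (s v = w ∨ s w = v) :=
  SimpleGraph.fromRel_adj _ _ _

theorem eq_iterate_of_apply_eq (hk : 0 < k) (hv : IsPeriodicPt s k v) (h : s v = w) :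
    v = s^[k - 1] w := by
  rw [← h, ← iterate_succ_apply, Nat.succ_eq_add_one, Nat.sub_add_cancel hk, hv.eq]

theorem ncard_neighborSet_functionalGraph (hk : 3 ≤ k) (hs : ∀ v, minimalPeriod s v = k) (v : V) :
    ((functionalGraph s).neighborSet v).ncard = 2 := by
  have hper (v) : IsPeriodicPt s k v := hs v ▸ isPeriodicPt_minimalPeriod s v
  have hnot {j : ℕ} (v) (hj : j ≠ 0) (hjk : j < k) : s^[j] v ≠ v :=
    not_isPeriodicPt_of_pos_of_lt_minimalPeriod hj (hs v ▸ hjk)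
  have hpred : s (s^[k - 1] v) = v := by
    rw [← iterate_succ_apply' s, Nat.succ_eq_add_one, Nat.sub_add_cancel (by omega), (hper v).eq]
  have hset : (functionalGraph s).neighborSet v = {s v, s^[k - 1] v} := by
    ext w
    simp only [mem_neighborSet, functionalGraph_adj, Set.mem_insert_iff, Set.mem_singleton_iff]
    constructor
    · rintro ⟨-, h | h⟩
      · exact .inl h.symm
      · exact .inr (eq_iterate_of_apply_eq (by omega) (hper w) h)
    · rintro (rfl | rfl)
      · exact ⟨(hnot v one_ne_zero (by omega)).symm, .inl rfl⟩
      · exact ⟨(hnot v (by omega) (by omega)).symm, .inr hpred⟩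
  rw [hset, Set.ncard_pair]
  intro h
  exact hnot v two_ne_zero (by omega) ((congrArg s h).trans hpred)

theorem reachable_functionalGraph_iff (hk : 0 < k) (hs : ∀ v, IsPeriodicPt s k v) :
    (functionalGraph s).Reachable v w ↔ w ∈ Set.range (s^[·] v) := by
  constructor
  · rw [reachable_iff_reflTransGen]
    intro h
    induction h with
    | refl => exact ⟨0, rfl⟩
    | @tail b c _ hbc ih =>
      obtain ⟨j, rfl⟩ := ih
      rcases (functionalGraph_adj.1 hbc).2 with h | h
      · exact ⟨j + 1, (iterate_succ_apply' s j v).trans h⟩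
      · refine ⟨k - 1 + j, ?_⟩
        rw [eq_iterate_of_apply_eq hk (hs c) h]
        exact iterate_add_apply s (k - 1) j v
  · rintro ⟨j, rfl⟩
    induction j with
    | zero => exact .refl _
    | succ j ih =>
      simp only [iterate_succ_apply']
      by_cases h : s^[j] v = s (s^[j] v)
      · exact h ▸ ih
      · exact ih.trans (functionalGraph_adj.2 ⟨h, .inl rfl⟩).reachable

theorem ncard_range_iterate (hv : v ∈ periodicPts s) :
    (Set.range (s^[·] v)).ncard = minimalPeriod s v := by
  have hrange : Set.range (s^[·] v) = (s^[·] v) '' Set.Iio (minimalPeriod s v) := by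
    refine Set.Subset.antisymm ?_ (Set.image_subset_range _ _)
    rintro _ ⟨j, rfl⟩
    exact ⟨j % minimalPeriod s v, Nat.mod_lt _ (minimalPeriod_pos_of_mem_periodicPts hv),
      iterate_mod_minimalPeriod_eq⟩
  rw [hrange, iterate_injOn_Iio_minimalPeriod.ncard_image, Set.ncard_Iio_nat]

theorem isCycleFactor_functionalGraph {H : SimpleGraph V} (hk : 3 ≤ k)
    (hs : ∀ v, minimalPeriod s v = k) (hle : functionalGraph s ≤ H) :
    IsCycleFactor H (functionalGraph s) k := by
  refine ⟨hle, ncard_neighborSet_functionalGraph hk hs, fun v => ?_⟩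
  have hpos : 0 < k := by omega
  have hper (v) : IsPeriodicPt s k v := hs v ▸ isPeriodicPt_minimalPeriod s v
  simp only [reachable_functionalGraph_iff hpos hper, Set.ofPred_mem_eq]
  rw [ncard_range_iterate (mk_mem_periodicPts hpos (hper v)), hs]

end FunctionalGraph

section Counting

variable {V : Type*} {H : SimpleGraph V}

/- The neighbourhood of each vertex in `H` is covered by sets whose sizes add up to its own, so
the sets are disjoint. -/
theorem isDecomp_of_cover {ι : Type*} [Finite ι] {F : ι → SimpleGraph V} {d : ℕ} (hd : 0 < d)
    (hle : ∀ i, F i ≤ H) (hF : ∀ i v, ((F i).neighborSet v).ncard = d)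
    (hH : ∀ v, (H.neighborSet v).ncard = Nat.card ι * d)
    (hcov : ∀ a b, H.Adj a b → ∃ i, (F i).Adj a b) : IsDecomp H F := by
  have unique_index (a b : V) (i j : ι) (hi : (F i).Adj a b) (hj : (F j).Adj a b) : i = j := by
    have hfin (i) : Finite ((F i).neighborSet a) :=
      Set.finite_of_ncard_ne_zero (by rw [hF]; exact hd.ne')
    let toH : (Σ i, (F i).neighborSet a) → H.neighborSet a := fun p => ⟨p.2, hle p.1 p.2.2⟩
    have hsurj : toH.Surjective := by
      rintro ⟨b, hb⟩
      obtain ⟨i, hi⟩ := hcov a b hb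
      exact ⟨⟨i, b, hi⟩, rfl⟩
    have hcard : Nat.card (Σ i, (F i).neighborSet a) ≤ Nat.card (H.neighborSet a) := by
      have := Fintype.ofFinite ι
      simp [Nat.card_sigma, Nat.card_coe_set_eq, hF, hH]
    have hinj := (hsurj.bijective_of_nat_card_le hcard).injective
    exact congrArg Sigma.fst (@hinj ⟨i, b, hi⟩ ⟨j, b, hj⟩ rfl)
  refine ⟨fun i j hij => Set.disjoint_left.2 ?_, ?_⟩
  · rintro ⟨a, b⟩ hi hj
    exact hij (unique_index a b i j hi hj)
  · rintro ⟨a, b⟩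
    exact ⟨hcov a b, fun ⟨i, hi⟩ => hle i hi⟩

theorem hw_of_cover {ι κ : Type*} [Fintype ι] [Fintype κ] {k l : ℕ} {F : ι → SimpleGraph V}
    {F' : κ → SimpleGraph V} (hF : ∀ i, IsCycleFactor H (F i) k)
    (hF' : ∀ j, IsCycleFactor H (F' j) l)
    (hH : ∀ v, (H.neighborSet v).ncard = (Fintype.card ι + Fintype.card κ) * 2)
    (hcov : ∀ a b, H.Adj a b → (∃ i, (F i).Adj a b) ∨ ∃ j, (F' j).Adj a b) :
    HW H k l (Fintype.card ι) (Fintype.card κ) := by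
  let e := Fintype.equivFin ι
  let e' := Fintype.equivFin κ
  refine ⟨Sum.elim (F ∘ e.symm) (F' ∘ e'.symm), fun i => hF _, fun j => hF' _,
    isDecomp_of_cover two_pos ?_ ?_ ?_ ?_⟩
  · rintro (i | j)
    exacts [(hF _).1, (hF' _).1]
  · rintro (i | j)
    exacts [(hF _).2.1, (hF' _).2.1]
  · simpa using hH
  · intro a b hab
    rcases hcov a b hab with ⟨i, hi⟩ | ⟨j, hj⟩
    · exact ⟨.inl (e i), by simpa using hi⟩
    · exact ⟨.inr (e' j), by simpa using hj⟩

end Counting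

section LexCycle

variable {m n : ℕ}

theorem lexCycle_adj_iff [Fact (1 < m)] {a b : ZMod m × ZMod n} :
    (lexCycle m n).Adj a b ↔ b.1 = a.1 + 1 ∨ a.1 = b.1 + 1 := by
  simp only [lexCycle, fromRel_adj, sub_eq_iff_eq_add']
  constructor
  · rintro ⟨-, h | h⟩
    exacts [.inr (by rw [h]), .inl (by rw [h])]
  · rintro (h | h)
    · exact ⟨fun hab => by simp [hab] at h, .inr (by rw [h])⟩
    · exact ⟨fun hab => by simp [hab] at h, .inl (by rw [h])⟩

theorem ncard_neighborSet_lexCycle (hm : 3 ≤ m) (v : ZMod m × ZMod n) :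
    ((lexCycle m n).neighborSet v).ncard = n * 2 := by
  have : Fact (1 < m) := ⟨by omega⟩
  have : Fact (2 < m) := ⟨hm⟩
  have hset : (lexCycle m n).neighborSet v = {v.1 + 1, v.1 - 1} ×ˢ Set.univ := by
    ext w
    simp [lexCycle_adj_iff, eq_sub_iff_add_eq, eq_comm (a := v.1)]
  have hne : v.1 + 1 ≠ v.1 - 1 := by
    intro h
    exact ZMod.neg_one_ne_one (n := m) (by linear_combination -h)
  rw [hset, Set.ncard_prod, Set.ncard_pair hne, Set.ncard_univ, Nat.card_zmod, mul_comm]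

theorem exists_three_coloring_zmod (hm : 2 ≤ m) :
    ∃ color : ZMod m → Fin 3, ∀ i, color i ≠ color (i + 1) := by
  obtain ⟨l, rfl⟩ := Nat.exists_eq_add_of_le' hm
  refine ⟨cycleGraph.tricoloring (l + 2) hm, fun i => (cycleGraph.tricoloring _ hm).valid ?_⟩
  exact cycleGraph_adj.2 (.inr (add_sub_cancel_left i 1))

end LexCycle

theorem exists_units_sum_eq {α : Type*} [Fintype α] {m : ℕ} (hm : m ≤ Fintype.card α)
    (heven : Even (Fintype.card α + m)) : ∃ e : α → ℤˣ, ∑ a, (e a : ℤ) = m := by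
  classical
  obtain ⟨k, hk⟩ := heven
  obtain ⟨P, -, hP⟩ := Finset.exists_subset_card_eq (s := (Finset.univ : Finset α)) (n := k)
    (by rw [Finset.card_univ]; omega)
  refine ⟨fun a => if a ∈ P then 1 else -1, ?_⟩
  have hsign (a : α) : ((if a ∈ P then 1 else -1 : ℤˣ) : ℤ) =
      2 * (if a ∈ P then 1 else 0) - 1 := by
    split_ifs <;> rfl
  simp only [hsign, Finset.sum_sub_distrib, ← Finset.mul_sum, Finset.sum_ite_mem,
    Finset.univ_inter, Finset.sum_const, hP, Finset.card_univ, nsmul_eq_mul, mul_one]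
  omega

theorem sum_range_add_mul_of_isUnit {n : ℕ} [NeZero n] {M : Type*} [AddCommMonoid M]
    (F : ZMod n → M) {d : ZMod n} (hd : IsUnit d) (h : ZMod n) :
    ∑ t ∈ Finset.range n, F (h + t * d) = ∑ z, F z := by
  refine Finset.sum_bij (fun (t : ℕ) _ => h + t * d) (fun _ _ => Finset.mem_univ _) ?_ ?_
    fun _ _ => rfl
  · intro a ha b hb hab
    have hab' : (a : ZMod n) = b := hd.mul_right_cancel (add_left_cancel hab)
    exact ((ZMod.natCast_eq_natCast_iff a b n).1 hab').eq_of_lt_of_lt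
      (Finset.mem_range.1 ha) (Finset.mem_range.1 hb)
  · intro z _
    obtain ⟨t, ht⟩ := hd.exists_left_inv
    refine ⟨((z - h) * t).val, Finset.mem_range.2 (ZMod.val_lt _), ?_⟩
    rw [ZMod.natCast_zmod_val]
    linear_combination (z - h) * ht

theorem isUnit_two_zmod {n : ℕ} (hn : Odd n) : IsUnit (2 : ZMod n) := by
  exact_mod_cast (ZMod.isUnit_iff_coprime 2 n).2 (Nat.coprime_two_left.2 hn)

/-- A twisted rotation of `ZMod m × ZMod n`: measuring heights in layer `i` from the origin
`offset i`, a point at height `h` moves up one layer or down one layer according to the sign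
`sign h`, and its height becomes `h + shift`. Signs are units of `ℤ`, so that every move joins
consecutive layers. -/
structure TwistedRotation (m n : ℕ) where
  sign : ZMod n → ℤˣ
  shift : ZMod n
  offset : ZMod m → ZMod n

namespace TwistedRotation

variable {m n : ℕ} (f : TwistedRotation m n)

/-- The self-map of `ZMod m × ZMod n` performed by a twisted rotation. -/
def move (v : ZMod m × ZMod n) : ZMod m × ZMod n :=
  (v.1 + ((f.sign (v.2 - f.offset v.1) : ℤ) : ZMod m),
    v.2 - f.offset v.1 + f.shift +
      f.offset (v.1 + ((f.sign (v.2 - f.offset v.1) : ℤ) : ZMod m)))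

/-- The graph formed by the cycles of a twisted rotation. -/
def graph : SimpleGraph (ZMod m × ZMod n) :=
  functionalGraph f.move

theorem move_iterate (j : ℕ) (i : ZMod m) (h : ZMod n) :
    f.move^[j] (i, h + f.offset i) =
      (i + ∑ t ∈ Finset.range j, ((f.sign (h + t * f.shift) : ℤ) : ZMod m),
        h + j * f.shift +
          f.offset (i + ∑ t ∈ Finset.range j, ((f.sign (h + t * f.shift) : ℤ) : ZMod m))) := by
  induction j with
  | zero => simp
  | succ j ih =>
    rw [Function.iterate_succ_apply', ih]
    simp only [move, Finset.sum_range_succ, add_sub_cancel_right, Nat.cast_succ, ← add_assoc,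
      add_mul, one_mul]

theorem isPeriodicPt_move_iff {j : ℕ} {i : ZMod m} {h : ZMod n} :
    Function.IsPeriodicPt f.move j (i, h + f.offset i) ↔
      ∑ t ∈ Finset.range j, ((f.sign (h + t * f.shift) : ℤ) : ZMod m) = 0 ∧ j * f.shift = 0 := by
  rw [Function.IsPeriodicPt, Function.IsFixedPt, move_iterate, Prod.mk.injEq, add_eq_left]
  refine and_congr_right fun hsum => ?_
  rw [hsum, add_zero, add_left_inj, add_eq_left]

theorem minimalPeriod_move_eq {k : ℕ}
    (hk : ∀ j i h, Function.IsPeriodicPt f.move j (i, h + f.offset i) ↔ k ∣ j)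
    (v : ZMod m × ZMod n) : Function.minimalPeriod f.move v = k := by
  have hv (j) : Function.IsPeriodicPt f.move j v ↔ k ∣ j := by
    simpa using hk j v.1 (v.2 - f.offset v.1)
  exact Nat.dvd_antisymm ((hv k).2 dvd_rfl).minimalPeriod_dvd
    ((hv _).1 (Function.isPeriodicPt_minimalPeriod _ _))

theorem minimalPeriod_move_of_sign_eq_one (hsign : ∀ h, f.sign h = 1) (hshift : f.shift = 0)
    (v : ZMod m × ZMod n) : Function.minimalPeriod f.move v = m := by
  refine f.minimalPeriod_move_eq (fun j i h => ?_) v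
  simp [isPeriodicPt_move_iff, hsign, hshift, ZMod.natCast_eq_zero_iff]

theorem minimalPeriod_move_of_isUnit_shift [NeZero n] (hshift : IsUnit f.shift)
    (hsum : ∑ h, ((f.sign h : ℤ) : ZMod m) = 0) (v : ZMod m × ZMod n) :
    Function.minimalPeriod f.move v = n := by
  have hperiod (i h) : Function.IsPeriodicPt f.move n (i, h + f.offset i) := by
    refine f.isPeriodicPt_move_iff.2 ⟨?_, by simp⟩
    rw [sum_range_add_mul_of_isUnit (fun z => ((f.sign z : ℤ) : ZMod m)) hshift, hsum]
  refine f.minimalPeriod_move_eq (fun j i h => ⟨fun hj => ?_, (hperiod i h).trans_dvd⟩) v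
  rw [isPeriodicPt_move_iff, hshift.mul_left_eq_zero, ZMod.natCast_eq_zero_iff] at hj
  exact hj.2

section Adjacency

variable [Fact (1 < m)]

theorem graph_le_lexCycle : f.graph ≤ lexCycle m n := by
  have adj_move (v w) (h : f.move v = w) : (lexCycle m n).Adj v w := by
    rw [lexCycle_adj_iff, ← h, move]
    rcases Int.units_eq_one_or (f.sign (v.2 - f.offset v.1)) with h | h <;> simp [h]
  intro v w hvw
  rcases (functionalGraph_adj.1 hvw).2 with h | h
  exacts [adj_move v w h, (adj_move w v h).symm]

variable {f} {i : ZMod m} {h x y : ZMod n}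

theorem graph_adj_of_sign_eq_one (hh : f.sign h = 1) (hx : x = h + f.offset i)
    (hy : y = h + f.shift + f.offset (i + 1)) : f.graph.Adj (i, x) (i + 1, y) := by
  refine functionalGraph_adj.2 ⟨by simp, .inl ?_⟩
  simp [move, hx, hy, hh]

theorem graph_adj_of_sign_eq_neg_one (hh : f.sign h = -1) (hx : x = h + f.shift + f.offset i)
    (hy : y = h + f.offset (i + 1)) : f.graph.Adj (i, x) (i + 1, y) := by
  refine functionalGraph_adj.2 ⟨by simp, .inr ?_⟩
  simp [move, hx, hy, hh]

theorem isCycleFactor_graph_of_sign_eq_one (hm : 3 ≤ m) (hsign : ∀ h, f.sign h = 1)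
    (hshift : f.shift = 0) : IsCycleFactor (lexCycle m n) f.graph m :=
  isCycleFactor_functionalGraph hm (f.minimalPeriod_move_of_sign_eq_one hsign hshift)
    f.graph_le_lexCycle

theorem isCycleFactor_graph_of_isUnit_shift [NeZero n] (hn : 3 ≤ n) (hshift : IsUnit f.shift)
    (hsum : ∑ h, ((f.sign h : ℤ) : ZMod m) = 0) : IsCycleFactor (lexCycle m n) f.graph n :=
  isCycleFactor_functionalGraph hn (f.minimalPeriod_move_of_isUnit_shift hshift hsum)
    f.graph_le_lexCycle

end Adjacency

end TwistedRotation

namespace TwistedRotation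

variable {m n : ℕ}

/-- The twisted rotation whose graph joins `(i, x)` to `(i + 1, y)` when `y - x` is the
increment `g (i + 1) - g i`. -/
def single (g : ZMod m → ZMod n) : TwistedRotation m n :=
  ⟨fun _ => 1, 0, g⟩

/-- The two twisted rotations, indexed by a sign `ε`, whose graphs together join `(i, x)` to
`(i + 1, y)` when `y - x` differs from `g (i + 1) - g i` by `± d`. -/
def pair (e : ZMod n → ℤˣ) (d : ZMod n) (g : ZMod m → ZMod n) (ε : ℤˣ) : TwistedRotation m n :=
  ⟨fun h => ε * e h, d, g⟩

/-- Five twisted rotations whose graphs together join `(i, x)` to `(i + 1, y)` when `y - x`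
differs from `g (i + 1) - g i` by one of `0`, `± u`, `± 2 * u`, provided that `color` is proper.
Three of them are indexed by the colours, a colour being the set of layers whose offset is raised
by `u`. -/
def quint (e : ZMod n → ℤˣ) (u : ZMod n) (g : ZMod m → ZMod n) (color : ZMod m → Fin 3) :
    Fin 3 ⊕ Bool → TwistedRotation m n
  | .inl c => ⟨e, u, fun i => g i + if color i = c then u else 0⟩
  | .inr false => ⟨-e, u, g⟩
  | .inr true => ⟨e, -2 * u, fun i => g i + 2 * u⟩

section Adjacency

variable [Fact (1 < m)] {e : ZMod n → ℤˣ} {d u : ZMod n} {g : ZMod m → ZMod n}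
  {color : ZMod m → Fin 3} {i : ZMod m} {x y : ZMod n}

theorem single_graph_adj (h : y - x = g (i + 1) - g i) :
    (single g).graph.Adj (i, x) (i + 1, y) :=
  graph_adj_of_sign_eq_one (h := x - g i) rfl (by simp [single])
    (by simp only [single]; linear_combination h)

theorem exists_pair_graph_adj (ε : ℤˣ) (h : y - x = g (i + 1) - g i + ((ε : ℤ) : ZMod n) * d) :
    ∃ δ, (pair e d g δ).graph.Adj (i, x) (i + 1, y) := by
  rcases Int.units_eq_one_or ε with rfl | rfl
  · refine ⟨e (x - g i), graph_adj_of_sign_eq_one (Int.units_mul_self _) ?_ ?_⟩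
    · simp [pair]
    · simp only [Units.val_one, Int.cast_one] at h
      simp only [pair]
      linear_combination h
  · refine ⟨-e (y - g (i + 1)), graph_adj_of_sign_eq_neg_one (h := y - g (i + 1)) ?_ ?_ ?_⟩
    · simp only [pair, neg_mul, Int.units_mul_self]
    · simp only [Units.val_neg, Units.val_one, Int.cast_neg, Int.cast_one] at h
      simp only [pair]
      linear_combination -h
    · simp [pair]

/- Each of the five differences is divided between two of the rotations by the value of `e` at
one suitable height. -/
theorem exists_quint_graph_adj (hcolor : color i ≠ color (i + 1)) {k : ℤ}
    (hk : k ∈ ({-2, -1, 0, 1, 2} : Finset ℤ)) (h : y - x = g (i + 1) - g i + k * u) :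
    ∃ c, (quint e u g color c).graph.Adj (i, x) (i + 1, y) := by
  obtain ⟨c, hc, hc'⟩ : ∃ c, color i ≠ c ∧ color (i + 1) ≠ c :=
    (by decide : ∀ a b : Fin 3, ∃ c, a ≠ c ∧ b ≠ c) _ _
  obtain rfl : y = x - g i + k * u + g (i + 1) := by linear_combination h
  clear h
  obtain ⟨z, rfl⟩ : ∃ z, x = z + g i := ⟨x - g i, by ring⟩
  simp only [Finset.mem_insert, Finset.mem_singleton] at hk
  rcases hk with rfl | rfl | rfl | rfl | rfl
  · rcases Int.units_eq_one_or (e (z - 2 * u)) with he | he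
    · refine ⟨.inr true, graph_adj_of_sign_eq_one he ?_ ?_⟩ <;>
        simp only [quint] <;> push_cast <;> ring
    · refine ⟨.inl (color i), graph_adj_of_sign_eq_neg_one he ?_ ?_⟩ <;>
        simp only [quint, hcolor.symm, ↓reduceIte] <;> push_cast <;> ring
  · rcases Int.units_eq_one_or (e (z - u)) with he | he
    · refine ⟨.inr false, graph_adj_of_sign_eq_neg_one (congrArg Neg.neg he) ?_ ?_⟩ <;>
        simp only [quint] <;> push_cast <;> ring
    · refine ⟨.inl c, graph_adj_of_sign_eq_neg_one he ?_ ?_⟩ <;>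
        simp only [quint, hc, hc', ↓reduceIte] <;> push_cast <;> ring
  · rcases Int.units_eq_one_or (e (z - u)) with he | he
    · refine ⟨.inl (color i), graph_adj_of_sign_eq_one he ?_ ?_⟩ <;>
        simp only [quint, hcolor.symm, ↓reduceIte] <;> push_cast <;> ring
    · refine ⟨.inl (color (i + 1)), graph_adj_of_sign_eq_neg_one he ?_ ?_⟩ <;>
        simp only [quint, hcolor, ↓reduceIte] <;> push_cast <;> ring
  · rcases Int.units_eq_one_or (e z) with he | he
    · refine ⟨.inl c, graph_adj_of_sign_eq_one he ?_ ?_⟩ <;>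
        simp only [quint, hc, hc', ↓reduceIte] <;> push_cast <;> ring
    · refine ⟨.inr false, graph_adj_of_sign_eq_one (h := z) (by simp [quint, he]) rfl ?_⟩
      simp only [quint]
      push_cast
      ring
  · rcases Int.units_eq_one_or (e z) with he | he
    · refine ⟨.inl (color (i + 1)), graph_adj_of_sign_eq_one he ?_ ?_⟩ <;>
        simp only [quint, hcolor, ↓reduceIte] <;> push_cast <;> ring
    · refine ⟨.inr true, graph_adj_of_sign_eq_neg_one he ?_ ?_⟩ <;>
        (simp only [quint]; push_cast; ring)

end Adjacency

end TwistedRotation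

/-- Data for decomposing `C_m[n]` along a proper `3`-colouring of `C_m`. Each member is a
potential on the colours; an arc from colour `c` to colour `c'` sees its increment from `c` to
`c'`. A quint potential contributes the increments shifted by `0`, `± quintGap` and
`± 2 * quintGap`, a pair potential those shifted by `± pairGap j`, and a single potential its
increments alone. -/
structure DifferenceScheme (R J : Type*) where
  quint : Fin 3 → R
  quintGap : R
  pair : J → Fin 3 → R
  pairGap : J → R
  single : Fin 2 → Fin 3 → R

namespace DifferenceScheme

variable {R J : Type*} [CommRing R] {c c' : Fin 3} {s : R}

/-- The difference `s` is contributed by some member of the scheme to the arcs from colour `c` to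
colour `c'`. -/
def Realizes (S : DifferenceScheme R J) (c c' : Fin 3) (s : R) : Prop :=
  (∃ k ∈ ({-2, -1, 0, 1, 2} : Finset ℤ), s = S.quint c' - S.quint c + k * S.quintGap) ∨
  (∃ j, ∃ ε : ℤˣ, s = S.pair j c' - S.pair j c + ((ε : ℤ) : R) * S.pairGap j) ∨
  ∃ b, s = S.single b c' - S.single b c

instance [DecidableEq R] [Fintype J] (S : DifferenceScheme R J) :
    Decidable (S.Realizes c c' s) := by
  unfold Realizes
  infer_instance

/-- Every difference occurs along the cyclic order of the colours. -/
def IsComplete (S : DifferenceScheme R J) : Prop :=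
  ∀ c s, S.Realizes c (c + 1) s

/-- The property `P` holds for all gaps of the scheme. -/
def AllGaps (S : DifferenceScheme R J) (P : R → Prop) : Prop :=
  P S.quintGap ∧ ∀ j, P (S.pairGap j)

theorem Realizes.neg {S : DifferenceScheme R J} (h : S.Realizes c c' s) :
    S.Realizes c' c (-s) := by
  rcases h with ⟨k, hk, rfl⟩ | ⟨j, ε, rfl⟩ | ⟨b, rfl⟩
  · simp only [Finset.mem_insert, Finset.mem_singleton] at hk
    exact .inl ⟨-k, by simp only [Finset.mem_insert, Finset.mem_singleton]; omega,
      by push_cast; ring⟩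
  · exact .inr (.inl ⟨j, -ε, by push_cast; ring⟩)
  · exact .inr (.inr ⟨b, by ring⟩)

theorem IsComplete.realizes {S : DifferenceScheme R J} (hS : S.IsComplete) (hc : c ≠ c') (s : R) :
    S.Realizes c c' s := by
  have hsucc : c' = c + 1 ∨ c = c' + 1 := by
    revert c c'
    decide
  rcases hsucc with rfl | rfl
  · exact hS c s
  · simpa using (hS c' (-s)).neg

section Decomposition

variable {m n : ℕ} (S : DifferenceScheme (ZMod n) J) (color : ZMod m → Fin 3) (e : ZMod n → ℤˣ)

/-- The twisted rotations with `n`-cycles prescribed by a scheme. -/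
def longRotation : (Fin 3 ⊕ Bool) ⊕ (J × ℤˣ) → TwistedRotation m n
  | .inl c => .quint e S.quintGap (S.quint ∘ color) color c
  | .inr (j, ε) => .pair e (S.pairGap j) (S.pair j ∘ color) ε

/-- The twisted rotations with `m`-cycles prescribed by a scheme. -/
def shortRotation (b : Fin 2) : TwistedRotation m n :=
  .single (S.single b ∘ color)

variable {S color e}

theorem isUnit_shift_longRotation (hn : Odd n) (hS : S.AllGaps IsUnit)
    (c : (Fin 3 ⊕ Bool) ⊕ (J × ℤˣ)) : IsUnit (S.longRotation color e c).shift := by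
  rcases c with (_ | _ | _) | ⟨j, _⟩
  exacts [hS.1, hS.1, (isUnit_two_zmod hn).neg.mul hS.1, hS.2 j]

theorem sum_sign_longRotation [NeZero n] (he : ∑ h, ((e h : ℤ) : ZMod m) = 0)
    (c : (Fin 3 ⊕ Bool) ⊕ (J × ℤˣ)) :
    ∑ h, (((S.longRotation color e c).sign h : ℤ) : ZMod m) = 0 := by
  rcases c with (_ | _ | _) | ⟨j, ε⟩ <;>
    simp [longRotation, TwistedRotation.quint, TwistedRotation.pair, he, ← Finset.mul_sum]

theorem IsComplete.exists_graph_adj [Fact (1 < m)] (hS : S.IsComplete) {i : ZMod m}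
    (hcolor : color i ≠ color (i + 1)) (x y : ZMod n) :
    (∃ b, (S.shortRotation color b).graph.Adj (i, x) (i + 1, y)) ∨
      ∃ c, (S.longRotation color e c).graph.Adj (i, x) (i + 1, y) := by
  rcases hS.realizes hcolor (y - x) with ⟨k, hk, h⟩ | ⟨j, ε, h⟩ | ⟨b, h⟩
  · obtain ⟨c, hc⟩ := TwistedRotation.exists_quint_graph_adj (e := e) (g := S.quint ∘ color)
      hcolor hk h
    exact .inr ⟨.inl c, hc⟩
  · obtain ⟨δ, hδ⟩ := TwistedRotation.exists_pair_graph_adj (e := e) (g := S.pair j ∘ color) ε h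
    exact .inr ⟨.inr (j, δ), hδ⟩
  · exact .inl ⟨b, TwistedRotation.single_graph_adj h⟩

theorem IsComplete.hw_lexCycle [Fintype J] (hS : S.IsComplete) (hgaps : S.AllGaps IsUnit)
    (hJ : 7 + 2 * Fintype.card J = n) (hm : Odd m) (h3 : 3 ≤ m) (hmn : m ≤ n) :
    HW (lexCycle m n) m n 2 (n - 2) := by
  have : Fact (1 < m) := ⟨by omega⟩
  have : NeZero n := ⟨by omega⟩
  have hn : Odd n := ⟨3 + Fintype.card J, by omega⟩
  obtain ⟨color, hcolor⟩ := exists_three_coloring_zmod (m := m) (by omega)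
  obtain ⟨e, he⟩ : ∃ e : ZMod n → ℤˣ, ∑ h, (e h : ℤ) = m :=
    exists_units_sum_eq (by rwa [ZMod.card]) (by rw [ZMod.card]; exact hn.add_odd hm)
  have he' : ∑ h, ((e h : ℤ) : ZMod m) = 0 := by
    rw [← Int.cast_sum, he, Int.cast_natCast, ZMod.natCast_self]
  have hcard : Fintype.card ((Fin 3 ⊕ Bool) ⊕ (J × ℤˣ)) = n - 2 := by
    simp only [Fintype.card_sum, Fintype.card_prod, Fintype.card_fin, Fintype.card_bool,
      Fintype.card_units_int]
    omega
  rw [← hcard, ← Fintype.card_fin 2]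
  refine hw_of_cover (F := fun b => (S.shortRotation color b).graph)
    (F' := fun c => (S.longRotation color e c).graph)
    (fun b => TwistedRotation.isCycleFactor_graph_of_sign_eq_one h3 (fun _ => rfl) rfl)
    (fun c => TwistedRotation.isCycleFactor_graph_of_isUnit_shift (by omega)
      (isUnit_shift_longRotation hn hgaps c) (sum_sign_longRotation he' c))
    (fun v => ?_) ?_
  · rw [ncard_neighborSet_lexCycle h3, hcard, Fintype.card_fin]
    omega
  · rintro ⟨i, x⟩ ⟨i', y⟩ hadj
    rcases lexCycle_adj_iff.1 hadj with rfl | rfl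
    · exact hS.exists_graph_adj (hcolor i) x y
    · simpa only [adj_comm] using hS.exists_graph_adj (hcolor i') y x

end Decomposition

end DifferenceScheme

theorem exists_even_or_odd_cast_eq {n : ℕ} (hn : Odd n) (r : ℤ) (s : ZMod n) :
    ∃ z : ℤ, (z : ZMod n) = s ∧ (Even z ∧ |z| ≤ 2 * r ∨ Odd z ∧ |z| < n - 2 * r) := by
  have : NeZero n := ⟨hn.pos.ne'⟩
  have hn' : Odd (n : ℤ) := by exact_mod_cast hn
  obtain ⟨e, he, heven, hlt⟩ : ∃ e : ℤ, (e : ZMod n) = s ∧ Even e ∧ |e| < n := by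
    have hval := s.val_lt
    rcases Int.even_or_odd s.val with h | h
    · exact ⟨s.val, by simp, h, by rw [abs_lt]; omega⟩
    · exact ⟨s.val - n, by simp, h.sub_odd hn', by rw [abs_lt]; grind⟩
  by_cases hr : |e| ≤ 2 * r
  · exact ⟨e, he, .inl ⟨heven, hr⟩⟩
  · rcases abs_cases e with h | h
    · exact ⟨e - n, by simpa, .inr ⟨heven.sub_odd hn', by rw [abs_lt]; omega⟩⟩
    · exact ⟨e + n, by simpa, .inr ⟨heven.add_odd hn', by rw [abs_lt]; omega⟩⟩

namespace DifferenceScheme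

variable {R R' J : Type*} [CommRing R] [CommRing R']

/-- The image of a scheme under a ring homomorphism. -/
def map (φ : R →+* R') (S : DifferenceScheme R J) : DifferenceScheme R' J where
  quint := φ ∘ S.quint
  quintGap := φ S.quintGap
  pair j := φ ∘ S.pair j
  pairGap j := φ (S.pairGap j)
  single b := φ ∘ S.single b

theorem Realizes.map {S : DifferenceScheme R J} {c c' : Fin 3} {s : R} (h : S.Realizes c c' s)
    (φ : R →+* R') : (S.map φ).Realizes c c' (φ s) := by
  rcases h with ⟨k, hk, rfl⟩ | ⟨j, ε, rfl⟩ | ⟨b, rfl⟩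
  · exact .inl ⟨k, hk, by simp [DifferenceScheme.map]⟩
  · exact .inr (.inl ⟨j, ε, by simp [DifferenceScheme.map]⟩)
  · exact .inr (.inr ⟨b, by simp [DifferenceScheme.map]⟩)

theorem AllGaps.isUnit_map_castRingHom {S : DifferenceScheme ℤ J} {n : ℕ} (hn : Odd n)
    (hS : S.AllGaps (· ∈ Submonoid.powers 2)) :
    (S.map (Int.castRingHom (ZMod n))).AllGaps IsUnit := by
  have isUnit_cast (d : ℤ) (hd : d ∈ Submonoid.powers 2) :
      IsUnit (Int.castRingHom (ZMod n) d) := by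
    obtain ⟨k, rfl⟩ := hd
    simpa using (isUnit_two_zmod hn).pow k
  exact ⟨isUnit_cast _ hS.1, fun j => isUnit_cast _ (hS.2 j)⟩

/-- The pair potentials `± (0, 4 * a + 2, 4 * (K - a))` with `a < K`. With gap `1`, each of them
contributes two consecutive odd differences to every pair of colours, and together they fill
runs of odd differences that are symmetric about `0`. -/
def runPotential (K : ℕ) (p : Fin K × ℤˣ) (c : Fin 3) : ℤ :=
  p.2 * ![0, 4 * (p.1 : ℤ) + 2, 4 * (K - (p.1 : ℤ))] c

/-- The scheme enlarged by the pair potentials `runPotential K` with gap `1`. -/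
def addRuns (S : DifferenceScheme ℤ J) (K : ℕ) : DifferenceScheme ℤ (J ⊕ Fin K × ℤˣ) where
  quint := S.quint
  quintGap := S.quintGap
  pair := Sum.elim S.pair (runPotential K)
  pairGap := Sum.elim S.pairGap 1
  single := S.single

section AddRuns

variable {S : DifferenceScheme ℤ J} {c c' : Fin 3} {z : ℤ} {K : ℕ}

theorem AllGaps.addRuns {P : ℤ → Prop} (hS : S.AllGaps P) (h1 : P 1) :
    (S.addRuns K).AllGaps P :=
  ⟨hS.1, Sum.rec hS.2 fun _ => h1⟩

theorem Realizes.addRuns (h : S.Realizes c c' z) (K : ℕ) : (S.addRuns K).Realizes c c' z := by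
  rcases h with h | ⟨j, hj⟩ | h
  exacts [.inl h, .inr (.inl ⟨.inl j, hj⟩), .inr (.inr h)]

variable (S)

theorem realizes_addRuns_of_eq_or_eq {a : ℤ} (ha : 0 ≤ a) (haK : a < K) (ε : ℤˣ) {d : ℤ}
    (hd : ε * (![0, 4 * a + 2, 4 * (K - a)] c' - ![0, 4 * a + 2, 4 * (K - a)] c) = d)
    (hz : z = d + 1 ∨ z = d - 1) : (S.addRuns K).Realizes c c' z := by
  lift a to ℕ using ha
  obtain ⟨δ, hδ⟩ : ∃ δ : ℤˣ, z = d + δ := by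
    rcases hz with rfl | rfl
    exacts [⟨1, rfl⟩, ⟨-1, rfl⟩]
  refine .inr (.inl ⟨.inr (⟨a, by omega⟩, ε), δ, ?_⟩)
  simp [DifferenceScheme.addRuns, runPotential, ← mul_sub, hδ, ← hd]

theorem realizes_addRuns_zero_one (hz : Odd z) (h : |z| < 4 * K) :
    (S.addRuns K).Realizes 0 1 z := by
  obtain ⟨w, rfl⟩ := hz
  rw [abs_lt] at h
  rcases le_or_gt 0 w with hw | hw
  · exact S.realizes_addRuns_of_eq_or_eq (a := w / 2) (d := 4 * (w / 2) + 2) (by omega)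
      (by omega) 1 (by simp) (by omega)
  · exact S.realizes_addRuns_of_eq_or_eq (a := (-w - 1) / 2) (d := -(4 * ((-w - 1) / 2) + 2))
      (by omega) (by omega) (-1) (by simp) (by omega)

theorem realizes_addRuns_one_two (hz : Odd z) (h : |z| < 4 * K) :
    (S.addRuns K).Realizes 1 2 z := by
  obtain ⟨w, rfl⟩ := hz
  rw [abs_lt] at h
  rcases Int.even_or_odd' (K - 1 - w / 2) with ⟨a, ha | ha⟩
  · exact S.realizes_addRuns_of_eq_or_eq (a := a) (d := 4 * (w / 2) + 2)
      (by omega) (by omega) 1 (by change 1 * (4 * (K - a) - (4 * a + 2)) = _; omega) (by omega)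
  · exact S.realizes_addRuns_of_eq_or_eq (a := K - 1 - a) (d := 4 * (w / 2) + 2)
      (by omega) (by omega) (-1)
      (by change -1 * (4 * (K - (K - 1 - a)) - (4 * (K - 1 - a) + 2)) = _; omega) (by omega)

theorem realizes_addRuns_two_zero (hz : Odd z) (h1 : 1 < |z|) (h : |z| ≤ 4 * K + 1) :
    (S.addRuns K).Realizes 2 0 z := by
  obtain ⟨w, rfl⟩ := hz
  rw [abs_le] at h
  rw [lt_abs] at h1
  rcases h1 with hw | hw
  · exact S.realizes_addRuns_of_eq_or_eq (a := K - (w + 1) / 2) (d := 4 * ((w + 1) / 2))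
      (by omega) (by omega) (-1) (by simp) (by omega)
  · exact S.realizes_addRuns_of_eq_or_eq (a := K - -w / 2) (d := -(4 * (-w / 2)))
      (by omega) (by omega) 1 (by simp) (by omega)

end AddRuns

/-- A core of radius `r` supplies the even differences of absolute value at most `2 * r` between
consecutive colours, except that from colour `2` to colour `0` it supplies `± 1` in place of
`± 2 * r`. -/
structure IsCore (S : DifferenceScheme ℤ J) (r : ℤ) : Prop where
  gaps : S.AllGaps (· ∈ Submonoid.powers 2)
  zero_one : ∀ w ∈ Finset.Icc (-r) r, S.Realizes 0 1 (w + w)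
  one_two : ∀ w ∈ Finset.Icc (-r) r, S.Realizes 1 2 (w + w)
  two_zero : ∀ w ∈ Finset.Ioo (-r) r, S.Realizes 2 0 (w + w)
  two_zero_unit : ∀ ε : ℤˣ, S.Realizes 2 0 ε

theorem IsCore.isComplete_map_addRuns {S : DifferenceScheme ℤ J} {r : ℤ} {n K : ℕ}
    (hS : S.IsCore r) (hn : Odd n) (hr : n = 2 * r + 1 + 4 * K) :
    ((S.addRuns K).map (Int.castRingHom (ZMod n))).IsComplete := by
  intro c s
  fin_cases c
  · obtain ⟨z, rfl, ⟨⟨w, rfl⟩, hw⟩ | ⟨hodd, hz⟩⟩ := exists_even_or_odd_cast_eq hn r s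
    · rw [abs_le] at hw
      exact ((hS.zero_one w (Finset.mem_Icc.2 (by omega))).addRuns K).map _
    · exact (S.realizes_addRuns_zero_one hodd (by grind)).map _
  · obtain ⟨z, rfl, ⟨⟨w, rfl⟩, hw⟩ | ⟨hodd, hz⟩⟩ := exists_even_or_odd_cast_eq hn r s
    · rw [abs_le] at hw
      exact ((hS.one_two w (Finset.mem_Icc.2 (by omega))).addRuns K).map _
    · exact (S.realizes_addRuns_one_two hodd (by grind)).map _
  · obtain ⟨z, rfl, ⟨⟨w, rfl⟩, hw⟩ | ⟨hodd, hz⟩⟩ := exists_even_or_odd_cast_eq hn (r - 1) s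
    · rw [abs_le] at hw
      exact ((hS.two_zero w (Finset.mem_Ioo.2 (by omega))).addRuns K).map _
    · by_cases hunit : IsUnit z
      · obtain ⟨ε, rfl⟩ := hunit
        exact ((hS.two_zero_unit ε).addRuns K).map _
      · rw [Int.isUnit_iff_abs_eq] at hunit
        exact (S.realizes_addRuns_two_zero hodd (by grind) (by grind)).map _

theorem IsCore.hw_lexCycle [Fintype J] {S : DifferenceScheme ℤ J} {r : ℤ} {m n K : ℕ}
    (hS : S.IsCore r) (hJ : r = Fintype.card J + 3) (hr : n = 2 * r + 1 + 4 * K) (hm : Odd m)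
    (h3 : 3 ≤ m) (hmn : m ≤ n) : HW (lexCycle m n) m n 2 (n - 2) := by
  have hn : Odd n := ⟨Fintype.card J + 3 + 2 * K, by omega⟩
  refine (hS.isComplete_map_addRuns hn hr).hw_lexCycle
    ((hS.gaps.addRuns (one_mem _)).isUnit_map_castRingHom hn) ?_ hm h3 hmn
  simp only [Fintype.card_sum, Fintype.card_prod, Fintype.card_fin, Fintype.card_units_int]
  omega

/-- A core of radius `4`. -/
def coreFour : DifferenceScheme ℤ (Fin 1) where
  quint := ![0, -4, 0]
  quintGap := 2
  pair := ![![0, 5, 0]]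
  pairGap := ![1]
  single := ![![0, 2, -6], ![0, 8, 6]]

theorem isCore_coreFour : coreFour.IsCore 4 where
  gaps := ⟨⟨1, rfl⟩, fun j => by fin_cases j; exact ⟨0, rfl⟩⟩
  zero_one := by decide
  one_two := by decide
  two_zero := by decide
  two_zero_unit := by decide

/-- A core of radius `7`. -/
def coreSeven : DifferenceScheme ℤ (Fin 4) where
  quint := ![0, -6, -2]
  quintGap := 4
  pair := ![![0, 9, 0], ![0, 2, 10], ![0, -10, -10], ![0, 10, 0]]
  pairGap := ![1, 2, 2, 4]
  single := ![![0, -4, 10], ![0, 12, 0]]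

theorem isCore_coreSeven : coreSeven.IsCore 7 where
  gaps := ⟨⟨2, rfl⟩, fun j => by fin_cases j; exacts [⟨0, rfl⟩, ⟨1, rfl⟩, ⟨1, rfl⟩, ⟨2, rfl⟩]⟩
  zero_one := by decide
  one_two := by decide
  two_zero := by decide
  two_zero_unit := by decide

/-- A complete scheme modulo `11`, found by computer search; it serves the one order that neither
`coreFour` nor `coreSeven` reaches. -/
def schemeEleven : DifferenceScheme (ZMod 11) (Fin 2) where
  quint := ![0, -1, -1]
  quintGap := 2
  pair := ![![0, 1, -3], ![0, -3, 1]]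
  pairGap := ![1, 1]
  single := ![![0, 4, 5], ![0, 5, 4]]

theorem isComplete_schemeEleven : schemeEleven.IsComplete := by
  unfold IsComplete
  decide

theorem allGaps_isUnit_schemeEleven : schemeEleven.AllGaps IsUnit := by
  unfold AllGaps
  decide

end DifferenceScheme

open DifferenceScheme in
theorem stmt9_general (m n : ℕ) (hm : Odd m) (hn : Odd n) (h3 : 3 ≤ m) (hmn : m ≤ n)
    (h9 : 9 ≤ n) : HW (lexCycle m n) m n 2 (n - 2) := by
  have hcases : (∃ K, n = 9 + 4 * K) ∨ n = 11 ∨ ∃ K, n = 15 + 4 * K := by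
    obtain ⟨k, rfl⟩ := hn
    rcases Nat.even_or_odd' k with ⟨l, rfl | rfl⟩
    · exact .inl ⟨l - 2, by omega⟩
    · rcases eq_or_ne l 2 with rfl | hl
      · exact .inr (.inl rfl)
      · exact .inr (.inr ⟨l - 3, by omega⟩)
  rcases hcases with ⟨K, rfl⟩ | rfl | ⟨K, rfl⟩
  · exact isCore_coreFour.hw_lexCycle (K := K) rfl (by push_cast; ring) hm h3 hmn
  · exact isComplete_schemeEleven.hw_lexCycle allGaps_isUnit_schemeEleven rfl hm h3 hmn
  · exact isCore_coreSeven.hw_lexCycle (K := K) rfl (by push_cast; ring) hm h3 hmn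

theorem stmt9 (m n : ℕ) (hm : Odd m) (hn : Odd n) (h3 : 3 ≤ m) (hmn : m ≤ n)
    (h9 : 9 ≤ n) (h6 : n % 6 = 3) :
    HW (lexCycle m n) m n 2 (n - 2) :=
  stmt9_general m n hm hn h3 hmn h9
end

section
/- Let k ≥ 3 and t ≥ 1. If a k-ARCS(2kt+1) exists, then the Cayley graph Cay(Z_k × Z_{2kt+1}, ({0} × (Z_{2kt+1} \ {0})) ∪ ({1, −1} × {0})) can be decomposed into kt+1 C_k-factors. -/
/-!
A vertex of degree `2n - 2` in a graph whose edges are split into `n` families of disjoint cycles is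
covered by `n - 1` of the families, so it is missed by exactly one. For `K_{2kt+1}` and the `kt + 1`
classes of an almost resolvable `k`-cycle system this means that the missed vertices of the classes
partition the vertex set. The Cayley graph in question is `C_k □ K_{2kt+1}`. Each class, copied into
all `k` layers and completed by the vertical `k`-cycles over its missed vertices, becomes a
`C_k`-factor of it, and every vertical cycle is used exactly once.
-/

open SimpleGraph

namespace IsDecomp

variable {V ι κ : Type*} {H : SimpleGraph V} {F : ι → SimpleGraph V}

theorem adj_iff (hF : IsDecomp H F) {v w : V} : H.Adj v w ↔ ∃ i, (F i).Adj v w :=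
  hF.2 s(v, w)

theorem eq_of_adj (hF : IsDecomp H F) {i j : ι} {v w : V} (hi : (F i).Adj v w)
    (hj : (F j).Adj v w) : i = j := by
  by_contra hij
  exact Set.disjoint_left.mp (hF.1 hij) ((F i).mem_edgeSet.mpr hi) hj

theorem of_adj (hcover : ∀ v w, H.Adj v w ↔ ∃ i, (F i).Adj v w)
    (hunique : ∀ i j v w, (F i).Adj v w → (F j).Adj v w → i = j) : IsDecomp H F := by
  refine ⟨fun i j hij => Set.disjoint_left.mpr ?_, ?_⟩
  · exact Sym2.ind fun v w hi hj => hij (hunique i j v w hi hj)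
  · exact Sym2.ind hcover

theorem comp_equiv (hF : IsDecomp H F) (e : κ ≃ ι) : IsDecomp H (F ∘ e) :=
  of_adj (fun _ _ => hF.adj_iff.trans e.surjective.exists)
    fun _ _ _ _ hi hj => e.injective (hF.eq_of_adj hi hj)

theorem ncard_neighborSet_eq_sum [Fintype ι] (hF : IsDecomp H F) {v : V}
    (hfin : ∀ i, ((F i).neighborSet v).Finite) :
    (H.neighborSet v).ncard = ∑ i, ((F i).neighborSet v).ncard := by
  have hunion : H.neighborSet v = ⋃ i, (F i).neighborSet v := by
    ext w
    simp only [mem_neighborSet, Set.mem_iUnion, hF.adj_iff]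
  have hdisj : Pairwise (Function.onFun Disjoint fun i => (F i).neighborSet v) := fun i j hij =>
    Set.disjoint_left.mpr fun _ hi hj => hij (hF.eq_of_adj hi hj)
  rw [hunion, Set.ncard_iUnion_of_finite hfin hdisj, finsum_eq_sum_of_fintype]

open scoped Finset in
theorem existsUnique_notMem_support [Fintype ι] (hF : IsDecomp H F) {v : V} {r : ℕ} (hr : 0 < r)
    (hreg : ∀ i, v ∈ (F i).support → ((F i).neighborSet v).ncard = r)
    (hdeg : (H.neighborSet v).ncard + r = r * Fintype.card ι) :
    ∃! i, v ∉ (F i).support := by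
  classical
  have hempty : ∀ i, v ∉ (F i).support → (F i).neighborSet v = ∅ := fun i hi =>
    Set.eq_empty_iff_forall_notMem.mpr fun w hw => hi ⟨w, hw⟩
  have hfin : ∀ i, ((F i).neighborSet v).Finite := fun i => by
    by_cases hi : v ∈ (F i).support
    · exact Set.finite_of_ncard_pos (hreg i hi ▸ hr)
    · exact hempty i hi ▸ Set.finite_empty
  have hncard : ∀ i, ((F i).neighborSet v).ncard = if v ∈ (F i).support then r else 0 :=
    fun i => by
      split_ifs with hi
      · exact hreg i hi
      · rw [hempty i hi, Set.ncard_empty]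
  have hcovered : (H.neighborSet v).ncard = r * #{i | v ∈ (F i).support} := by
    rw [hF.ncard_neighborSet_eq_sum hfin, Finset.sum_congr rfl fun i _ => hncard i,
      ← Finset.sum_filter, Finset.sum_const, smul_eq_mul, mul_comm]
  have hmissed : #{i | v ∉ (F i).support} = 1 := by
    have htotal := Finset.card_filter_add_card_filter_not (s := (Finset.univ : Finset ι))
      (fun i => v ∈ (F i).support)
    rw [← Finset.card_univ, ← htotal, hcovered, mul_add, Nat.add_left_cancel_iff] at hdeg
    exact Nat.eq_of_mul_eq_mul_left hr (hdeg.symm.trans (mul_one r).symm)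
  simpa using Finset.singleton_iff_unique_mem _ |>.mp (Finset.card_eq_one.mp hmissed)

end IsDecomp

/-- The subgraph of `C □ F` consisting of all horizontal copies of `F` and of the vertical copies of
`C` over the vertices isolated in `F`. It turns a partial `C_k`-factor `F` into a full one. -/
def fillIsolated {A W : Type*} (C : SimpleGraph A) (F : SimpleGraph W) : SimpleGraph (A × W) where
  Adj p q := C.Adj p.1 q.1 ∧ p.2 = q.2 ∧ p.2 ∉ F.support ∨ F.Adj p.2 q.2 ∧ p.1 = q.1
  symm := ⟨by
    rintro p q (⟨hC, hpq, hp⟩ | ⟨hF, hpq⟩)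
    · exact Or.inl ⟨hC.symm, hpq.symm, hpq ▸ hp⟩
    · exact Or.inr ⟨hF.symm, hpq.symm⟩⟩
  loopless := ⟨by
    rintro p (⟨hC, -⟩ | ⟨hF, -⟩)
    · exact C.irrefl hC
    · exact F.irrefl hF⟩

namespace fillIsolated

variable {A W : Type*} {C : SimpleGraph A} {F : SimpleGraph W} {a : A} {x : W}

theorem adj_iff_of_mem_support {p q : A × W} (hp : p.2 ∈ F.support) :
    (fillIsolated C F).Adj p q ↔ F.Adj p.2 q.2 ∧ p.1 = q.1 := by
  simp only [fillIsolated, hp, not_true_eq_false, and_false, false_or]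

theorem adj_iff_of_notMem_support {p q : A × W} (hp : p.2 ∉ F.support) :
    (fillIsolated C F).Adj p q ↔ C.Adj p.1 q.1 ∧ p.2 = q.2 := by
  have hF : ¬ F.Adj p.2 q.2 := fun h => hp ⟨_, h⟩
  simp only [fillIsolated, hp, hF, not_false_eq_true, and_true, false_and, or_false]

theorem reachable_iff_of_mem_support {p q : A × W} (hp : p.2 ∈ F.support) :
    (fillIsolated C F).Reachable p q ↔ F.Reachable p.2 q.2 ∧ p.1 = q.1 := by
  constructor
  · rintro ⟨walk⟩
    induction walk with
    | nil => exact ⟨.rfl, rfl⟩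
    | cons hadj _ ih =>
      obtain ⟨hF, hfst⟩ := (adj_iff_of_mem_support hp).mp hadj
      obtain ⟨hreach, hfst'⟩ := ih ⟨_, hF.symm⟩
      exact ⟨hF.reachable.trans hreach, hfst.trans hfst'⟩
  · obtain ⟨a, x⟩ := p
    obtain ⟨b, y⟩ := q
    rintro ⟨hreach, rfl⟩
    let layer : F →g fillIsolated C F := ⟨fun z => (a, z), fun hF => Or.inr ⟨hF, rfl⟩⟩
    exact hreach.map layer

theorem reachable_iff_of_notMem_support {p q : A × W} (hp : p.2 ∉ F.support) :
    (fillIsolated C F).Reachable p q ↔ C.Reachable p.1 q.1 ∧ p.2 = q.2 := by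
  constructor
  · rintro ⟨walk⟩
    induction walk with
    | nil => exact ⟨.rfl, rfl⟩
    | cons hadj _ ih =>
      obtain ⟨hC, hsnd⟩ := (adj_iff_of_notMem_support hp).mp hadj
      obtain ⟨hreach, hsnd'⟩ := ih (hsnd ▸ hp)
      exact ⟨hC.reachable.trans hreach, hsnd.trans hsnd'⟩
  · obtain ⟨a, x⟩ := p
    obtain ⟨b, y⟩ := q
    rintro ⟨hreach, rfl⟩
    let column : C →g fillIsolated C F := ⟨fun c => (c, x), fun hC => Or.inl ⟨hC, rfl, hp⟩⟩
    exact hreach.map column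

theorem neighborSet_of_mem_support (hx : x ∈ F.support) :
    (fillIsolated C F).neighborSet (a, x) = {a} ×ˢ F.neighborSet x := by
  ext ⟨b, y⟩
  simp [adj_iff_of_mem_support (p := (a, x)) hx, and_comm, eq_comm]

theorem neighborSet_of_notMem_support (hx : x ∉ F.support) :
    (fillIsolated C F).neighborSet (a, x) = C.neighborSet a ×ˢ {x} := by
  ext ⟨b, y⟩
  simp [adj_iff_of_notMem_support (p := (a, x)) hx, eq_comm]

theorem setOf_reachable_of_mem_support (hx : x ∈ F.support) :
    {q | (fillIsolated C F).Reachable (a, x) q} = {a} ×ˢ {y | F.Reachable x y} := by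
  ext ⟨b, y⟩
  simp [reachable_iff_of_mem_support (p := (a, x)) hx, and_comm, eq_comm]

theorem setOf_reachable_of_notMem_support (hx : x ∉ F.support) :
    {q | (fillIsolated C F).Reachable (a, x) q} = {b | C.Reachable a b} ×ˢ {x} := by
  ext ⟨b, y⟩
  simp [reachable_iff_of_notMem_support (p := (a, x)) hx, eq_comm]

theorem isCycleFactor {H : SimpleGraph W} {k c : ℕ} (hC : IsCycleFactor C C k)
    (hF : IsCycleClass H F k c) : IsCycleFactor (C □ H) (fillIsolated C F) k := by
  obtain ⟨-, hCdeg, hCcard⟩ := hC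
  obtain ⟨hFH, hFdeg, hFcard, -⟩ := hF
  refine ⟨?_, ?_, ?_⟩
  · rintro p q (⟨hadj, hpq, -⟩ | ⟨hadj, hpq⟩)
    · exact Or.inl ⟨hadj, hpq⟩
    · exact Or.inr ⟨hFH hadj, hpq⟩
  · rintro ⟨a, x⟩
    by_cases hx : x ∈ F.support
    · rw [neighborSet_of_mem_support hx, Set.ncard_prod, Set.ncard_singleton, one_mul, hFdeg x hx]
    · rw [neighborSet_of_notMem_support hx, Set.ncard_prod, Set.ncard_singleton, mul_one, hCdeg a]
  · rintro ⟨a, x⟩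
    by_cases hx : x ∈ F.support
    · rw [setOf_reachable_of_mem_support hx, Set.ncard_prod, Set.ncard_singleton, one_mul,
        hFcard x hx]
    · rw [setOf_reachable_of_notMem_support hx, Set.ncard_prod, Set.ncard_singleton, mul_one,
        hCcard a]

theorem isDecomp {ι : Type*} {H : SimpleGraph W} {F : ι → SimpleGraph W} (hF : IsDecomp H F)
    (hmissed : ∀ x, ∃! i, x ∉ (F i).support) :
    IsDecomp (C □ H) fun i => fillIsolated C (F i) := by
  refine .of_adj (fun p q => ⟨?_, ?_⟩) ?_
  · rintro (⟨hC, hpq⟩ | ⟨hH, hpq⟩)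
    · obtain ⟨i, hi, -⟩ := hmissed p.2
      exact ⟨i, Or.inl ⟨hC, hpq, hi⟩⟩
    · obtain ⟨i, hi⟩ := hF.adj_iff.mp hH
      exact ⟨i, Or.inr ⟨hi, hpq⟩⟩
  · rintro ⟨i, ⟨hC, hpq, -⟩ | ⟨hi, hpq⟩⟩
    · exact Or.inl ⟨hC, hpq⟩
    · exact Or.inr ⟨hF.adj_iff.mpr ⟨i, hi⟩, hpq⟩
  · rintro i j p q (⟨hC, -, hi⟩ | ⟨hi, hpq⟩) (⟨hC', -, hj⟩ | ⟨hj, hpq'⟩)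
    · exact (hmissed p.2).unique hi hj
    · exact absurd hpq' hC.ne
    · exact absurd hpq hC'.ne
    · exact hF.eq_of_adj hi hj

end fillIsolated

theorem cayley_prod_eq_boxProd_top {Γ Δ : Type*} [AddGroup Γ] [AddGroup Δ] (g : Γ) :
    cayley {p : Γ × Δ | (p.1 = 0 ∧ p.2 ≠ 0) ∨ ((p.1 = g ∨ p.1 = -g) ∧ p.2 = 0)} =
      cayley {g} □ ⊤ := by
  ext ⟨a, x⟩ ⟨b, y⟩
  have hab : a - b = -g ↔ b - a = g := by rw [← neg_sub b a, neg_inj]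
  have hba : b - a = -g ↔ a - b = g := by rw [← neg_sub a b, neg_inj]
  simp only [cayley, fromRel_adj, boxProd_adj, top_adj, Set.mem_ofPred_eq, Set.mem_singleton_iff,
    Prod.fst_sub, Prod.snd_sub, sub_eq_zero, hab, hba, ne_eq, Prod.mk.injEq,
    eq_comm (a := b) (b := a), eq_comm (a := y) (b := x)]
  tauto

theorem ncard_neighborSet_eq_degree {V : Type*} (G : SimpleGraph V) (v : V)
    [Fintype (G.neighborSet v)] : (G.neighborSet v).ncard = G.degree v := by
  rw [Set.ncard_eq_toFinset_card', Set.toFinset_card, card_neighborSet_eq_degree]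

theorem isCycleFactor_cycleGraph {k : ℕ} (hk : 3 ≤ k) :
    IsCycleFactor (cycleGraph k) (cycleGraph k) k := by
  obtain ⟨n, rfl⟩ := Nat.exists_eq_add_of_le' hk
  refine ⟨le_rfl, fun v => ?_, fun v => ?_⟩
  · rw [ncard_neighborSet_eq_degree, cycleGraph_degree_three_le]
  · have hreach : {w | (cycleGraph (n + 3)).Reachable v w} = Set.univ :=
      Set.eq_univ_of_forall (cycleGraph_preconnected v)
    rw [hreach, Set.ncard_univ, Nat.card_fin]

theorem isCycleFactor_cayley_one {k : ℕ} (hk : 3 ≤ k) :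
    IsCycleFactor (cayley {(1 : ZMod k)}) (cayley {(1 : ZMod k)}) k := by
  obtain ⟨n, rfl⟩ := Nat.exists_eq_add_of_le' hk
  have hcycle : cycleGraph (n + 3) = cayley {1} := cycleGraph_eq_circulantGraph (n + 2)
  have hfactor := isCycleFactor_cycleGraph hk
  rwa [hcycle] at hfactor

theorem IsARCS.exists_isDecomp {k n : ℕ} (h : IsARCS k (2 * n + 1)) :
    ∃ (F : Fin (n + 1) → SimpleGraph (ZMod (2 * n + 1))) (c : Fin (n + 1) → ℕ),
      (∀ i, IsCycleClass ⊤ (F i) k (c i)) ∧ IsDecomp ⊤ F := by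
  obtain ⟨F, halmost, hhalf, hF⟩ := h
  have hclass : ∀ s, ∃ c, IsCycleClass ⊤ (F s) k c :=
    Sum.forall.mpr ⟨fun i => ⟨_, halmost i⟩, fun j => ⟨_, hhalf j⟩⟩
  choose c hc using hclass
  have hcard : Fintype.card (Fin (n + 1)) = Fintype.card (Fin ((2 * n + 1 - 1) / 2) ⊕ Unit) := by
    simp
  let e := Fintype.equivOfCardEq hcard
  -- `ZMod (2 * n + 1)` unfolds to `Fin (2 * n + 1)`.
  exact ⟨F ∘ e, c ∘ e, fun i => hc (e i), hF.comp_equiv e⟩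

theorem stmt11_general {A W ι : Type*} [Fintype ι] {C : SimpleGraph A} {H : SimpleGraph W}
    {F : ι → SimpleGraph W} {k : ℕ} {c : ι → ℕ} (hC : IsCycleFactor C C k)
    (hclass : ∀ i, IsCycleClass H (F i) k (c i)) (hF : IsDecomp H F)
    (hdeg : ∀ x, (H.neighborSet x).ncard + 2 = 2 * Fintype.card ι) :
    ∃ F' : ι → SimpleGraph (A × W),
      (∀ i, IsCycleFactor (C □ H) (F' i) k) ∧ IsDecomp (C □ H) F' := by
  have hmissed : ∀ x, ∃! i, x ∉ (F i).support := fun x =>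
    hF.existsUnique_notMem_support two_pos (fun i => (hclass i).2.1 x) (hdeg x)
  exact ⟨fun i => fillIsolated C (F i), fun i => fillIsolated.isCycleFactor hC (hclass i),
    fillIsolated.isDecomp hF hmissed⟩

theorem stmt11 (k t : ℕ) (hk : 3 ≤ k) (ht : 1 ≤ t)
    (h : IsARCS k (2 * k * t + 1)) :
    ∃ F : Fin (k * t + 1) → SimpleGraph (ZMod k × ZMod (2 * k * t + 1)),
      (∀ i, IsCycleFactor
        (cayley {p : ZMod k × ZMod (2 * k * t + 1) |
          (p.1 = 0 ∧ p.2 ≠ 0) ∨ ((p.1 = 1 ∨ p.1 = -1) ∧ p.2 = 0)}) (F i) k) ∧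
      IsDecomp
        (cayley {p : ZMod k × ZMod (2 * k * t + 1) |
          (p.1 = 0 ∧ p.2 ≠ 0) ∨ ((p.1 = 1 ∨ p.1 = -1) ∧ p.2 = 0)}) F := by
  rw [mul_assoc] at h ⊢
  obtain ⟨F, c, hclass, hF⟩ := h.exists_isDecomp
  rw [cayley_prod_eq_boxProd_top]
  refine stmt11_general (isCycleFactor_cayley_one hk) hclass hF fun x => ?_
  rw [ncard_neighborSet_eq_degree, complete_graph_degree, ZMod.card, Fintype.card_fin,
    Nat.add_sub_cancel, mul_add_one]
end
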